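/- arXiv:2512.16942 — 3 statements merged into one kernel-verified Lean document; each statement's English description precedes it below -/
import Mathlib

section
/- Let q be a prime power with q ≡ 1 (mod 4) and 3 dividing q-1, and let n be the integer with n - 1 = (q-1)/3. If q > 2809, then not every element of F_q can be written as the sum of a 5-potent element and an n-potent element, i.e., C_5 + C_n ≠ F_q. -/
section

open Polynomial

/-- `HasseMultiple w G E` says that `w ^ ℓ` times the `ℓ`-th Hasse derivative of `G` is
`G * E ℓ`, where the degree of `E ℓ` is at most `2 * ℓ`. -/
def HasseMultiple {F : Type*} [Field F] (w G : F[X]) (E : ℕ → F[X]) : Prop :=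
  ∀ ℓ, (E ℓ).natDegree ≤ 2 * ℓ ∧ w ^ ℓ * hasseDeriv ℓ G = G * E ℓ

namespace HasseMultiple

variable {F : Type*} [Field F] {w G H : F[X]} {E E' : ℕ → F[X]}

theorem one (w : F[X]) : HasseMultiple w 1 (fun ℓ => if ℓ = 0 then 1 else 0) := by
  intro ℓ
  rcases Nat.eq_zero_or_pos ℓ with rfl | h
  · simp
  · simp [h.ne', hasseDeriv_apply_one ℓ h]

theorem mul (hG : HasseMultiple w G E) (hH : HasseMultiple w H E') :
    HasseMultiple w (G * H)
      (fun ℓ => ∑ ij ∈ Finset.HasAntidiagonal.antidiagonal ℓ, E ij.1 * E' ij.2) := by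
  intro ℓ
  constructor
  · refine natDegree_sum_le_of_forall_le _ _ fun ij hij => ?_
    have := Finset.HasAntidiagonal.mem_antidiagonal.1 hij
    have h1 := (hG ij.1).1
    have h2 := (hH ij.2).1
    exact natDegree_mul_le.trans (by omega)
  · rw [hasseDeriv_mul, Finset.mul_sum, Finset.mul_sum]
    refine Finset.sum_congr rfl fun ij hij => ?_
    rw [← Finset.HasAntidiagonal.mem_antidiagonal.1 hij, pow_add]
    linear_combination (w ^ ij.2 * hasseDeriv ij.2 H) * (hG ij.1).2 + G * E ij.1 * (hH ij.2).2

theorem exists_pow (hG : ∃ E, HasseMultiple w G E) (n : ℕ) : ∃ E, HasseMultiple w (G ^ n) E := by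
  obtain ⟨E, hE⟩ := hG
  induction n with
  | zero => exact ⟨_, by simpa using one w⟩
  | succ n ih =>
    obtain ⟨E', hE'⟩ := ih
    exact ⟨_, pow_succ G n ▸ hE'.mul hE⟩

theorem exists_mul (hG : ∃ E, HasseMultiple w G E) (hH : ∃ E, HasseMultiple w H E) :
    ∃ E, HasseMultiple w (G * H) E := by
  obtain ⟨E, hE⟩ := hG
  obtain ⟨E', hE'⟩ := hH
  exact ⟨_, hE.mul hE'⟩

theorem exists_X_sub_C (a : F) {v : F[X]} (hv : v.natDegree ≤ 2) :
    ∃ E, HasseMultiple ((X - C a) * v) (X - C a) E := by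
  refine ⟨fun ℓ => if ℓ = 0 then 1 else if ℓ = 1 then v else 0, fun ℓ => ?_⟩
  rcases ℓ with _ | _ | ℓ
  · simp
  · simp [hasseDeriv_one, hv]
  · simp [hasseDeriv_X, hasseDeriv_C]

/-- The linear map describing the Hasse derivatives of `s * G` in terms of `s`. -/
noncomputable def derivMap (w : F[X]) (E : ℕ → F[X]) (ℓ : ℕ) : F[X] →ₗ[F] F[X] :=
  ∑ ij ∈ Finset.HasAntidiagonal.antidiagonal ℓ,
    LinearMap.mulLeft F (w ^ ij.2 * E ij.1) ∘ₗ hasseDeriv ij.2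

theorem derivMap_apply (ℓ : ℕ) (s : F[X]) : derivMap w E ℓ s =
    ∑ ij ∈ Finset.HasAntidiagonal.antidiagonal ℓ, w ^ ij.2 * E ij.1 * hasseDeriv ij.2 s := by
  simp [derivMap, mul_assoc]

theorem pow_mul_hasseDeriv (hG : HasseMultiple w G E) (ℓ : ℕ) (s : F[X]) :
    w ^ ℓ * hasseDeriv ℓ (G * s) = G * derivMap w E ℓ s := by
  rw [derivMap_apply, hasseDeriv_mul, Finset.mul_sum, Finset.mul_sum]
  refine Finset.sum_congr rfl fun ij hij => ?_
  rw [← Finset.HasAntidiagonal.mem_antidiagonal.1 hij, pow_add]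
  linear_combination (w ^ ij.2 * hasseDeriv ij.2 s) * (hG ij.1).2

theorem natDegree_derivMap_le (hG : HasseMultiple w G E) (hw : w.natDegree ≤ 3) (ℓ : ℕ)
    (s : F[X]) : (derivMap w E ℓ s).natDegree ≤ s.natDegree + 2 * ℓ := by
  rw [derivMap_apply]
  refine natDegree_sum_le_of_forall_le _ _ fun ij hij => ?_
  have hℓ := Finset.HasAntidiagonal.mem_antidiagonal.1 hij
  rcases lt_or_ge s.natDegree ij.2 with h | h
  · simp [hasseDeriv_eq_zero_of_lt_natDegree _ _ h]
  · have h1 := natDegree_hasseDeriv_le s ij.2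
    have h2 := (hG ij.1).1
    have h3 : (w ^ ij.2).natDegree ≤ ij.2 * 3 :=
      natDegree_pow_le.trans (Nat.mul_le_mul_left _ hw)
    have h4 := natDegree_mul_le (p := w ^ ij.2) (q := E ij.1)
    exact natDegree_mul_le.trans (by omega)

end HasseMultiple

theorem X_sub_C_pow_dvd_iff_eval_hasseDeriv {F : Type*} [Field F] (a : F) (p : F[X]) (n : ℕ) :
    (X - C a) ^ n ∣ p ↔ ∀ k < n, eval a (hasseDeriv k p) = 0 := by
  have h : X ^ n = taylorEquiv a ((X - C a) ^ n) := by simp [taylorEquiv]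
  simp only [← taylor_coeff]
  rw [← X_pow_dvd_iff, h, ← coe_taylorEquiv]
  exact (map_dvd_iff (taylorEquiv a)).symm

/-- The linear algebra step of Stepanov's method. -/
theorem exists_coefficients_of_hasseMultiple {F : Type*} [Field F] {w : F[X]} (hw : w.natDegree ≤ 3)
    {G : ℕ → F[X]} {E : ℕ → ℕ → F[X]} (hE : ∀ k, HasseMultiple w (G k) (E k)) {Q J : ℕ}
    (hJ : (3 * J + 2) * (4 * J + 2) < 2 * Q) :
    ∃ u : Fin (3 * J + 4) → F[X], u ≠ 0 ∧ (∀ i, (u i).natDegree < Q) ∧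
      ∀ ℓ < 3 * J + 2,
        ∑ i : Fin (3 * J + 4),
          X ^ ((i : ℕ) / 3) * HasseMultiple.derivMap w (E (i % 3)) ℓ (u i) = 0 := by
  have hQ : 0 < Q := by
    rcases Nat.eq_zero_or_pos Q with rfl | h
    · simp at hJ
    · exact h
  let P : Fin (3 * J + 4) → (Fin (3 * J + 4) → Fin Q → F) →ₗ[F] F[X] := fun i =>
    (degreeLT F Q).subtype ∘ₗ (degreeLTEquiv F Q).symm.toLinearMap ∘ₗ LinearMap.proj i
  have hP : ∀ i v, (P i v).natDegree < Q := fun i v => by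
    have h := ((degreeLTEquiv F Q).symm (v i)).2
    rw [mem_degreeLT] at h
    by_cases h0 : P i v = 0
    · rwa [h0, natDegree_zero]
    · exact (natDegree_lt_iff_degree_lt h0).2 h
  let S : ℕ → (Fin (3 * J + 4) → Fin Q → F) →ₗ[F] F[X] := fun ℓ =>
    ∑ i : Fin (3 * J + 4), LinearMap.mulLeft F (X ^ ((i : ℕ) / 3)) ∘ₗ
      HasseMultiple.derivMap w (E (i % 3)) ℓ ∘ₗ P i
  have hS : ∀ ℓ v, S ℓ v = ∑ i : Fin (3 * J + 4),
      X ^ ((i : ℕ) / 3) * HasseMultiple.derivMap w (E (i % 3)) ℓ (P i v) := fun ℓ v => by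
    simp [S]
  let Φ : (Fin (3 * J + 4) → Fin Q → F) →ₗ[F]
      ((Σ ℓ : Fin (3 * J + 2), Fin (Q + J + 1 + 2 * ℓ)) → F) :=
    LinearMap.pi fun p => lcoeff F (p.2 : ℕ) ∘ₗ S p.1
  have hrank : Module.finrank F ((Σ ℓ : Fin (3 * J + 2), Fin (Q + J + 1 + 2 * ℓ)) → F) <
      Module.finrank F (Fin (3 * J + 4) → Fin Q → F) := by
    rw [Module.finrank_fintype_fun_eq_card, Module.finrank_pi_fintype]
    simp only [Fintype.card_sigma, Fintype.card_fin, Module.finrank_fin_fun, Finset.sum_const,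
      Finset.card_univ, smul_eq_mul]
    rw [Fin.sum_univ_eq_sum_range (fun i => Q + J + 1 + 2 * i), Finset.sum_add_distrib,
      ← Finset.mul_sum, mul_comm 2, Finset.sum_range_id_mul_two]
    simp only [Finset.sum_const, Finset.card_range, smul_eq_mul]
    have : 3 * J + 2 - 1 = 3 * J + 1 := by omega
    rw [this]
    nlinarith
  obtain ⟨v, hv, hv0⟩ := (Submodule.ne_bot_iff _).1 
    (LinearMap.ker_ne_bot_of_finrank_lt (f := Φ) hrank)
  refine ⟨fun i => P i v, fun h => hv0 ?_, fun i => hP i v, fun ℓ hℓ => ?_⟩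
  · funext i
    have := congrFun h i
    simpa [P] using this
  · rw [← hS]
    have hdeg : (S ℓ v).natDegree < Q + J + 1 + 2 * ℓ := by
      rw [hS]
      refine Nat.lt_of_le_pred (by omega) (natDegree_sum_le_of_forall_le _ _ fun i _ => ?_)
      have h1 := (hE (i % 3)).natDegree_derivMap_le hw ℓ (P i v)
      have h2 := hP i v
      have h3 := i.2
      refine natDegree_mul_le.trans ?_
      rw [natDegree_X_pow]
      have : (i : ℕ) / 3 ≤ J + 1 := by omega
      show _ ≤ Q + J + 1 + 2 * ℓ - 1
      omega
    ext k
    rw [coeff_zero]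
    by_cases hk : k < Q + J + 1 + 2 * ℓ
    · simpa [Φ] using congrFun (LinearMap.mem_ker.1 hv)
        (⟨⟨ℓ, hℓ⟩, ⟨k, hk⟩⟩ : Σ ℓ : Fin (3 * J + 2), Fin (Q + J + 1 + 2 * ℓ))
    · exact coeff_eq_zero_of_natDegree_lt (by omega)

/-- Polynomials supported in pairwise disjoint degree windows do not cancel. -/
theorem sum_ne_zero_and_natDegree_lt {F : Type*} [Field F] {G : ℕ → F[X]} {q Q J : ℕ}
    (hq : q = 3 * Q + 4) (hG : ∀ k, G k ≠ 0) (h0 : (G 0).natDegree = 0)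
    (h1 : (G 1).natDegree = q + Q) (h2 : (G 2).natDegree = q + 2 * Q + 1)
    {u : Fin (3 * J + 4) → F[X]} (hu : u ≠ 0) (hdeg : ∀ i, (u i).natDegree < Q) :
    ∑ i : Fin (3 * J + 4), G (i % 3) * u i * X ^ (q * ((i : ℕ) / 3)) ≠ 0 ∧
      (∑ i : Fin (3 * J + 4), G (i % 3) * u i * X ^ (q * ((i : ℕ) / 3))).natDegree <
        q * (J + 2) := by
  set f : Fin (3 * J + 4) → F[X] := fun i => G (i % 3) * u i * X ^ (q * ((i : ℕ) / 3)) with hf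
  have hpos : ∀ i, f i ≠ 0 → ∃ A s, (f i).natDegree = q * A + s ∧ s < q ∧ A ≤ J + 1 ∧
      ((i : ℕ) % 3 = 0 ∧ A = (i : ℕ) / 3 ∧ s < Q ∨
        (i : ℕ) % 3 = 1 ∧ A = (i : ℕ) / 3 + 1 ∧ Q ≤ s ∧ s < 2 * Q ∨
        (i : ℕ) % 3 = 2 ∧ A = (i : ℕ) / 3 + 1 ∧ 2 * Q < s) := by
    intro i hi
    have hui : u i ≠ 0 := fun h => hi (by simp [hf, h])
    have hd : (f i).natDegree = (G (i % 3)).natDegree + (u i).natDegree + q * ((i : ℕ) / 3) := by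
      rw [hf]
      rw [natDegree_mul (mul_ne_zero (hG _) hui) (pow_ne_zero _ X_ne_zero),
        natDegree_mul (hG _) hui, natDegree_X_pow]
    have hlt := hdeg i
    have hi2 := i.2
    have h3 : (i : ℕ) % 3 < 3 := Nat.mod_lt _ (by norm_num)
    rcases (by omega : (i : ℕ) % 3 = 0 ∨ (i : ℕ) % 3 = 1 ∨ (i : ℕ) % 3 = 2) with h | h | h
    · rw [h, h0] at hd
      exact ⟨(i : ℕ) / 3, (u i).natDegree, by rw [hd]; ring, by omega, by omega, by omega⟩
    · rw [h, h1] at hd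
      exact ⟨(i : ℕ) / 3 + 1, Q + (u i).natDegree, by rw [hd]; ring, by omega, by omega, by omega⟩
    · rw [h, h2] at hd
      exact ⟨(i : ℕ) / 3 + 1, 2 * Q + 1 + (u i).natDegree, by rw [hd]; ring, by omega, by omega,
        by omega⟩
  have hdisj : ({i | i ∈ (Finset.univ : Finset (Fin (3 * J + 4))) ∧ f i ≠ 0} : Set _).Pairwise
      (Function.onFun Ne (degree ∘ f)) := by
    intro i hi j hj hij heq
    apply hij
    obtain ⟨A, s, hA, hs, -, h⟩ := hpos i hi.2
    obtain ⟨B, t, hB, ht, -, h'⟩ := hpos j hj.2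
    have e : q * A + s = q * B + t := by
      rw [← hA, ← hB]; exact natDegree_eq_of_degree_eq heq
    have eA : A = B := by
      have := congrArg (· / q) e
      simpa [Nat.mul_add_div (by omega : 0 < q), Nat.div_eq_of_lt hs, Nat.div_eq_of_lt ht] using this
    subst eA
    have : s = t := by omega
    apply Fin.ext
    omega
  constructor
  · intro h
    have hs := degree_sum_eq_of_disjoint f Finset.univ hdisj
    rw [show Finset.univ.sum f = 0 from h, degree_zero] at hs
    apply hu
    funext i
    have hi : (f i).degree ≤ ⊥ :=
      hs ▸ Finset.le_sup (f := fun i => (f i).degree) (Finset.mem_univ i)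
    have : f i = 0 := degree_eq_bot.1 (le_bot_iff.1 hi)
    simpa [hf, hG] using this
  · refine (natDegree_sum_le_of_forall_le (n := q * (J + 2) - 1) _ _ fun i _ => ?_).trans_lt
      (Nat.sub_lt (Nat.mul_pos (by omega) (by omega)) one_pos)
    change (f i).natDegree ≤ _
    by_cases hi : f i = 0
    · simp [hi]
    · obtain ⟨A, s, hA, hs, hAJ, -⟩ := hpos i hi
      have := Nat.mul_le_mul_left q hAJ
      rw [hA]
      have e : q * (J + 2) = q * (J + 1) + q := by ring
      omega

theorem card_mul_le_of_hasseMultiple {F : Type*} [Field F] [Fintype F] {q Q J : ℕ}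
    (hF : Fintype.card F = q) (hq : q = 3 * Q + 4) (hJ : (3 * J + 2) * (4 * J + 2) < 2 * Q)
    {w : F[X]} (hw : w.natDegree ≤ 3) {G : ℕ → F[X]} {E : ℕ → ℕ → F[X]}
    (hE : ∀ k, HasseMultiple w (G k) (E k)) (hG : ∀ k, G k ≠ 0) (h0 : (G 0).natDegree = 0)
    (h1 : (G 1).natDegree = q + Q) (h2 : (G 2).natDegree = q + 2 * Q + 1) (T : Finset F)
    (hTw : ∀ x ∈ T, eval x w ≠ 0) (hTG : ∀ x ∈ T, ∀ k, eval x (G k) = 1) :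
    (3 * J + 2) * T.card < q * (J + 2) := by
  obtain ⟨u, hu, hdeg, hS⟩ := exists_coefficients_of_hasseMultiple hw hE hJ
  obtain ⟨hR0, hR⟩ := sum_ne_zero_and_natDegree_lt hq hG h0 h1 h2 hu hdeg
  set R := ∑ i : Fin (3 * J + 4), G (i % 3) * u i * X ^ (q * ((i : ℕ) / 3)) with hRdef
  have hMq : 3 * J + 2 ≤ q := by nlinarith
  have hdvd : ∀ x ∈ T, (X - C x) ^ (3 * J + 2) ∣ R := by
    intro x hx
    have hfrob : (X - C x) ^ q = X ^ q - C x := by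
      obtain ⟨p, hp⟩ := CharP.exists F
      obtain ⟨n, hprime, hn⟩ := FiniteField.card F p
      have : Fact p.Prime := ⟨hprime⟩
      have hx' : x ^ q = x := hF ▸ FiniteField.pow_card x
      rw [← hF, hn, sub_pow_expChar_pow, ← hn, hF, ← C_pow, hx']
    have hlocal : (X - C x) ^ (3 * J + 2) ∣
        ∑ i : Fin (3 * J + 4), G (i % 3) * u i * C x ^ ((i : ℕ) / 3) := by
      rw [X_sub_C_pow_dvd_iff_eval_hasseDeriv]
      intro ℓ hℓ
      have key := congrArg (eval x) (hS ℓ hℓ)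
      rw [eval_finsetSum, eval_zero] at key
      have hwℓ : eval x (w ^ ℓ) ≠ 0 := by
        rw [eval_pow]; exact pow_ne_zero _ (hTw x hx)
      refine (mul_eq_zero.1 ?_).resolve_left hwℓ
      rw [map_sum, eval_finsetSum, Finset.mul_sum, ← key]
      refine Finset.sum_congr rfl fun i _ => ?_
      have hi := congrArg (eval x) ((hE (i % 3)).pow_mul_hasseDeriv ℓ (u i))
      rw [eval_mul, eval_mul, hTG x hx, one_mul] at hi
      rw [← C_pow, mul_comm _ (C _), ← smul_eq_C_mul, map_smul, eval_smul, smul_eq_mul,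
        eval_mul (p := X ^ ((i : ℕ) / 3)), eval_pow (x := x) (p := X), eval_X, ← hi]
      ring
    have hdiff : (X - C x) ^ (3 * J + 2) ∣
        R - ∑ i : Fin (3 * J + 4), G (i % 3) * u i * C x ^ ((i : ℕ) / 3) := by
      rw [hRdef, ← Finset.sum_sub_distrib]
      refine Finset.dvd_sum fun i _ => ?_
      rw [← mul_sub, pow_mul]
      refine Dvd.dvd.mul_left ?_ _
      exact (pow_dvd_pow _ hMq).trans (hfrob ▸ sub_dvd_pow_sub_pow _ _ _)
    simpa using dvd_add hdiff hlocal
  have hprod : ∏ x ∈ T, (X - C x) ^ (3 * J + 2) ∣ R := by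
    refine Finset.prod_dvd_of_coprime (fun x _ y _ hxy => ?_) hdvd
    exact (pairwise_coprime_X_sub_C Function.injective_id hxy).pow
  have hle := natDegree_le_of_dvd hprod hR0
  rw [natDegree_prod_of_monic _ _ fun x _ => (monic_X_sub_C x).pow _] at hle
  simp only [natDegree_pow, natDegree_X_sub_C, mul_one, Finset.sum_const, smul_eq_mul] at hle
  linarith [mul_comm T.card (3 * J + 2)]

/-- Stepanov's bound for the number of `x` at which `(x - a) (x - b) (x - e) ^ 2` is a nonzero
cube. -/
theorem card_cube_values_lt {F : Type*} [Field F] [Fintype F] {q Q J : ℕ}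
    (hF : Fintype.card F = q) (hq : q = 3 * Q + 4) (hJ : (3 * J + 2) * (4 * J + 2) < 2 * Q)
    (a b e : F) (T : Finset F)
    (hT : ∀ x ∈ T, x ≠ a ∧ x ≠ b ∧ x ≠ e ∧ ((x - a) * (x - b) * (x - e) ^ 2) ^ (Q + 1) = 1) :
    (3 * J + 2) * T.card < q * (J + 2) := by
  set w : F[X] := (X - C a) * (X - C b) * (X - C e) with hw
  have hXa := X_sub_C_ne_zero a
  have hXb := X_sub_C_ne_zero b
  have hXe := X_sub_C_ne_zero e
  have ha : ∃ E, HasseMultiple w (X - C a) E := by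
    rw [hw, mul_assoc]
    exact HasseMultiple.exists_X_sub_C a (by rw [natDegree_mul hXb hXe]; simp)
  have hb : ∃ E, HasseMultiple w (X - C b) E := by
    rw [hw, mul_comm (X - C a), mul_assoc]
    exact HasseMultiple.exists_X_sub_C b (by rw [natDegree_mul hXa hXe]; simp)
  have he : ∃ E, HasseMultiple w (X - C e) E := by
    rw [hw, mul_comm]
    exact HasseMultiple.exists_X_sub_C e (by rw [natDegree_mul hXa hXb]; simp)
  let G : ℕ → F[X] := fun k =>
    if k = 0 then 1 else if k = 1 then ((X - C a) * (X - C b) * (X - C e) ^ 2) ^ (Q + 1)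
      else ((X - C a) ^ 2 * (X - C b) ^ 2 * (X - C e)) ^ (Q + 1)
  have hE : ∀ k, ∃ E, HasseMultiple w (G k) E := by
    intro k
    simp only [G]
    split_ifs
    · exact ⟨_, HasseMultiple.one w⟩
    · exact HasseMultiple.exists_pow (HasseMultiple.exists_mul (HasseMultiple.exists_mul ha hb)
        (HasseMultiple.exists_pow he 2)) _
    · exact HasseMultiple.exists_pow (HasseMultiple.exists_mul (HasseMultiple.exists_mul
        (HasseMultiple.exists_pow ha 2) (HasseMultiple.exists_pow hb 2)) he) _
  choose E hE using hE
  refine card_mul_le_of_hasseMultiple hF hq hJ (w := w) ?_ hE ?_ ?_ ?_ ?_ T ?_ ?_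
  · rw [hw, natDegree_mul (mul_ne_zero hXa hXb) hXe, natDegree_mul hXa hXb]
    simp
  · intro k
    simp only [G]
    split_ifs
    · exact one_ne_zero
    · exact pow_ne_zero _ (mul_ne_zero (mul_ne_zero hXa hXb) (pow_ne_zero _ hXe))
    · exact pow_ne_zero _ (mul_ne_zero (mul_ne_zero (pow_ne_zero _ hXa) (pow_ne_zero _ hXb)) hXe)
  · simp [G]
  · simp only [G, one_ne_zero, if_false, if_true]
    rw [natDegree_pow, natDegree_mul (mul_ne_zero hXa hXb) (pow_ne_zero _ hXe),
      natDegree_mul hXa hXb, natDegree_pow]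
    simp only [natDegree_X_sub_C]
    omega
  · simp only [G, two_ne_zero, if_false, OfNat.ofNat_ne_one]
    rw [natDegree_pow, natDegree_mul (mul_ne_zero (pow_ne_zero _ hXa) (pow_ne_zero _ hXb)) hXe,
      natDegree_mul (pow_ne_zero _ hXa) (pow_ne_zero _ hXb), natDegree_pow, natDegree_pow]
    simp only [natDegree_X_sub_C]
    omega
  · intro x hx
    obtain ⟨h1, h2, h3, -⟩ := hT x hx
    simp [hw, sub_ne_zero, h1, h2, h3]
  · intro x hx k
    obtain ⟨h1, h2, h3, h4⟩ := hT x hx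
    simp only [G]
    split_ifs
    · simp
    · simpa using h4
    · simp only [eval_pow, eval_mul, eval_sub, eval_X, eval_C]
      have h5 : ((x - a) * (x - b) * (x - e)) ^ (3 * (Q + 1)) = 1 := by
        have := FiniteField.pow_card_sub_one_eq_one ((x - a) * (x - b) * (x - e))
          (mul_ne_zero (mul_ne_zero (sub_ne_zero.2 h1) (sub_ne_zero.2 h2)) (sub_ne_zero.2 h3))
        rwa [hF, hq, show 3 * Q + 4 - 1 = 3 * (Q + 1) by omega] at this
      rw [pow_mul, show ((x - a) * (x - b) * (x - e)) ^ 3 =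
        ((x - a) * (x - b) * (x - e) ^ 2) * ((x - a) ^ 2 * (x - b) ^ 2 * (x - e)) by ring,
        mul_pow, h4, one_mul] at h5
      exact h5

end

/-- A logarithm to the base of a cubic nonresidue, with values modulo `3`. -/
structure IsCubicLog {F : Type*} [Field F] (m : ℕ) (c : F → ZMod 3) : Prop where
  map_mul : ∀ x y, x ≠ 0 → y ≠ 0 → c (x * y) = c x + c y
  eq_zero_iff : ∀ x, x ≠ 0 → (c x = 0 ↔ x ^ m = 1)
  exists_ne_zero : ∃ x, x ≠ 0 ∧ c x ≠ 0

theorem exists_isCubicLog {F : Type*} [Field F] [Fintype F] {m : ℕ} (hm : 0 < m)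
    (hF : Fintype.card F = 3 * m + 1) : ∃ c : F → ZMod 3, IsCubicLog m c := by
  classical
  have hcard : Nat.card Fˣ = 3 * m := by
    rw [Nat.card_eq_fintype_card, Fintype.card_units, hF, Nat.add_sub_cancel]
  have : NeZero (Nat.card Fˣ) := ⟨by omega⟩
  have hdvd : 3 ∣ Nat.card Fˣ := ⟨m, hcard⟩
  let e := zmodCyclicMulEquiv (G := Fˣ) inferInstance
  let φ : ZMod (Nat.card Fˣ) →+* ZMod 3 := ZMod.castHom hdvd (ZMod 3)
  refine ⟨fun x => if h : x = 0 then 0 else φ (Multiplicative.toAdd (e.symm (Units.mk0 x h))),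
    ?_, ?_, ?_⟩
  · intro x y hx hy
    simp [hx, hy, Units.mk0_mul]
  · intro x hx
    obtain ⟨a, ha⟩ := e.surjective (Units.mk0 x hx)
    have hpow : x ^ m = 1 ↔ m • (Multiplicative.toAdd a) = 0 := by
      rw [← toAdd_pow, toAdd_eq_zero, ← e.map_eq_one_iff, map_pow, ha, Units.ext_iff]
      simp
    have hφ : φ (Multiplicative.toAdd a) = ((Multiplicative.toAdd a).val : ZMod 3) := by
      rw [ZMod.natCast_val, ZMod.castHom_apply]
    rw [hpow, dif_neg hx, ← ha, e.symm_apply_apply, hφ, ZMod.natCast_eq_zero_iff]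
    conv_rhs => rw [← ZMod.natCast_zmod_val (Multiplicative.toAdd a), nsmul_eq_mul,
      ← Nat.cast_mul, ZMod.natCast_eq_zero_iff]
    generalize (Multiplicative.toAdd a).val = t
    rw [hcard, mul_comm 3, Nat.mul_dvd_mul_iff_left hm]
  · refine ⟨e (Multiplicative.ofAdd 1), Units.ne_zero _, ?_⟩
    simp

/-- The trace of a primitive cube root of unity raised to the power `t`. -/
def cubicTrace (t : ZMod 3) : ℤ := if t = 0 then 2 else -1

namespace IsCubicLog

variable {F : Type*} [Field F] {m : ℕ} {c : F → ZMod 3}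

theorem map_one (hc : IsCubicLog m c) : c 1 = 0 := by
  simpa using hc.map_mul 1 1 one_ne_zero one_ne_zero

theorem map_pow (hc : IsCubicLog m c) {x : F} (hx : x ≠ 0) (n : ℕ) : c (x ^ n) = n * c x := by
  induction n with
  | zero => simp [hc.map_one]
  | succ n ih =>
    rw [pow_succ, hc.map_mul _ _ (pow_ne_zero n hx) hx, ih]
    push_cast
    ring

theorem map_inv (hc : IsCubicLog m c) {x : F} (hx : x ≠ 0) : c x⁻¹ = - c x := by
  have := hc.map_mul x x⁻¹ hx (inv_ne_zero hx)
  rw [mul_inv_cancel₀ hx, hc.map_one] at this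
  exact (neg_eq_of_add_eq_zero_right this.symm).symm

theorem map_eq_zero_of_pow_four (hc : IsCubicLog m c) {x : F} (hx : x ^ 4 = 1) : c x = 0 := by
  have hx0 : x ≠ 0 := by rintro rfl; simp at hx
  have := hc.map_pow hx0 4
  rw [hx, hc.map_one] at this
  revert this
  generalize c x = t
  revert t
  decide

end IsCubicLog

/-- The value at `x` of the sum of the two nontrivial cubic characters. -/
noncomputable def cubicTraceAt {F : Type*} [Field F] (c : F → ZMod 3) (x : F) : ℤ :=
  open Classical in if x = 0 then 0 else cubicTrace (c x)

theorem cubicTraceAt_zero {F : Type*} [Field F] (c : F → ZMod 3) : cubicTraceAt c 0 = 0 := by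
  simp [cubicTraceAt]

theorem cubicTraceAt_of_ne_zero {F : Type*} [Field F] (c : F → ZMod 3) {x : F} (hx : x ≠ 0) :
    cubicTraceAt c x = cubicTrace (c x) := by
  simp [cubicTraceAt, hx]

theorem cubicTraceAt_bounds {F : Type*} [Field F] (c : F → ZMod 3) (x : F) :
    -1 ≤ cubicTraceAt c x ∧ cubicTraceAt c x ≤ 2 := by
  unfold cubicTraceAt cubicTrace
  split_ifs <;> norm_num

namespace IsCubicLog

variable {F : Type*} [Field F] [Fintype F] {m : ℕ} {c : F → ZMod 3}

theorem sum_cubicTraceAt (hc : IsCubicLog m c) : ∑ x, cubicTraceAt c x = 0 := by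
  obtain ⟨g, hg, hcg⟩ := hc.exists_ne_zero
  have hshift : ∀ y : F, y ≠ 0 → ∑ x, cubicTraceAt c (y * x) = ∑ x, cubicTraceAt c x := fun y hy =>
    Fintype.sum_equiv (Equiv.mulLeft₀ y hy) _ _ fun x => rfl
  have h0 : ∑ x, (cubicTraceAt c x + cubicTraceAt c (g * x) + cubicTraceAt c (g ^ 2 * x)) = 0 := by
    refine Finset.sum_eq_zero fun x _ => ?_
    rcases eq_or_ne x 0 with rfl | hx
    · simp [cubicTraceAt_zero]
    · rw [cubicTraceAt_of_ne_zero c hx, cubicTraceAt_of_ne_zero c (mul_ne_zero hg hx),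
        cubicTraceAt_of_ne_zero c (mul_ne_zero (pow_ne_zero 2 hg) hx), hc.map_mul g x hg hx,
        hc.map_mul _ x (pow_ne_zero 2 hg) hx, hc.map_pow hg]
      revert hcg
      generalize c g = s
      generalize c x = t
      revert s t
      decide
  rw [Finset.sum_add_distrib, Finset.sum_add_distrib, hshift g hg, hshift _ (pow_ne_zero 2 hg)] at h0
  omega

theorem sum_cubicTraceAt_sub (hc : IsCubicLog m c) (p : F) : ∑ x, cubicTraceAt c (x - p) = 0 := by
  rw [← hc.sum_cubicTraceAt]
  exact Fintype.sum_equiv (Equiv.subRight p) _ _ fun x => rfl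

theorem sum_cubicTraceAt_div (hc : IsCubicLog m c) {a b : F} (hab : a ≠ b) :
    ∑ x, cubicTraceAt c ((x - a) / (x - b)) = -2 := by
  classical
  have h1 : ∑ x ∈ Finset.univ.erase b, cubicTraceAt c ((x - a) / (x - b)) =
      ∑ y ∈ Finset.univ.erase (1 : F), cubicTraceAt c y := by
    refine Finset.sum_bij' (fun x _ => (x - a) / (x - b)) (fun y _ => (a - b * y) / (1 - y))
      ?_ ?_ ?_ ?_ ?_
    · intro x hx
      have hx : x - b ≠ 0 := sub_ne_zero.2 (Finset.ne_of_mem_erase hx)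
      refine Finset.mem_erase.2 ⟨fun h => hab ?_, Finset.mem_univ _⟩
      rw [div_eq_one_iff_eq hx] at h
      exact sub_right_injective h
    · intro y hy
      have hy : 1 - y ≠ 0 := sub_ne_zero.2 (Finset.ne_of_mem_erase hy).symm
      refine Finset.mem_erase.2 ⟨fun h => hab ?_, Finset.mem_univ _⟩
      rw [div_eq_iff hy] at h
      linear_combination h
    · intro x hx
      have hx : x - b ≠ 0 := sub_ne_zero.2 (Finset.ne_of_mem_erase hx)
      have : 1 - (x - a) / (x - b) ≠ 0 := by
        rw [one_sub_div hx]
        refine div_ne_zero ?_ hx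
        rw [sub_sub_sub_cancel_left]
        exact sub_ne_zero.2 hab
      rw [div_eq_iff this]
      field_simp
      ring
    · intro y hy
      have hy : 1 - y ≠ 0 := sub_ne_zero.2 (Finset.ne_of_mem_erase hy).symm
      have : (a - b * y) / (1 - y) - b ≠ 0 := by
        rw [div_sub' hy]
        refine div_ne_zero ?_ hy
        rw [show a - b * y - (1 - y) * b = a - b by ring]
        exact sub_ne_zero.2 hab
      rw [div_eq_iff this]
      field_simp
      ring
    · intro x _
      rfl
  have h2 := Finset.add_sum_erase Finset.univ (fun x => cubicTraceAt c ((x - a) / (x - b)))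
    (Finset.mem_univ b)
  have h3 := Finset.add_sum_erase Finset.univ (cubicTraceAt c) (Finset.mem_univ 1)
  rw [hc.sum_cubicTraceAt, cubicTraceAt_of_ne_zero c one_ne_zero, hc.map_one] at h3
  rw [← h2, h1]
  simp only [sub_self, div_zero, cubicTraceAt_zero]
  have : cubicTrace 0 = 2 := rfl
  omega

theorem sum_cubicTraceAt_mul_mul_sq_le {q Q J : ℕ} (hc : IsCubicLog (Q + 1) c)
    (hF : Fintype.card F = q) (hq : q = 3 * Q + 4) (hJ : (3 * J + 2) * (4 * J + 2) < 2 * Q)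
    (a b e : F) :
    (3 * J + 2) * ∑ x, cubicTraceAt c ((x - a) * (x - b) * (x - e) ^ 2) ≤
      4 * (q : ℤ) + 3 * (3 * J + 2) := by
  classical
  set T : Finset F := Finset.univ.filter fun x => x ≠ a ∧ x ≠ b ∧ x ≠ e ∧
    ((x - a) * (x - b) * (x - e) ^ 2) ^ (Q + 1) = 1 with hT
  have hcard := card_cube_values_lt hF hq hJ a b e T (by simp [hT])
  have hpoint : ∀ x, cubicTraceAt c ((x - a) * (x - b) * (x - e) ^ 2) ≤
      3 * (if x ∈ T then 1 else 0) - 1 + (if x ∈ ({a, b, e} : Finset F) then 1 else 0) := by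
    intro x
    by_cases hx : x ∈ ({a, b, e} : Finset F)
    · have h0 : (x - a) * (x - b) * (x - e) ^ 2 = 0 := by
        simp only [Finset.mem_insert, Finset.mem_singleton] at hx
        rcases hx with rfl | rfl | rfl <;> simp
      rw [h0, cubicTraceAt_zero, if_pos hx]
      split_ifs <;> norm_num
    · rw [if_neg hx]
      simp only [Finset.mem_insert, Finset.mem_singleton, not_or] at hx
      have h0 : (x - a) * (x - b) * (x - e) ^ 2 ≠ 0 :=
        mul_ne_zero (mul_ne_zero (sub_ne_zero.2 hx.1) (sub_ne_zero.2 hx.2.1))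
          (pow_ne_zero 2 (sub_ne_zero.2 hx.2.2))
      have hxT : x ∈ T ↔ ((x - a) * (x - b) * (x - e) ^ 2) ^ (Q + 1) = 1 := by
        simp [hT, hx]
      rw [cubicTraceAt_of_ne_zero c h0, cubicTrace]
      simp only [hc.eq_zero_iff _ h0, hxT]
      split_ifs <;> norm_num
  have hsum := Finset.sum_le_sum fun x (_ : x ∈ Finset.univ) => hpoint x
  rw [Finset.sum_add_distrib, Finset.sum_sub_distrib, ← Finset.mul_sum, Finset.sum_boole,
    Finset.sum_boole, Finset.filter_univ_mem, Finset.filter_univ_mem, Finset.sum_const,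
    Finset.card_univ, hF, nsmul_eq_mul, mul_one] at hsum
  have h3 : ((({a, b, e} : Finset F).card : ℕ) : ℤ) ≤ 3 := by exact_mod_cast Finset.card_le_three
  have hcard' : (3 * (J : ℤ) + 2) * T.card < q * (J + 2) := by exact_mod_cast hcard
  have := mul_le_mul_of_nonneg_left hsum (by positivity : 0 ≤ 3 * (J : ℤ) + 2)
  nlinarith

/-- The cubic character with values in the complex numbers attached to a cubic logarithm. -/
theorem exists_mulChar {F : Type*} [Field F] {m : ℕ} {c : F → ZMod 3} (hc : IsCubicLog m c) :
    ∃ χ : MulChar F ℂ, χ ≠ 1 ∧ χ * χ ≠ 1 ∧ (∀ x, x ≠ 0 → ‖χ x‖ = 1) ∧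
      ∀ x, (cubicTraceAt c x : ℂ) = χ x + star (χ x) := by
  classical
  have hω := Complex.isPrimitiveRoot_exp 3 (by norm_num)
  generalize Complex.exp (2 * Real.pi * Complex.I / (3 : ℕ)) = ω at hω
  let e : AddChar (ZMod 3) ℂ := AddChar.zmodChar 3 hω.pow_eq_one
  have he : ∀ t, e t = ω ^ t.val := AddChar.zmodChar_apply hω.pow_eq_one
  have hnorm : ∀ t, ‖e t‖ = 1 := fun t => e.norm_apply t
  have hgeom : 1 + ω + ω ^ 2 = 0 := by
    simpa [Finset.sum_range_succ] using hω.geom_sum_eq_zero (by norm_num)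
  have hne : ∀ t, t ≠ 0 → e t ≠ 1 := by
    intro t ht h
    rw [he] at h
    have := hω.dvd_of_pow_eq_one _ h
    have hlt := t.val_lt
    have : t.val = 0 := Nat.eq_zero_of_dvd_of_lt this hlt
    exact ht ((ZMod.val_eq_zero t).1 this)
  let χ : MulChar F ℂ :=
    { toFun := fun x => if x = 0 then 0 else e (c x)
      map_one' := by simp [hc.map_one]
      map_mul' := fun x y => by
        rcases eq_or_ne x 0 with rfl | hx
        · simp
        rcases eq_or_ne y 0 with rfl | hy
        · simp
        simp [hx, hy, hc.map_mul x y hx hy, AddChar.map_add_eq_mul]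
      map_nonunit' := fun x hx => by
        have : x = 0 := by simpa using hx
        simp [this] }
  have hχ : ∀ x, x ≠ 0 → χ x = e (c x) := fun x hx => if_neg hx
  obtain ⟨g, hg, hcg⟩ := hc.exists_ne_zero
  refine ⟨χ, fun h => hne _ hcg ?_, fun h => hne (c g + c g) ?_ ?_, fun x hx => ?_, fun x => ?_⟩
  · rw [← hχ g hg, h, MulChar.one_apply (IsUnit.mk0 g hg)]
  · revert hcg
    generalize c g = t
    revert t
    decide
  · rw [AddChar.map_add_eq_mul, ← hχ g hg, ← MulChar.mul_apply, h,
      MulChar.one_apply (IsUnit.mk0 g hg)]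
  · rw [hχ x hx, hnorm]
  · rcases eq_or_ne x 0 with rfl | hx
    · have h0 : χ 0 = 0 := if_pos rfl
      simp [cubicTraceAt_zero, h0]
    · rw [cubicTraceAt_of_ne_zero c hx, hχ x hx]
      have hstar : star (e (c x)) = e (- c x) := by
        rw [AddChar.map_neg_eq_inv, Complex.inv_eq_conj (hnorm _)]
        rfl
      rw [hstar, he, he]
      generalize c x = t
      obtain rfl | rfl | rfl : t = 0 ∨ t = 1 ∨ t = 2 := by revert t; decide
      · simp [cubicTrace]
        norm_num
      · have h1 : (1 : ZMod 3).val = 1 := rfl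
        have h2 : (-1 : ZMod 3).val = 2 := rfl
        have h3 : cubicTrace 1 = -1 := rfl
        rw [h1, h2, h3]
        push_cast
        linear_combination -hgeom
      · have h1 : (2 : ZMod 3).val = 2 := rfl
        have h2 : (-2 : ZMod 3).val = 1 := rfl
        have h3 : cubicTrace 2 = -1 := rfl
        rw [h1, h2, h3]
        push_cast
        linear_combination -hgeom

theorem neg_two_mul_sqrt_le_sum_cubicTraceAt_mul (hc : IsCubicLog m c) {a b : F} (hab : a ≠ b) :
    -2 * √(Fintype.card F) ≤ ((∑ x, cubicTraceAt c ((x - a) * (x - b)) : ℤ) : ℝ) := by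
  obtain ⟨χ, h1, h2, hnorm, htrace⟩ := hc.exists_mulChar
  have hjac : ‖jacobiSum χ χ‖ = √(Fintype.card F) := by
    have hchar : ringChar ℂ ≠ ringChar F := by
      rw [ringChar.eq ℂ 0]
      exact (CharP.ringChar_ne_zero_of_finite F).symm
    have h := jacobiSum_mul_jacobiSum_inv hchar h1 h1 h2
    have hstar : jacobiSum χ⁻¹ χ⁻¹ = star (jacobiSum χ χ) := by
      simp only [jacobiSum, star_sum, star_mul', MulChar.star_apply']
    rw [hstar] at h
    have hn := congrArg norm h
    rw [norm_mul, norm_star, Complex.norm_natCast] at hn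
    rw [← hn, Real.sqrt_mul_self (norm_nonneg _)]
  have hd : b - a ≠ 0 := sub_ne_zero.2 hab.symm
  have hsum : ∑ x, χ ((x - a) * (x - b)) = χ (-(b - a) ^ 2) * jacobiSum χ χ := by
    rw [jacobiSum, Finset.mul_sum]
    refine (Fintype.sum_equiv ((Equiv.mulLeft₀ (b - a) hd).trans (Equiv.addRight a)) _ _
      fun u => ?_).symm
    change _ = χ (((b - a) * u + a - a) * ((b - a) * u + a - b))
    rw [← _root_.map_mul χ, ← _root_.map_mul χ]
    congr 1
    ring
  have hZ : ‖∑ x, χ ((x - a) * (x - b))‖ = √(Fintype.card F) := by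
    rw [hsum, norm_mul, hnorm _ (neg_ne_zero.2 (pow_ne_zero 2 hd)), one_mul, hjac]
  have hre : ((∑ x, cubicTraceAt c ((x - a) * (x - b)) : ℤ) : ℝ) =
      2 * (∑ x, χ ((x - a) * (x - b))).re := by
    have : ((∑ x, cubicTraceAt c ((x - a) * (x - b)) : ℤ) : ℂ) =
        (∑ x, χ ((x - a) * (x - b))) + star (∑ x, χ ((x - a) * (x - b))) := by
      rw [star_sum, ← Finset.sum_add_distrib]
      push_cast
      exact Finset.sum_congr rfl fun x _ => htrace _
    have := congrArg Complex.re this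
    rw [Complex.add_re, Complex.star_def, Complex.conj_re, Complex.intCast_re] at this
    linarith
  rw [hre, ← hZ]
  have := Complex.abs_re_le_norm (∑ x, χ ((x - a) * (x - b)))
  have := neg_le_of_abs_le this
  linarith

end IsCubicLog

set_option maxRecDepth 100000 in
theorem four_le_cubicTrace_combination (a v w y z : ZMod 3)
    (h : a = 0 ∨ v = 0 ∨ w = 0 ∨ y = 0 ∨ z = 0)
    (h' : a = 0 ∨ v = a ∨ w = a ∨ y = a ∨ z = a) :
    4 ≤ 2 * (cubicTrace a + cubicTrace v + cubicTrace w + cubicTrace y + cubicTrace z) -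
      2 * (cubicTrace (v + w) + cubicTrace (v + y) + cubicTrace (v + z) +
        cubicTrace (w + y) + cubicTrace (w + z) + cubicTrace (y + z)) -
      2 * (cubicTrace (v - w) + cubicTrace (v - y) + cubicTrace (v - z) +
        cubicTrace (w - y) + cubicTrace (w - z) + cubicTrace (y - z)) -
      (cubicTrace (a + v) + cubicTrace (a + w) + cubicTrace (a + y) +
        cubicTrace (a + z)) -
      (cubicTrace (a - v) + cubicTrace (a - w) + cubicTrace (a - y) +
        cubicTrace (a - z)) +
      2 * (cubicTrace (v + w - a) + cubicTrace (v + y - a) + cubicTrace (v + z - a) +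
        cubicTrace (w + y - a) + cubicTrace (w + z - a) + cubicTrace (y + z - a)) +
      (cubicTrace (a + v - w) + cubicTrace (a + v - y) + cubicTrace (a + v - z) +
        cubicTrace (a + w - y) + cubicTrace (a + w - z) + cubicTrace (a + y - z)) +
      (cubicTrace (a + w - v) + cubicTrace (a + y - v) + cubicTrace (a + z - v) +
        cubicTrace (a + y - w) + cubicTrace (a + z - w) + cubicTrace (a + z - y)) := by
  revert a v w y z
  decide

namespace IsCubicLog

variable {F : Type*} [Field F] {m : ℕ} {c : F → ZMod 3}

theorem cubicTraceAt_mul (hc : IsCubicLog m c) {x y : F} (hx : x ≠ 0) (hy : y ≠ 0) :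
    cubicTraceAt c (x * y) = cubicTrace (c x + c y) := by
  rw [cubicTraceAt_of_ne_zero c (mul_ne_zero hx hy), hc.map_mul x y hx hy]

theorem cubicTraceAt_div (hc : IsCubicLog m c) {x y : F} (hx : x ≠ 0) (hy : y ≠ 0) :
    cubicTraceAt c (x / y) = cubicTrace (c x - c y) := by
  rw [div_eq_mul_inv, hc.cubicTraceAt_mul hx (inv_ne_zero hy), hc.map_inv hy, sub_eq_add_neg]

theorem cubicTraceAt_mul_mul_sq (hc : IsCubicLog m c) {x y z : F} (hx : x ≠ 0) (hy : y ≠ 0)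
    (hz : z ≠ 0) : cubicTraceAt c (x * y * z ^ 2) = cubicTrace (c x + c y - c z) := by
  rw [hc.cubicTraceAt_mul (mul_ne_zero hx hy) (pow_ne_zero 2 hz), hc.map_mul x y hx hy,
    hc.map_pow hz, show ((2 : ℕ) : ZMod 3) = -1 from rfl, neg_one_mul, ← sub_eq_add_neg]

theorem four_le_cubicTraceAt_combination (hc : IsCubicLog m c) {a v w y z : F} (ha : a ≠ 0)
    (hv : v ≠ 0) (hw : w ≠ 0) (hy : y ≠ 0) (hz : z ≠ 0)
    (h : c a = 0 ∨ c v = 0 ∨ c w = 0 ∨ c y = 0 ∨ c z = 0)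
    (h' : c a = 0 ∨ c v = c a ∨ c w = c a ∨ c y = c a ∨ c z = c a) :
    4 ≤ 2 * (cubicTraceAt c a + cubicTraceAt c v + cubicTraceAt c w + cubicTraceAt c y +
        cubicTraceAt c z) -
      2 * (cubicTraceAt c (v * w) + cubicTraceAt c (v * y) + cubicTraceAt c (v * z) +
        cubicTraceAt c (w * y) + cubicTraceAt c (w * z) + cubicTraceAt c (y * z)) -
      2 * (cubicTraceAt c (v / w) + cubicTraceAt c (v / y) + cubicTraceAt c (v / z) +
        cubicTraceAt c (w / y) + cubicTraceAt c (w / z) + cubicTraceAt c (y / z)) -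
      (cubicTraceAt c (a * v) + cubicTraceAt c (a * w) + cubicTraceAt c (a * y) +
        cubicTraceAt c (a * z)) -
      (cubicTraceAt c (a / v) + cubicTraceAt c (a / w) + cubicTraceAt c (a / y) +
        cubicTraceAt c (a / z)) +
      2 * (cubicTraceAt c (v * w * a ^ 2) + cubicTraceAt c (v * y * a ^ 2) +
        cubicTraceAt c (v * z * a ^ 2) + cubicTraceAt c (w * y * a ^ 2) +
        cubicTraceAt c (w * z * a ^ 2) + cubicTraceAt c (y * z * a ^ 2)) +
      (cubicTraceAt c (a * v * w ^ 2) + cubicTraceAt c (a * v * y ^ 2) +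
        cubicTraceAt c (a * v * z ^ 2) + cubicTraceAt c (a * w * y ^ 2) +
        cubicTraceAt c (a * w * z ^ 2) + cubicTraceAt c (a * y * z ^ 2)) +
      (cubicTraceAt c (a * w * v ^ 2) + cubicTraceAt c (a * y * v ^ 2) +
        cubicTraceAt c (a * z * v ^ 2) + cubicTraceAt c (a * y * w ^ 2) +
        cubicTraceAt c (a * z * w ^ 2) + cubicTraceAt c (a * z * y ^ 2)) := by
  simp only [cubicTraceAt_of_ne_zero c ha, cubicTraceAt_of_ne_zero c hv,
    cubicTraceAt_of_ne_zero c hw, cubicTraceAt_of_ne_zero c hy, cubicTraceAt_of_ne_zero c hz,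
    hc.cubicTraceAt_mul ha hv, hc.cubicTraceAt_mul ha hw, hc.cubicTraceAt_mul ha hy,
    hc.cubicTraceAt_mul ha hz, hc.cubicTraceAt_mul hv hw, hc.cubicTraceAt_mul hv hy,
    hc.cubicTraceAt_mul hv hz, hc.cubicTraceAt_mul hw hy, hc.cubicTraceAt_mul hw hz,
    hc.cubicTraceAt_mul hy hz, hc.cubicTraceAt_div ha hv, hc.cubicTraceAt_div ha hw,
    hc.cubicTraceAt_div ha hy, hc.cubicTraceAt_div ha hz, hc.cubicTraceAt_div hv hw,
    hc.cubicTraceAt_div hv hy, hc.cubicTraceAt_div hv hz, hc.cubicTraceAt_div hw hy,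
    hc.cubicTraceAt_div hw hz, hc.cubicTraceAt_div hy hz, hc.cubicTraceAt_mul_mul_sq hv hw ha,
    hc.cubicTraceAt_mul_mul_sq hv hy ha, hc.cubicTraceAt_mul_mul_sq hv hz ha,
    hc.cubicTraceAt_mul_mul_sq hw hy ha, hc.cubicTraceAt_mul_mul_sq hw hz ha,
    hc.cubicTraceAt_mul_mul_sq hy hz ha, hc.cubicTraceAt_mul_mul_sq ha hv hw,
    hc.cubicTraceAt_mul_mul_sq ha hv hy, hc.cubicTraceAt_mul_mul_sq ha hv hz,
    hc.cubicTraceAt_mul_mul_sq ha hw hv, hc.cubicTraceAt_mul_mul_sq ha hw hy,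
    hc.cubicTraceAt_mul_mul_sq ha hw hz, hc.cubicTraceAt_mul_mul_sq ha hy hv,
    hc.cubicTraceAt_mul_mul_sq ha hy hw, hc.cubicTraceAt_mul_mul_sq ha hy hz,
    hc.cubicTraceAt_mul_mul_sq ha hz hv, hc.cubicTraceAt_mul_mul_sq ha hz hw,
    hc.cubicTraceAt_mul_mul_sq ha hz hy]
  exact four_le_cubicTrace_combination _ _ _ _ _ h h'

/-- If `x` is a sum of a `5`-potent and an `(m + 1)`-potent, then `x - p` is a cubic residue for
some `5`-potent `p`. -/
theorem exists_log_sub_eq_zero (hc : IsCubicLog m c) {i : F} (hi : i ^ 2 = -1)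
    (hcov : ∀ γ : F, ∃ a b : F, a ^ 5 = a ∧ b ^ (m + 1) = b ∧ a + b = γ) {x : F}
    (hx : x ∉ ({0, 1, -1, i, -i} : Set F)) :
    c (x - 0) = 0 ∨ c (x - 1) = 0 ∨ c (x - -1) = 0 ∨ c (x - i) = 0 ∨ c (x - -i) = 0 := by
  obtain ⟨a, b, ha, hb, rfl⟩ := hcov x
  have hfactor : a * ((a - 1) * ((a - -1) * ((a - i) * (a - -i)))) = 0 := by
    linear_combination ha + (-a ^ 3 + a) * hi
  have haV : a = 0 ∨ a = 1 ∨ a = -1 ∨ a = i ∨ a = -i := by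
    simpa only [mul_eq_zero, sub_eq_zero] using hfactor
  have hb0 : b ≠ 0 := by
    rintro rfl
    exact hx (by simpa using haV)
  have hcb : c b = 0 := by
    rw [hc.eq_zero_iff b hb0]
    exact mul_right_cancel₀ hb0 (by rw [← pow_succ, hb, one_mul])
  rcases haV with rfl | rfl | rfl | rfl | rfl <;> simp [hcb]

/-- The condition of `exists_log_sub_eq_zero` for `x⁻¹`, expressed in terms of `x`. -/
theorem exists_log_sub_eq_log (hc : IsCubicLog m c) {i : F} (hi : i ^ 2 = -1)
    (hcov : ∀ γ : F, ∃ a b : F, a ^ 5 = a ∧ b ^ (m + 1) = b ∧ a + b = γ) {x : F}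
    (hx : x ∉ ({0, 1, -1, i, -i} : Set F)) :
    c (x - 0) = 0 ∨ c (x - 1) = c (x - 0) ∨ c (x - -1) = c (x - 0) ∨ c (x - i) = c (x - 0) ∨
      c (x - -i) = c (x - 0) := by
  have hx' : x ≠ 0 ∧ x ≠ 1 ∧ x ≠ -1 ∧ x ≠ i ∧ x ≠ -i := by simpa using hx
  obtain ⟨h0, h1, h2, h3, h4⟩ := hx'
  have hii : i * -i = 1 := by linear_combination -hi
  have hinv : x⁻¹ ∉ ({0, 1, -1, i, -i} : Set F) := by
    simp only [Set.mem_insert_iff, Set.mem_singleton_iff, not_or, inv_eq_zero]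
    refine ⟨h0, fun h => h1 ?_, fun h => h2 ?_, fun h => h4 ?_, fun h => h3 ?_⟩ <;>
      rw [← inv_inv x, h]
    · exact inv_one
    · exact inv_neg_one
    · exact inv_eq_of_mul_eq_one_right hii
    · exact inv_eq_of_mul_eq_one_left hii
  have key : ∀ p u r : F, x ≠ p → u ^ 4 = 1 → x⁻¹ - r = u * (x - p) * x⁻¹ → c (x⁻¹ - r) = 0 →
      c (x - p) = c (x - 0) := by
    intro p u r hp hu he h
    have hu0 : u ≠ 0 := by rintro rfl; simp at hu
    have hp := sub_ne_zero.2 hp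
    rw [he, hc.map_mul _ _ (mul_ne_zero hu0 hp) (inv_ne_zero h0), hc.map_mul _ _ hu0 hp,
      hc.map_eq_zero_of_pow_four hu, hc.map_inv h0, zero_add, ← sub_eq_add_neg] at h
    rw [sub_zero]
    exact sub_eq_zero.1 h
  have hi4 : i ^ 4 = 1 := by linear_combination (i ^ 2 - 1) * hi
  rcases hc.exists_log_sub_eq_zero hi hcov hinv with h | h | h | h | h
  · left
    rwa [sub_zero, hc.map_inv h0, neg_eq_zero, ← sub_zero x] at h
  · exact .inr (.inl (key 1 (-1) 1 h1 (by norm_num) (by field_simp; ring) h))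
  · exact .inr (.inr (.inl (key (-1) 1 (-1) h2 (by norm_num) (by field_simp; ring) h)))
  · refine .inr (.inr (.inr (.inr (key (-i) (-i) i h4 ?_ ?_ h))))
    · linear_combination hi4
    · field_simp
      linear_combination hi
  · refine .inr (.inr (.inr (.inl (key i i (-i) h3 hi4 ?_ h))))
    field_simp
    linear_combination hi

end IsCubicLog

theorem IsCubicLog.four_mul_card_le {F : Type*} [Field F] [Fintype F] {m : ℕ} {c : F → ZMod 3}
    (hc : IsCubicLog m c) {i : F} (hi : i ^ 2 = -1) (h2 : (2 : F) ≠ 0)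
    (hcov : ∀ γ : F, ∃ a b : F, a ^ 5 = a ∧ b ^ (m + 1) = b ∧ a + b = γ) {B : ℝ}
    (hB : ∀ a b e : F,
      ((∑ x, cubicTraceAt c ((x - a) * (x - b) * (x - e) ^ 2) : ℤ) : ℝ) ≤ B) :
    4 * (Fintype.card F : ℝ) ≤ 542 + 32 * √(Fintype.card F) + 24 * B := by
  classical
  have hi0 : i ≠ 0 := by rintro rfl; simp at hi
  have h1 : (1 : F) ≠ -1 := fun h => h2 (by linear_combination h)
  have h3 : (1 : F) ≠ i := by rintro rfl; exact h1 (by simpa using hi)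
  have h4 : (1 : F) ≠ -i := fun h => h1 (by linear_combination (1 - i) * h + hi)
  have h5 : -1 ≠ i := fun h => h4 (by linear_combination -h)
  have h6 : -1 ≠ -i := fun h => h3 (by linear_combination -h)
  have h7 : i ≠ -i := fun h => mul_ne_zero h2 hi0 (by linear_combination h)
  have hni0 : (0 : F) ≠ -i := (neg_ne_zero.2 hi0).symm
  have hn10 : (0 : F) ≠ -1 := (neg_ne_zero.2 one_ne_zero).symm
  let A : F → F → ℤ := fun a x => cubicTraceAt c (x - a)
  let P : F → F → F → ℤ := fun a b x => cubicTraceAt c ((x - a) * (x - b))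
  let D : F → F → F → ℤ := fun a b x => cubicTraceAt c ((x - a) / (x - b))
  let R : F → F → F → F → ℤ := fun a b e x => cubicTraceAt c ((x - a) * (x - b) * (x - e) ^ 2)
  have hpoint : ∀ x, 4 - 102 * (if x ∈ ({0, 1, -1, i, -i} : Finset F) then 1 else 0) ≤
      2 * (A 0 x + A 1 x + A (-1) x + A i x + A (-i) x) -
      2 * (P 1 (-1) x + P 1 i x + P 1 (-i) x + P (-1) i x + P (-1) (-i) x + P i (-i) x) -
      2 * (D 1 (-1) x + D 1 i x + D 1 (-i) x + D (-1) i x + D (-1) (-i) x + D i (-i) x) -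
      (P 0 1 x + P 0 (-1) x + P 0 i x + P 0 (-i) x) -
      (D 0 1 x + D 0 (-1) x + D 0 i x + D 0 (-i) x) +
      2 * (R 1 (-1) 0 x + R 1 i 0 x + R 1 (-i) 0 x + R (-1) i 0 x + R (-1) (-i) 0 x +
        R i (-i) 0 x) +
      (R 0 1 (-1) x + R 0 1 i x + R 0 1 (-i) x + R 0 (-1) i x + R 0 (-1) (-i) x +
        R 0 i (-i) x) +
      (R 0 (-1) 1 x + R 0 i 1 x + R 0 (-i) 1 x + R 0 i (-1) x + R 0 (-i) (-1) x +
        R 0 (-i) i x) := by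
    intro x
    split_ifs with hx
    · have hA : ∀ a, -1 ≤ A a x := fun a => (cubicTraceAt_bounds c _).1
      have hP : ∀ a b, P a b x ≤ 2 := fun a b => (cubicTraceAt_bounds c _).2
      have hD : ∀ a b, D a b x ≤ 2 := fun a b => (cubicTraceAt_bounds c _).2
      have hR : ∀ a b e, -1 ≤ R a b e x := fun a b e => (cubicTraceAt_bounds c _).1
      linarith [hA 0, hA 1, hA (-1), hA i, hA (-i), hP 1 (-1), hP 1 i, hP 1 (-i), hP (-1) i,
        hP (-1) (-i), hP i (-i), hD 1 (-1), hD 1 i, hD 1 (-i), hD (-1) i, hD (-1) (-i),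
        hD i (-i), hP 0 1, hP 0 (-1), hP 0 i, hP 0 (-i), hD 0 1, hD 0 (-1), hD 0 i, hD 0 (-i),
        hR 1 (-1) 0, hR 1 i 0, hR 1 (-i) 0, hR (-1) i 0, hR (-1) (-i) 0, hR i (-i) 0,
        hR 0 1 (-1), hR 0 1 i, hR 0 1 (-i), hR 0 (-1) i, hR 0 (-1) (-i), hR 0 i (-i),
        hR 0 (-1) 1, hR 0 i 1, hR 0 (-i) 1, hR 0 i (-1), hR 0 (-i) (-1), hR 0 (-i) i]
    · have hx' : x ∉ ({0, 1, -1, i, -i} : Set F) := by simpa using hx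
      simp only [Finset.mem_insert, Finset.mem_singleton, not_or] at hx
      have := hc.four_le_cubicTraceAt_combination (sub_ne_zero.2 hx.1) (sub_ne_zero.2 hx.2.1)
        (sub_ne_zero.2 hx.2.2.1) (sub_ne_zero.2 hx.2.2.2.1) (sub_ne_zero.2 hx.2.2.2.2)
        (hc.exists_log_sub_eq_zero hi hcov hx') (hc.exists_log_sub_eq_log hi hcov hx')
      simpa only [mul_zero, sub_zero (4 : ℤ)] using this
  have hsum := Finset.sum_le_sum fun x (_ : x ∈ Finset.univ) => hpoint x
  simp only [Finset.sum_add_distrib, Finset.sum_sub_distrib, ← Finset.mul_sum] at hsum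
  rw [Finset.sum_boole, Finset.filter_univ_mem, Finset.sum_const, Finset.card_univ,
    nsmul_eq_mul] at hsum
  have hV : (({0, 1, -1, i, -i} : Finset F).card : ℝ) ≤ 5 := by
    exact_mod_cast Finset.card_le_five
  have hA : ∀ a, ∑ x, A a x = 0 := hc.sum_cubicTraceAt_sub
  have hD : ∀ {a b}, a ≠ b → ∑ x, D a b x = -2 := hc.sum_cubicTraceAt_div
  have hP : ∀ {a b}, a ≠ b → -2 * √(Fintype.card F) ≤ ((∑ x, P a b x : ℤ) : ℝ) :=
    hc.neg_two_mul_sqrt_le_sum_cubicTraceAt_mul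
  have hR : ∀ a b e, ((∑ x, R a b e x : ℤ) : ℝ) ≤ B := hB
  rw [hA, hA, hA, hA, hA, hD h1, hD h3, hD h4, hD h5, hD h6, hD h7, hD zero_ne_one, hD hn10,
    hD hi0.symm, hD hni0] at hsum
  have hsum' := (Int.cast_le (R := ℝ)).2 hsum
  simp only [Int.cast_add, Int.cast_sub, Int.cast_mul, Int.cast_ofNat, Int.cast_natCast,
    Int.cast_neg, Int.cast_zero] at hsum'
  linarith [hP h1, hP h3, hP h4, hP h5, hP h6, hP h7, hP zero_ne_one, hP hn10, hP hi0.symm,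
    hP hni0, hR 1 (-1) 0, hR 1 i 0, hR 1 (-i) 0, hR (-1) i 0, hR (-1) (-i) 0, hR i (-i) 0,
    hR 0 1 (-1), hR 0 1 i, hR 0 1 (-i), hR 0 (-1) i, hR 0 (-1) (-i), hR 0 i (-i),
    hR 0 (-1) 1, hR 0 i 1, hR 0 (-i) 1, hR 0 i (-1), hR 0 (-i) (-1), hR 0 (-i) i]

/-- If `q ≡ 1 (mod 4)` is a prime power with `q > 2809`, `3 ∣ q - 1`, and `n - 1 = (q-1)/3`,
then not every element of the finite field with `q` elements is the sum of a `5`-potent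
and an `n`-potent. -/
theorem not_sum_of_five_potent_and_n_potent_d_eq_three
    (q n : ℕ) (hq : IsPrimePow q) (hq4 : q % 4 = 1) (h3 : 3 ∣ q - 1) (hq' : 2809 < q)
    (hn : n = (q - 1) / 3 + 1)
    (F : Type*) [Field F] [Fintype F] (hF : Fintype.card F = q) :
    ¬ (∀ γ : F, ∃ a b : F, a ^ 5 = a ∧ b ^ n = b ∧ a + b = γ) := by
  intro hcov
  obtain ⟨Q, hQ⟩ : ∃ Q, q = 3 * Q + 4 := ⟨(q - 4) / 3, by omega⟩
  have hm : n = Q + 1 + 1 := by omega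
  subst hm
  obtain ⟨c, hc⟩ := exists_isCubicLog (F := F) (m := Q + 1) (by omega) (by omega)
  obtain ⟨i, hi⟩ : IsSquare (-1 : F) := by
    rw [FiniteField.isSquare_neg_one_iff, hF]
    omega
  have h2 : (2 : F) ≠ 0 := by
    refine Ring.two_ne_zero fun h => ?_
    have := FiniteField.even_card_of_char_two h
    omega
  set s : ℝ := √q with hs
  have hsq : s ^ 2 = q := Real.sq_sqrt (Nat.cast_nonneg q)
  have hs53 : 53 < s := Real.lt_sqrt_of_sq_lt (by norm_num; exact_mod_cast hq')
  have hk1 : (⌊0.235 * s⌋₊ : ℝ) ≤ 0.235 * s := Nat.floor_le (by positivity)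
  have hk2 : 0.235 * s < ⌊0.235 * s⌋₊ + 1 := Nat.lt_floor_add_one _
  have hk3 : 1 ≤ ⌊0.235 * s⌋₊ := Nat.le_floor (by norm_num; linarith)
  obtain ⟨J, hJ⟩ : ∃ J, ⌊0.235 * s⌋₊ = J + 1 := ⟨⌊0.235 * s⌋₊ - 1, by omega⟩
  rw [hJ] at hk1 hk2
  push_cast at hk1 hk2
  have hqs : (3 * Q + 4 : ℝ) = s ^ 2 := by
    rw [hsq, hQ]
    push_cast
    ring
  have hJQ : (3 * J + 2) * (4 * J + 2) < 2 * Q := by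
    have : (3 * (J : ℝ) + 2) * (4 * J + 2) < 2 * Q := by
      have hJ0 : (0 : ℝ) ≤ J := Nat.cast_nonneg J
      nlinarith
    exact_mod_cast this
  have hB : ∀ a b e : F,
      ((∑ x, cubicTraceAt c ((x - a) * (x - b) * (x - e) ^ 2) : ℤ) : ℝ) ≤ 6.36 * s + 3 := by
    intro a b e
    have h := (Int.cast_le (R := ℝ)).2 (hc.sum_cubicTraceAt_mul_mul_sq_le hF hQ hJQ a b e)
    generalize ∑ x, cubicTraceAt c ((x - a) * (x - b) * (x - e) ^ 2) = S at h
    push_cast at h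
    rw [← hsq] at h
    by_contra! hS
    nlinarith
  have hfinal := hc.four_mul_card_le (i := i) (by rw [hi]; ring) h2 hcov hB
  rw [hF, ← hs, ← hsq] at hfinal
  nlinarith
end

section
/- Let q be a prime power with q ≡ 1 (mod 4) and let n be the integer with n - 1 = (q-1)/4. If q > 2809, then not every element of F_q can be written as the sum of a 5-potent element and an n-potent element, i.e., C_5 + C_n ≠ F_q. -/
/-- The classes modulo fourth powers of `x`, `x - 1`, `x + 1`, `x - i` and `x + i`. -/
structure Profile where
  zero : ℕ
  one : ℕ
  negOne : ℕ
  im : ℕ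
  negIm : ℕ

namespace Profile

/-- The effect of `x ↦ i * x` on profiles, where `k` is the class of `i`. -/
def rot (k : ℕ) (v : Profile) : Profile :=
  ⟨(v.zero + k) % 4, (v.negIm + k) % 4, (v.im + k) % 4, (v.one + k) % 4, (v.negOne + k) % 4⟩

/-- The effect of `x ↦ x⁻¹` on profiles, where `k` is the class of `i`. -/
def inv (k : ℕ) (v : Profile) : Profile :=
  ⟨3 * v.zero % 4, (v.one + 3 * v.zero + 2 * k) % 4, (v.negOne + 3 * v.zero) % 4,
    (v.negIm + 3 * v.zero + 3 * k) % 4, (v.im + 3 * v.zero + k) % 4⟩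

/-- The effect of `x ↦ (x + 1) / (x - 1)` on profiles, where `k` is the class of `i` and `s` that
of `1 + i`. -/
def cayley (k s : ℕ) (v : Profile) : Profile :=
  ⟨(v.negOne + 3 * v.one) % 4, (2 * s + 3 * k + 3 * v.one) % 4,
    (2 * s + 3 * k + v.zero + 3 * v.one) % 4, (v.negIm + 3 * v.one + s + 3 * k) % 4,
    (v.im + 3 * v.one + s) % 4⟩

/-- One of the five entries is trivial after adding `t`. -/
def hit (t : ℕ) (v : Profile) : Bool :=
  Nat.beq ((v.zero + t) % 4) 0 || Nat.beq ((v.one + t) % 4) 0 || Nat.beq ((v.negOne + t) % 4) 0 ||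
    Nat.beq ((v.im + t) % 4) 0 || Nat.beq ((v.negIm + t) % 4) 0

/-- All rotations of a profile about infinity have a trivial entry. -/
def rotHit (k : ℕ) (v : Profile) : Bool :=
  v.hit 0 && v.hit k && v.hit (2 * k) && v.hit (3 * k)

/-- All images of a profile under the octahedral group have a trivial entry. -/
def covered (k s : ℕ) (v : Profile) : Bool :=
  v.rotHit k && (v.inv k).rotHit k && (v.cayley k s).rotHit k &&
    ((v.rot k).cayley k s).rotHit k && (((v.rot k).rot k).cayley k s).rotHit k &&
    ((((v.rot k).rot k).rot k).cayley k s).rotHit k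

/-- The sum of `H` over the rotations of a profile about infinity. -/
def rotSum (k : ℕ) (H : Profile → ℤ) (v : Profile) : ℤ :=
  H v + H (v.rot k) + H ((v.rot k).rot k) + H (((v.rot k).rot k).rot k)

/-- The sum of `H` over the octahedral group. -/
def octSum (k s : ℕ) (H : Profile → ℤ) (v : Profile) : ℤ :=
  rotSum k H v + rotSum k H (v.inv k) + rotSum k H (v.cayley k s) +
    rotSum k H ((v.rot k).cayley k s) + rotSum k H (((v.rot k).rot k).cayley k s) +
    rotSum k H ((((v.rot k).rot k).rot k).cayley k s)

end Profile

/-- The real part of `I ^ n`. -/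
def quarterCos (n : ℕ) : ℤ :=
  if n % 4 = 0 then 1 else if n % 4 = 2 then -1 else 0

/-- The test function whose octahedral sum is positive on covered profiles, where `k` is the class
of `i` and `s` that of `1 + i`. -/
def testFunction (k s : ℕ) (v : Profile) : ℤ :=
  if k = 0 then
    if s = 0 then
      32 * quarterCos v.one + 4 * quarterCos (2 * v.one) + 8 * quarterCos v.zero +
        quarterCos (2 * v.zero) +
        9 * quarterCos (2 * (v.zero + v.one + v.negOne + v.im + v.negIm))
    else if s = 2 then
      6 * quarterCos v.one + quarterCos (2 * v.zero) - 6 * quarterCos (v.zero + v.one)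
    else
      8 * quarterCos (v.one + s) + 2 * quarterCos (2 * v.one) + 2 * quarterCos v.zero +
        quarterCos (2 * v.zero) - 4 * quarterCos (v.zero + v.one + s) -
        4 * quarterCos (v.zero + 2 * v.one)
  else if k = 2 then
    if s % 2 = 0 then quarterCos (2 * v.one)
    else 6 * quarterCos (2 * v.one) - quarterCos (2 * v.zero)
  else 0

/-- The guaranteed average of `testFunction` over the octahedral orbit of a covered profile. -/
def testMargin (k s : ℕ) : ℤ := if k = 0 ∧ s = 0 then 6 else 1

open Profile in
theorem testFunction_octSum_digits : ∀ m < 64, ∀ n < 256,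
    covered (m % 4) (m / 4 % 4) ⟨m / 16, n % 4, n / 4 % 4, n / 16 % 4, n / 64⟩ →
    24 * testMargin (m % 4) (m / 4 % 4) ≤
      octSum (m % 4) (m / 4 % 4) (testFunction (m % 4) (m / 4 % 4))
        ⟨m / 16, n % 4, n / 4 % 4, n / 16 % 4, n / 64⟩ := by
  decide +kernel

open Profile in
theorem testFunction_octSum {k s : ℕ} (hk : k < 4) (hs : s < 4) {v : Profile}
    (h₁ : v.zero < 4) (h₂ : v.one < 4) (h₃ : v.negOne < 4) (h₄ : v.im < 4) (h₅ : v.negIm < 4)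
    (hv : covered k s v) : 24 * testMargin k s ≤ octSum k s (testFunction k s) v := by
  obtain ⟨a, b, c, d, e⟩ := v
  simp only at h₁ h₂ h₃ h₄ h₅
  have key := testFunction_octSum_digits (k + 4 * s + 16 * a) (by lia)
    (b + 4 * c + 16 * d + 64 * e) (by lia)
  have e₁ : (k + 4 * s + 16 * a) % 4 = k := by lia
  have e₂ : (k + 4 * s + 16 * a) / 4 % 4 = s := by lia
  have e₃ : (k + 4 * s + 16 * a) / 16 = a := by lia
  have e₄ : (b + 4 * c + 16 * d + 64 * e) % 4 = b := by lia
  have e₅ : (b + 4 * c + 16 * d + 64 * e) / 4 % 4 = c := by lia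
  have e₆ : (b + 4 * c + 16 * d + 64 * e) / 16 % 4 = d := by lia
  have e₇ : (b + 4 * c + 16 * d + 64 * e) / 64 = e := by lia
  rw [e₁, e₂, e₃, e₄, e₅, e₆, e₇] at key
  exact key hv

theorem MulChar.pow_ne_one_of_apply_eq_I {F : Type*} [Field F] {χ : MulChar F ℂ} {g : F}
    (hg : χ g = Complex.I) {n : ℕ} (hn : n % 4 ≠ 0) : χ ^ n ≠ 1 := by
  intro h
  have hg0 : g ≠ 0 := by
    rintro rfl
    rw [MulChar.map_zero] at hg
    exact Complex.I_ne_zero hg.symm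
  have h' := congrArg (fun ψ : MulChar F ℂ => ψ g) h
  simp only [MulChar.one_apply hg0.isUnit, MulChar.pow_apply' _ (show n ≠ 0 by lia), hg] at h'
  rw [← Nat.div_add_mod n 4, pow_add, pow_mul, Complex.I_pow_four, one_pow, one_mul] at h'
  have : n % 4 = 1 ∨ n % 4 = 2 ∨ n % 4 = 3 := by lia
  rcases this with e | e | e <;> rw [e] at h' <;> have := congrArg Complex.re h' <;>
    norm_num at this

theorem MulChar.pow_apply_eq_I_pow {F : Type*} [Field F] {χ : MulChar F ℂ} {c : F → ℕ}
    (hχ : ∀ x, x ≠ 0 → χ x = Complex.I ^ c x) {x : F} (hx : x ≠ 0) {n : ℕ} (hn : n % 4 ≠ 0) :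
    (χ ^ n) x = Complex.I ^ (n * c x) := by
  rw [MulChar.pow_apply' _ (show n ≠ 0 by lia), hχ x hx, ← pow_mul, mul_comm]

section CharacterSums

variable {F : Type*} [Field F] [Fintype F]

theorem MulChar.norm_apply_le_one (χ : MulChar F ℂ) (x : F) : ‖χ x‖ ≤ 1 := by
  classical
  by_cases hx : x = 0
  · simp [hx]
  · refine (Complex.norm_eq_one_of_mem_rootsOfUnity
      (χ.apply_mem_rootsOfUnity (Units.mk0 x hx))).le.trans' ?_
    simp

theorem norm_jacobiSum_le {χ φ : MulChar F ℂ} (hχ : χ ≠ 1) (hφ : φ ≠ 1) (hχφ : χ * φ ≠ 1) :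
    ‖jacobiSum χ φ‖ ≤ √(Fintype.card F) := by
  have hchar : ringChar ℂ ≠ ringChar F := by
    have := CharP.ringChar_ne_zero_of_finite F
    rw [ringChar.eq ℂ 0]
    exact this.symm
  have hconj : jacobiSum χ⁻¹ φ⁻¹ = (starRingEnd ℂ) (jacobiSum χ φ) := by
    simp only [jacobiSum, map_sum, map_mul, ← MulChar.star_apply', RCLike.star_def]
  have key := jacobiSum_mul_jacobiSum_inv hchar hχ hφ hχφ
  rw [hconj, Complex.mul_conj, Complex.normSq_eq_norm_sq] at key
  refine Real.le_sqrt_of_sq_le (le_of_eq ?_)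
  exact_mod_cast key

theorem norm_sum_mul_sub_one_le {χ φ : MulChar F ℂ} (hχ : χ ≠ 1) (hφ : φ ≠ 1)
    (hχφ : χ * φ ≠ 1) : ‖∑ x, χ x * φ (x - 1)‖ ≤ √(Fintype.card F) := by
  have h : ∑ x, χ x * φ (x - 1) = φ (-1) * jacobiSum χ φ := by
    rw [jacobiSum, Finset.mul_sum]
    refine Finset.sum_congr rfl fun x _ => ?_
    rw [← neg_sub 1 x, ← neg_one_mul, map_mul]
    ring
  rw [h, norm_mul]
  exact (mul_le_of_le_one_left (norm_nonneg _) (φ.norm_apply_le_one _)).trans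
    (norm_jacobiSum_le hχ hφ hχφ)

theorem sum_apply_sq [DecidableEq F] (hF : ringChar F ≠ 2) (h : F → ℂ) :
    ∑ x : F, h (x ^ 2) = ∑ y : F, (1 + (quadraticChar F y : ℂ)) * h y := by
  rw [← Finset.sum_fiberwise_of_maps_to (g := fun x : F => x ^ 2) (t := Finset.univ)
    (fun _ _ => Finset.mem_univ _)]
  refine Finset.sum_congr rfl fun y _ => ?_
  rw [Finset.sum_congr rfl (g := fun _ => h y) (fun x hx => by rw [(Finset.mem_filter.1 hx).2]),
    Finset.sum_const, nsmul_eq_mul]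
  congr 1
  have := quadraticChar_card_sqrts hF y
  rw [add_comm]
  simp only [Set.toFinset_ofPred] at this
  exact_mod_cast congrArg (Int.cast : ℤ → ℂ) this

theorem norm_sum_quartic_le {χ η : MulChar F ℂ} (hF : ringChar F ≠ 2)
    (hη : η ^ 2 = χ) {g : F} (hg : χ g = Complex.I) (hχ : ∀ x, x ≠ 0 → χ x ^ 4 = 1)
    (hsq : ∀ x, x ≠ 0 → χ x ^ 2 = 1 → IsSquare x) :
    ‖∑ x, (χ ^ 2) (x * (x ^ 4 - 1))‖ ≤ 4 * √(Fintype.card F) := by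
  classical
  have hg0 : g ≠ 0 := by
    rintro rfl
    rw [MulChar.map_zero] at hg
    exact Complex.I_ne_zero hg.symm
  have hχη : ∀ x, χ x = η x ^ 2 := fun x => by rw [← hη, MulChar.pow_apply' _ two_ne_zero]
  have hηg : η g ^ 2 = Complex.I := by rw [← hχη, hg]
  have hquad : ∀ y, (quadraticChar F y : ℂ) = χ y ^ 2 := by
    intro y
    by_cases hy : y = 0
    · rw [hy, MulChar.map_zero, MulChar.map_zero, Int.cast_zero, zero_pow two_ne_zero]
    by_cases hs : IsSquare y
    · rw [(quadraticChar_one_iff_isSquare hy).2 hs]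
      obtain ⟨z, rfl⟩ := hs
      have hz : z ≠ 0 := fun h => hy (by simp [h])
      rw [map_mul, ← pow_two, ← pow_mul, hχ z hz, Int.cast_one]
    · rw [quadraticChar_neg_one_iff_not_isSquare.2 hs]
      have h : (χ y ^ 2 - 1) * (χ y ^ 2 + 1) = 0 := by linear_combination hχ y hy
      rcases mul_eq_zero.1 h with h | h
      · exact (hs (hsq y hy (sub_eq_zero.1 h))).elim
      · push_cast
        linear_combination -h
  have hne : ∀ n, n % 4 ≠ 0 → η ^ n ≠ 1 := by
    intro n hn h
    refine MulChar.pow_ne_one_of_apply_eq_I hg hn ?_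
    rw [← hη, ← pow_mul, mul_comm, pow_mul, h, one_pow]
  have hne' : η ^ 4 ≠ 1 := by
    intro h
    have h' := congrArg (fun ψ : MulChar F ℂ => ψ g) h
    simp only [MulChar.one_apply hg0.isUnit, MulChar.pow_apply' _ (show 4 ≠ 0 by lia)] at h'
    rw [show 4 = 2 * 2 from rfl, pow_mul, hηg, Complex.I_sq] at h'
    norm_num at h'
  have h₁ : ∀ x : F, (χ ^ 2) (x * (x ^ 4 - 1)) =
      (fun y => η (y ^ 2) * (η ^ 4) (y ^ 2 - 1)) (x ^ 2) := by
    intro x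
    simp only [← hη, ← pow_mul, map_mul, map_pow, MulChar.pow_apply' _ (show 4 ≠ 0 by lia),
      Nat.reduceMul, mul_pow]
  have h₂ : ∀ y : F, (1 + (quadraticChar F y : ℂ)) * (η (y ^ 2) * (η ^ 4) (y ^ 2 - 1)) =
      (fun z => (1 + χ z) * (η z * (η ^ 4) (z - 1))) (y ^ 2) := by
    intro y
    simp only [hquad, map_pow]
  have hsum : ∑ x, (χ ^ 2) (x * (x ^ 4 - 1)) =
      ∑ j ∈ Finset.range 4, ∑ z, (η ^ (2 * j + 1)) z * (η ^ 4) (z - 1) := by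
    rw [Finset.sum_congr rfl fun x _ => h₁ x,
      sum_apply_sq hF (fun y => η (y ^ 2) * (η ^ 4) (y ^ 2 - 1)),
      Finset.sum_congr rfl fun y _ => h₂ y,
      sum_apply_sq hF (fun z => (1 + χ z) * (η z * (η ^ 4) (z - 1))), Finset.sum_comm]
    refine Finset.sum_congr rfl fun z _ => ?_
    rw [← Finset.sum_mul, hquad, hχη]
    simp only [Finset.sum_range_succ, Finset.sum_range_zero,
      fun j => MulChar.pow_apply' η (Nat.succ_ne_zero (2 * j))]
    ring
  rw [hsum]
  refine (norm_sum_le _ _).trans ((Finset.sum_le_card_nsmul _ _ (√(Fintype.card F)) ?_).trans ?_)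
  · intro j _
    refine norm_sum_mul_sub_one_le (hne _ (by lia)) hne' ?_
    rw [← pow_add]
    exact hne _ (by lia)
  · simp

/-- A discrete logarithm modulo four on a finite field, along with the quartic character it
determines. -/
theorem exists_quartic_character (h4 : 4 ∣ Fintype.card F - 1) :
    ∃ (χ : MulChar F ℂ) (c : F → ℕ), (∀ x, c x < 4) ∧
      (∀ x y, x ≠ 0 → y ≠ 0 → c (x * y) = (c x + c y) % 4) ∧
      (∀ x, x ≠ 0 → χ x = Complex.I ^ c x) ∧
      (∀ x, x ≠ 0 → x ^ ((Fintype.card F - 1) / 4) = 1 → c x = 0) ∧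
      (∀ x, x ≠ 0 → χ x ^ 2 = 1 → IsSquare x) ∧
      (∃ g, χ g = Complex.I) ∧
      (8 ∣ Fintype.card F - 1 → ∃ η : MulChar F ℂ, η ^ 2 = χ) ∧
      (∀ x, x ≠ 0 → c x = 0 → ∃ y, y ^ 4 = x) := by
  classical
  obtain ⟨g, hg⟩ := IsCyclic.exists_generator (α := Fˣ)
  have hcard : Fintype.card Fˣ = Fintype.card F - 1 := Fintype.card_units F
  have hchar : ∀ z : ℂ, z ^ (Fintype.card F - 1) = 1 → ∃ ψ : MulChar F ℂ, ψ g = z := by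
    intro z hz
    have hz0 : z ≠ 0 := by
      rintro rfl
      rw [zero_pow (by have := Fintype.one_lt_card (α := F); lia)] at hz
      exact zero_ne_one hz
    have hmem : Units.mk0 z hz0 ∈ rootsOfUnity (Fintype.card Fˣ) ℂ := by
      rw [mem_rootsOfUnity, hcard]
      ext
      simpa using hz
    exact ⟨MulChar.ofRootOfUnity hmem hg, by rw [MulChar.ofRootOfUnity_spec]; rfl⟩
  have horder : orderOf g = Fintype.card F - 1 := by
    rw [orderOf_eq_card_of_forall_mem_zpowers hg, Nat.card_eq_fintype_card, hcard]
  have hlog : ∀ x : F, ∃ m : ℕ, x ≠ 0 → x = (g : F) ^ m := by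
    intro x
    by_cases hx : x = 0
    · exact ⟨0, fun h => (h hx).elim⟩
    · obtain ⟨m, hm⟩ := mem_powers_iff_mem_zpowers.2 (hg (Units.mk0 x hx))
      exact ⟨m, fun _ => by simpa using (congrArg Units.val hm).symm⟩
  choose l hl using hlog
  have hinj : ∀ m n : ℕ, (g : F) ^ m = (g : F) ^ n → m % 4 = n % 4 := by
    intro m n h
    have : g ^ m = g ^ n := by ext; simpa using h
    rw [pow_eq_pow_iff_modEq, horder] at this
    exact this.of_dvd h4
  have hI : ∀ m : ℕ, Complex.I ^ (m % 4) = Complex.I ^ m := fun m => by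
    conv_rhs => rw [← Nat.div_add_mod m 4, pow_add, pow_mul, Complex.I_pow_four, one_pow, one_mul]
  obtain ⟨χ, hχ⟩ := hchar Complex.I (by
    obtain ⟨m, hm⟩ := h4
    rw [hm, pow_mul, Complex.I_pow_four, one_pow])
  have hχl : ∀ x, x ≠ 0 → χ x = Complex.I ^ l x := fun x hx => by
    conv_lhs => rw [hl x hx, map_pow, hχ]
  refine ⟨χ, fun x => l x % 4, fun x => Nat.mod_lt _ (by norm_num), ?_, ?_, ?_, ?_, ⟨g, hχ⟩, ?_, ?_⟩
  · intro x y hx hy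
    rw [← Nat.add_mod]
    apply hinj
    rw [← hl _ (mul_ne_zero hx hy), pow_add, ← hl x hx, ← hl y hy]
  · intro x hx
    rw [hI, hχl x hx]
  · intro x hx h
    rw [hl x hx, ← pow_mul] at h
    have h' : g ^ (l x * ((Fintype.card F - 1) / 4)) = 1 := by ext; simpa using h
    rw [← orderOf_dvd_iff_pow_eq_one, horder] at h'
    obtain ⟨M, hM⟩ := h4
    have hpos : 0 < M := by have := Fintype.one_lt_card (α := F); lia
    rw [hM, Nat.mul_div_cancel_left _ (by norm_num)] at h'
    exact Nat.mod_eq_zero_of_dvd (Nat.dvd_of_mul_dvd_mul_right hpos h')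
  · intro x hx h
    rw [hχl x hx, ← pow_mul, mul_comm, pow_mul, Complex.I_sq] at h
    have heven : Even (l x) := by
      by_contra hodd
      rw [Nat.not_even_iff_odd] at hodd
      rw [hodd.neg_one_pow] at h
      norm_num at h
    rw [hl x hx]
    exact heven.isSquare_pow _
  · rintro ⟨m, hm⟩
    obtain ⟨z, hz⟩ := IsAlgClosed.exists_pow_nat_eq Complex.I (n := 2) (by norm_num)
    obtain ⟨η, hη⟩ := hchar z (by
      rw [hm, pow_mul, show 8 = 2 * 4 from rfl, pow_mul z, hz, Complex.I_pow_four, one_pow])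
    refine ⟨η, (MulChar.eq_iff hg _ _).2 ?_⟩
    rw [MulChar.pow_apply_coe, hη, hz, hχ]
  · intro x hx h
    refine ⟨(g : F) ^ (l x / 4), ?_⟩
    rw [← pow_mul, Nat.div_mul_cancel (Nat.dvd_of_mod_eq_zero h), ← hl x hx]

end CharacterSums

section Octahedron

variable {F : Type*} [Field F]

/-- A function on a field that behaves like a discrete logarithm modulo four. -/
structure IsLogModFour (c : F → ℕ) : Prop where
  lt : ∀ x, c x < 4
  mul : ∀ x y, x ≠ 0 → y ≠ 0 → c (x * y) = (c x + c y) % 4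

/-- The profile of a field element. -/
def profile (c : F → ℕ) (i x : F) : Profile := ⟨c x, c (x - 1), c (x + 1), c (x - i), c (x + i)⟩

variable {c : F → ℕ} {i x : F}

namespace IsLogModFour

theorem div (hc : IsLogModFour c) {y z : F} (hx : x ≠ 0) (hy : y ≠ 0) (h : z * y = x) :
    c z = (c x + 3 * c y) % 4 := by
  have hz : z ≠ 0 := by rintro rfl; exact hx (by rw [← h, zero_mul])
  have hm := hc.mul z y hz hy
  have := hc.lt z
  rw [h] at hm
  lia

theorem one (hc : IsLogModFour c) : c 1 = 0 := by
  have h := hc.mul 1 1 one_ne_zero one_ne_zero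
  have := hc.lt 1
  rw [mul_one] at h
  lia

theorem neg_one (hc : IsLogModFour c) (hi : i ^ 2 = -1) : c (-1) = 2 * c i % 4 := by
  have hi0 : i ≠ 0 := by rintro rfl; simp at hi
  rw [← hi, pow_two, hc.mul i i hi0 hi0, two_mul]

theorem neg_im (hc : IsLogModFour c) (hi : i ^ 2 = -1) : c (-i) = 3 * c i % 4 := by
  have hi0 : i ≠ 0 := by rintro rfl; simp at hi
  rw [← neg_one_mul, hc.mul _ i (by simp) hi0, hc.neg_one hi]
  lia

end IsLogModFour

theorem one_add_im_ne_zero (hi : i ^ 2 = -1) (h2 : (2 : F) ≠ 0) : 1 + i ≠ 0 := fun h =>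
  h2 (by linear_combination (1 - i) * h + hi)

theorem one_sub_im_ne_zero (hi : i ^ 2 = -1) (h2 : (2 : F) ≠ 0) : 1 - i ≠ 0 := fun h =>
  h2 (by linear_combination (1 + i) * h + hi)

theorem IsLogModFour.one_sub_im (hc : IsLogModFour c) (hi : i ^ 2 = -1) (h2 : (2 : F) ≠ 0) :
    c (1 - i) = (c (1 + i) + 3 * c i) % 4 := by
  have hi0 : i ≠ 0 := by rintro rfl; simp at hi
  exact hc.div (one_add_im_ne_zero hi h2) hi0 (by linear_combination -hi)

theorem IsLogModFour.two (hc : IsLogModFour c) (hi : i ^ 2 = -1) (h2 : (2 : F) ≠ 0) :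
    c 2 = (2 * c (1 + i) + 3 * c i) % 4 := by
  have h : (2 : F) = (1 + i) * (1 - i) := by linear_combination hi
  rw [h, hc.mul _ _ (one_add_im_ne_zero hi h2) (one_sub_im_ne_zero hi h2), hc.one_sub_im hi h2]
  lia

variable [Fintype F] [DecidableEq F]

/-- The complement of the finite vertices of the octahedron. -/
def nonVertices (i : F) : Finset F := {0, 1, -1, i, -i}ᶜ

theorem mem_nonVertices : x ∈ nonVertices i ↔
    x ≠ 0 ∧ x - 1 ≠ 0 ∧ x + 1 ≠ 0 ∧ x - i ≠ 0 ∧ x + i ≠ 0 := by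
  simp only [nonVertices, Finset.mem_compl, Finset.mem_insert, Finset.mem_singleton, not_or,
    sub_ne_zero, ne_eq, ← eq_neg_iff_add_eq_zero]

theorem card_sub_five_le_card_nonVertices (i : F) :
    (Fintype.card F : ℝ) - 5 ≤ (nonVertices i).card := by
  have h := Finset.card_add_card_compl ({0, 1, -1, i, -i} : Finset F)
  have h5 : ({0, 1, -1, i, -i} : Finset F).card ≤ 5 := Finset.card_le_five
  rw [sub_le_iff_le_add]
  unfold nonVertices
  exact_mod_cast (by lia)

theorem mul_im_mem (hi : i ^ 2 = -1) (hx : x ∈ nonVertices i) : i * x ∈ nonVertices i := by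
  have hi0 : i ≠ 0 := by rintro rfl; simp at hi
  rw [mem_nonVertices] at *
  obtain ⟨h₀, h₁, h₂, h₃, h₄⟩ := hx
  refine ⟨mul_ne_zero hi0 h₀, ?_, ?_, ?_, ?_⟩
  · rw [show i * x - 1 = i * (x + i) by linear_combination -hi]; exact mul_ne_zero hi0 h₄
  · rw [show i * x + 1 = i * (x - i) by linear_combination hi]; exact mul_ne_zero hi0 h₃
  · rw [show i * x - i = i * (x - 1) by ring]; exact mul_ne_zero hi0 h₁
  · rw [show i * x + i = i * (x + 1) by ring]; exact mul_ne_zero hi0 h₂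

theorem profile_mul_im (hc : IsLogModFour c) (hi : i ^ 2 = -1) (hx : x ∈ nonVertices i) :
    profile c i (i * x) = (profile c i x).rot (c i) := by
  have hi0 : i ≠ 0 := by rintro rfl; simp at hi
  rw [mem_nonVertices] at hx
  obtain ⟨h₀, h₁, h₂, h₃, h₄⟩ := hx
  simp only [profile, Profile.rot, Profile.mk.injEq]
  refine ⟨?_, ?_, ?_, ?_, ?_⟩
  · rw [hc.mul _ _ hi0 h₀, add_comm]
  · rw [show i * x - 1 = i * (x + i) by linear_combination -hi, hc.mul _ _ hi0 h₄, add_comm]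
  · rw [show i * x + 1 = i * (x - i) by linear_combination hi, hc.mul _ _ hi0 h₃, add_comm]
  · rw [show i * x - i = i * (x - 1) by ring, hc.mul _ _ hi0 h₁, add_comm]
  · rw [show i * x + i = i * (x + 1) by ring, hc.mul _ _ hi0 h₂, add_comm]

theorem inv_mem (hi : i ^ 2 = -1) (hx : x ∈ nonVertices i) : x⁻¹ ∈ nonVertices i := by
  rw [mem_nonVertices] at *
  obtain ⟨h₀, h₁, h₂, h₃, h₄⟩ := hx
  have e := inv_mul_cancel₀ h₀
  refine ⟨inv_ne_zero h₀, fun h => h₁ ?_, fun h => h₂ ?_, fun h => h₄ ?_, fun h => h₃ ?_⟩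
  · linear_combination -x * h + e
  · linear_combination x * h - e
  · linear_combination i * x * h + x * hi - i * e
  · linear_combination -i * x * h + x * hi + i * e

theorem profile_inv (hc : IsLogModFour c) (hi : i ^ 2 = -1) (hx : x ∈ nonVertices i) :
    profile c i x⁻¹ = (profile c i x).inv (c i) := by
  have hi0 : i ≠ 0 := by rintro rfl; simp at hi
  rw [mem_nonVertices] at hx
  obtain ⟨h₀, h₁, h₂, h₃, h₄⟩ := hx
  have e := inv_mul_cancel₀ h₀
  have hn : (-1 : F) ≠ 0 := by simp
  simp only [profile, Profile.inv, Profile.mk.injEq]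
  refine ⟨?_, ?_, ?_, ?_, ?_⟩
  · rw [hc.div one_ne_zero h₀ e, hc.one, zero_add]
  · rw [hc.div (x := -1 * (x - 1)) (mul_ne_zero hn h₁) h₀ (by linear_combination e),
      hc.mul _ _ hn h₁, hc.neg_one hi]
    lia
  · rw [hc.div (x := x + 1) h₂ h₀ (by linear_combination e)]
  · rw [hc.div (x := -i * (x + i)) (mul_ne_zero (neg_ne_zero.2 hi0) h₄) h₀
      (by linear_combination e + hi), hc.mul _ _ (neg_ne_zero.2 hi0) h₄, hc.neg_im hi]
    lia
  · rw [hc.div (x := i * (x - i)) (mul_ne_zero hi0 h₃) h₀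
      (by linear_combination e + hi), hc.mul _ _ hi0 h₃]
    lia

theorem cayley_mem (hi : i ^ 2 = -1) (h2 : (2 : F) ≠ 0) (hx : x ∈ nonVertices i) :
    (x + 1) / (x - 1) ∈ nonVertices i := by
  rw [mem_nonVertices] at *
  obtain ⟨h₀, h₁, h₂, h₃, h₄⟩ := hx
  have e := div_mul_cancel₀ (x + 1) h₁
  refine ⟨div_ne_zero h₂ h₁, fun h => h2 ?_, fun h => mul_ne_zero h2 h₀ ?_,
    fun h => mul_ne_zero (one_sub_im_ne_zero hi h2) h₄ ?_,
    fun h => mul_ne_zero (one_add_im_ne_zero hi h2) h₃ ?_⟩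
  · linear_combination (x - 1) * h - e
  · linear_combination (x - 1) * h - e
  · linear_combination (x - 1) * h - e - hi
  · linear_combination (x - 1) * h - e - hi

theorem profile_cayley (hc : IsLogModFour c) (hi : i ^ 2 = -1) (h2 : (2 : F) ≠ 0)
    (hx : x ∈ nonVertices i) :
    profile c i ((x + 1) / (x - 1)) = (profile c i x).cayley (c i) (c (1 + i)) := by
  rw [mem_nonVertices] at hx
  obtain ⟨h₀, h₁, h₂, h₃, h₄⟩ := hx
  have e := div_mul_cancel₀ (x + 1) h₁
  have ha := one_add_im_ne_zero hi h2
  have hs := one_sub_im_ne_zero hi h2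
  simp only [profile, Profile.cayley, Profile.mk.injEq]
  refine ⟨?_, ?_, ?_, ?_, ?_⟩
  · rw [hc.div h₂ h₁ e]
  · rw [hc.div h2 h₁ (by linear_combination e), hc.two hi h2]
    lia
  · rw [hc.div (x := 2 * x) (mul_ne_zero h2 h₀) h₁ (by linear_combination e), hc.mul _ _ h2 h₀,
      hc.two hi h2]
    lia
  · rw [hc.div (x := (1 - i) * (x + i)) (mul_ne_zero hs h₄) h₁ (by linear_combination e + hi),
      hc.mul _ _ hs h₄, hc.one_sub_im hi h2]
    lia
  · rw [hc.div (x := (1 + i) * (x - i)) (mul_ne_zero ha h₃) h₁ (by linear_combination e + hi),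
      hc.mul _ _ ha h₃]
    lia

theorem sum_mul_im (hi : i ^ 2 = -1) (G : F → ℤ) :
    ∑ x ∈ nonVertices i, G (i * x) = ∑ x ∈ nonVertices i, G x := by
  refine Finset.sum_nbij' (fun x => i * x) (fun x => i * (i * (i * x)))
    (fun x hx => mul_im_mem hi hx)
    (fun x hx => mul_im_mem hi (mul_im_mem hi (mul_im_mem hi hx))) ?_ ?_ fun _ _ => rfl
  · intro x _
    linear_combination (i ^ 2 - 1) * x * hi
  · intro x _
    linear_combination (i ^ 2 - 1) * x * hi

theorem sum_inv (hi : i ^ 2 = -1) (G : F → ℤ) :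
    ∑ x ∈ nonVertices i, G x⁻¹ = ∑ x ∈ nonVertices i, G x :=
  Finset.sum_nbij' (fun x => x⁻¹) (fun x => x⁻¹) (fun _ hx => inv_mem hi hx)
    (fun _ hx => inv_mem hi hx) (fun _ _ => inv_inv _) (fun _ _ => inv_inv _) fun _ _ => rfl

theorem sum_cayley (hi : i ^ 2 = -1) (h2 : (2 : F) ≠ 0) (G : F → ℤ) :
    ∑ x ∈ nonVertices i, G ((x + 1) / (x - 1)) = ∑ x ∈ nonVertices i, G x := by
  have hinv : ∀ x ∈ nonVertices i,
      ((x + 1) / (x - 1) + 1) / ((x + 1) / (x - 1) - 1) = x := by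
    intro x hx
    have h := (mem_nonVertices.1 (cayley_mem hi h2 hx)).2.1
    have h₁ := (mem_nonVertices.1 hx).2.1
    rw [div_eq_iff h]
    have e := div_mul_cancel₀ (x + 1) h₁
    linear_combination -e
  exact Finset.sum_nbij' (fun x => (x + 1) / (x - 1)) (fun x => (x + 1) / (x - 1))
    (fun _ hx => cayley_mem hi h2 hx) (fun _ hx => cayley_mem hi h2 hx) hinv hinv fun _ _ => rfl

theorem rotSum_profile (hc : IsLogModFour c) (hi : i ^ 2 = -1) (H : Profile → ℤ)
    (hx : x ∈ nonVertices i) : Profile.rotSum (c i) H (profile c i x) =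
      H (profile c i x) + H (profile c i (i * x)) + H (profile c i (i * (i * x))) +
        H (profile c i (i * (i * (i * x)))) := by
  have hx₁ := mul_im_mem hi hx
  have hx₂ := mul_im_mem hi hx₁
  rw [profile_mul_im hc hi hx₂, profile_mul_im hc hi hx₁, profile_mul_im hc hi hx, Profile.rotSum]

theorem sum_rotSum (hc : IsLogModFour c) (hi : i ^ 2 = -1) (H : Profile → ℤ) :
    ∑ x ∈ nonVertices i, Profile.rotSum (c i) H (profile c i x) =
      4 * ∑ x ∈ nonVertices i, H (profile c i x) := by
  rw [Finset.sum_congr rfl fun x hx => rotSum_profile hc hi H hx]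
  simp only [Finset.sum_add_distrib]
  rw [sum_mul_im hi (fun x => H (profile c i (i * (i * x)))),
    sum_mul_im hi (fun x => H (profile c i (i * x))), sum_mul_im hi (fun x => H (profile c i x))]
  ring

theorem sum_octSum (hc : IsLogModFour c) (hi : i ^ 2 = -1) (h2 : (2 : F) ≠ 0) (H : Profile → ℤ) :
    ∑ x ∈ nonVertices i, Profile.octSum (c i) (c (1 + i)) H (profile c i x) =
      24 * ∑ x ∈ nonVertices i, H (profile c i x) := by
  set R := Profile.rotSum (c i) H
  have h : ∀ x ∈ nonVertices i, Profile.octSum (c i) (c (1 + i)) H (profile c i x) =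
      R (profile c i x) + R (profile c i x⁻¹) + R (profile c i ((x + 1) / (x - 1))) +
        R (profile c i ((i * x + 1) / (i * x - 1))) +
        R (profile c i ((i * (i * x) + 1) / (i * (i * x) - 1))) +
        R (profile c i ((i * (i * (i * x)) + 1) / (i * (i * (i * x)) - 1))) := by
    intro x hx
    have hx₁ := mul_im_mem hi hx
    have hx₂ := mul_im_mem hi hx₁
    have hx₃ := mul_im_mem hi hx₂
    rw [profile_inv hc hi hx, profile_cayley hc hi h2 hx, profile_cayley hc hi h2 hx₁,
      profile_cayley hc hi h2 hx₂, profile_cayley hc hi h2 hx₃, profile_mul_im hc hi hx₂,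
      profile_mul_im hc hi hx₁, profile_mul_im hc hi hx, Profile.octSum]
  rw [Finset.sum_congr rfl h]
  simp only [Finset.sum_add_distrib]
  have hR := sum_rotSum hc hi H
  have hC := sum_cayley hi h2 (fun x => R (profile c i x))
  have h₁ := sum_mul_im hi (fun x => R (profile c i ((x + 1) / (x - 1))))
  have h₂ := sum_mul_im hi (fun x => R (profile c i ((i * x + 1) / (i * x - 1))))
  have h₃ := sum_mul_im hi (fun x => R (profile c i ((i * (i * x) + 1) / (i * (i * x) - 1))))
  have h₄ := sum_inv hi (fun x => R (profile c i x))
  rw [h₃, h₂, h₁, hC, h₄, hR]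
  ring

/-- Every generic point has a trivial entry in its profile. -/
def IsCovered (c : F → ℕ) (i : F) : Prop :=
  ∀ x ∈ nonVertices i, c x = 0 ∨ c (x - 1) = 0 ∨ c (x + 1) = 0 ∨ c (x - i) = 0 ∨ c (x + i) = 0

theorem IsCovered.hit (h : IsCovered c i) (hx : x ∈ nonVertices i) :
    (profile c i x).hit 0 = true := by
  simp only [profile, Profile.hit, Bool.or_eq_true, Nat.beq_eq, or_assoc, add_zero]
  rcases h x hx with h | h | h | h | h <;> simp [h]

theorem Profile.hit_add_of_hit_rot {t k : ℕ} {v : Profile} (h : (v.rot k).hit t = true) :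
    v.hit (t + k) = true := by
  simp only [Profile.rot, Profile.hit, Bool.or_eq_true, Nat.beq_eq, or_assoc] at *
  lia

theorem IsCovered.rotHit (h : IsCovered c i) (hc : IsLogModFour c) (hi : i ^ 2 = -1)
    (hx : x ∈ nonVertices i) : (profile c i x).rotHit (c i) = true := by
  have hx₁ := mul_im_mem hi hx
  have hx₂ := mul_im_mem hi hx₁
  have h₁ := h.hit hx₁
  have h₂ := h.hit hx₂
  have h₃ := h.hit (mul_im_mem hi hx₂)
  rw [profile_mul_im hc hi hx₂, profile_mul_im hc hi hx₁, profile_mul_im hc hi hx] at h₃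
  rw [profile_mul_im hc hi hx₁, profile_mul_im hc hi hx] at h₂
  rw [profile_mul_im hc hi hx] at h₁
  have h₁' := Profile.hit_add_of_hit_rot h₁
  have h₂' := Profile.hit_add_of_hit_rot (Profile.hit_add_of_hit_rot h₂)
  have h₃' := Profile.hit_add_of_hit_rot
    (Profile.hit_add_of_hit_rot (Profile.hit_add_of_hit_rot h₃))
  rw [show 0 + c i = c i by lia] at h₁'
  rw [show 0 + c i + c i = 2 * c i by lia] at h₂'
  rw [show 0 + c i + c i + c i = 3 * c i by lia] at h₃'
  simp only [Profile.rotHit, h.hit hx, h₁', h₂', h₃', Bool.and_self]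

theorem IsCovered.covered (h : IsCovered c i) (hc : IsLogModFour c) (hi : i ^ 2 = -1)
    (h2 : (2 : F) ≠ 0) (hx : x ∈ nonVertices i) :
    Profile.covered (c i) (c (1 + i)) (profile c i x) = true := by
  have hx₁ := mul_im_mem hi hx
  have hx₂ := mul_im_mem hi hx₁
  have hx₃ := mul_im_mem hi hx₂
  simp only [Profile.covered, ← profile_inv hc hi hx, ← profile_mul_im hc hi hx,
    ← profile_mul_im hc hi hx₁, ← profile_mul_im hc hi hx₂, ← profile_cayley hc hi h2 hx,
    ← profile_cayley hc hi h2 hx₁, ← profile_cayley hc hi h2 hx₂, ← profile_cayley hc hi h2 hx₃,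
    h.rotHit hc hi hx, h.rotHit hc hi (inv_mem hi hx), h.rotHit hc hi (cayley_mem hi h2 hx),
    h.rotHit hc hi (cayley_mem hi h2 hx₁), h.rotHit hc hi (cayley_mem hi h2 hx₂),
    h.rotHit hc hi (cayley_mem hi h2 hx₃), Bool.and_self]

theorem IsCovered.le_sum (h : IsCovered c i) (hc : IsLogModFour c) (hi : i ^ 2 = -1)
    (h2 : (2 : F) ≠ 0) :
    (nonVertices i).card * testMargin (c i) (c (1 + i)) ≤
      ∑ x ∈ nonVertices i, testFunction (c i) (c (1 + i)) (profile c i x) := by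
  have key : ∑ _x ∈ nonVertices i, 24 * testMargin (c i) (c (1 + i)) ≤
      ∑ x ∈ nonVertices i, Profile.octSum (c i) (c (1 + i))
        (testFunction (c i) (c (1 + i))) (profile c i x) :=
    Finset.sum_le_sum fun x hx => testFunction_octSum (hc.lt _) (hc.lt _) (hc.lt _) (hc.lt _)
      (hc.lt _) (hc.lt _) (hc.lt _) (h.covered hc hi h2 hx)
  rw [sum_octSum hc hi h2, Finset.sum_const, nsmul_eq_mul] at key
  linarith

end Octahedron

theorem re_I_pow (n : ℕ) : (Complex.I ^ n).re = quarterCos n := by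
  rw [quarterCos, ← Nat.div_add_mod n 4, pow_add, pow_mul, Complex.I_pow_four, one_pow, one_mul]
  have : n % 4 = 0 ∨ n % 4 = 1 ∨ n % 4 = 2 ∨ n % 4 = 3 := by lia
  rcases this with e | e | e | e <;> simp [e, Complex.I_pow_three]

section Estimates

variable {F : Type*} [Field F] [Fintype F] [DecidableEq F] {χ : MulChar F ℂ} {c : F → ℕ} {i g : F}

theorem abs_sum_nonVertices_le {f : F → ℂ} {u : F → ℤ} {B : ℝ} (hf : ∀ x, ‖f x‖ ≤ 1)
    (hB : ‖∑ x, f x‖ ≤ B) (hu : ∀ x ∈ nonVertices i, (f x).re = u x) :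
    |((∑ x ∈ nonVertices i, u x : ℤ) : ℝ)| ≤ B + 5 := by
  have h₁ : ((∑ x ∈ nonVertices i, u x : ℤ) : ℝ) = (∑ x ∈ nonVertices i, f x).re := by
    rw [Complex.re_sum, Int.cast_sum]
    exact Finset.sum_congr rfl fun x hx => (hu x hx).symm
  have h₂ := Finset.sum_add_sum_compl ({0, 1, -1, i, -i} : Finset F) f
  rw [← eq_sub_iff_add_eq'] at h₂
  have h₃ : ‖∑ x ∈ ({0, 1, -1, i, -i} : Finset F), f x‖ ≤ 5 := by
    refine (norm_sum_le_of_le _ fun x _ => hf x).trans ?_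
    have h5 : ({0, 1, -1, i, -i} : Finset F).card ≤ 5 := Finset.card_le_five
    rw [Finset.sum_const, nsmul_eq_mul, mul_one]
    exact_mod_cast h5
  rw [h₁, nonVertices, h₂]
  exact (Complex.abs_re_le_norm _).trans ((norm_sub_le _ _).trans (add_le_add hB h₃))

theorem abs_sum_linear_le (hχ : ∀ x, x ≠ 0 → χ x = Complex.I ^ c x) (hg : χ g = Complex.I) {a : F}
    (ha : ∀ x ∈ nonVertices i, x - a ≠ 0) {n : ℕ} (hn : n % 4 ≠ 0) (t : ℕ) :
    |((∑ x ∈ nonVertices i, quarterCos (n * c (x - a) + t) : ℤ) : ℝ)| ≤ 5 := by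
  have hshift : ∑ x, (χ ^ n) (x - a) = ∑ x, (χ ^ n) x :=
    Equiv.sum_comp (Equiv.subRight a) fun x => (χ ^ n) x
  have hsum : ∑ x, Complex.I ^ t * (χ ^ n) (x - a) = 0 := by
    rw [← Finset.mul_sum, hshift,
      MulChar.sum_eq_zero_of_ne_one (MulChar.pow_ne_one_of_apply_eq_I hg hn), mul_zero]
  rw [← zero_add (5 : ℝ)]
  refine abs_sum_nonVertices_le (f := fun x => Complex.I ^ t * (χ ^ n) (x - a)) (fun x => ?_)
    (by rw [hsum, norm_zero]) fun x hx => ?_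
  · simpa using (χ ^ n).norm_apply_le_one (x - a)
  · rw [MulChar.pow_apply_eq_I_pow hχ (ha x hx) hn, ← pow_add, add_comm, re_I_pow]

theorem abs_sum_quadratic_le (hχ : ∀ x, x ≠ 0 → χ x = Complex.I ^ c x) (hg : χ g = Complex.I)
    {n : ℕ} (hn : n % 4 ≠ 0) (hn' : (n + 1) % 4 ≠ 0) (t : ℕ) :
    |((∑ x ∈ nonVertices i, quarterCos (c x + n * c (x - 1) + t) : ℤ) : ℝ)| ≤
      √(Fintype.card F) + 5 := by
  have h1 : χ ≠ 1 := by simpa using MulChar.pow_ne_one_of_apply_eq_I hg (n := 1) (by norm_num)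
  refine abs_sum_nonVertices_le (f := fun x => Complex.I ^ t * (χ x * (χ ^ n) (x - 1)))
    (fun x => ?_) ?_ fun x hx => ?_
  · simpa using mul_le_one₀ (χ.norm_apply_le_one x) (norm_nonneg _)
      ((χ ^ n).norm_apply_le_one (x - 1))
  · rw [← Finset.mul_sum, norm_mul, norm_pow, Complex.norm_I, one_pow, one_mul]
    exact norm_sum_mul_sub_one_le h1 (MulChar.pow_ne_one_of_apply_eq_I hg hn)
      (by rw [← pow_succ']; exact MulChar.pow_ne_one_of_apply_eq_I hg hn')
  · obtain ⟨h₀, h₁, -⟩ := mem_nonVertices.1 hx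
    rw [hχ x h₀, MulChar.pow_apply_eq_I_pow hχ h₁ hn, ← pow_add, ← pow_add, add_comm, re_I_pow]

theorem abs_sum_quartic_le {η : MulChar F ℂ} (hχ : ∀ x, x ≠ 0 → χ x = Complex.I ^ c x)
    (hg : χ g = Complex.I) (hi : i ^ 2 = -1) (hF : ringChar F ≠ 2) (hη : η ^ 2 = χ)
    (hsq : ∀ x, x ≠ 0 → χ x ^ 2 = 1 → IsSquare x) :
    |((∑ x ∈ nonVertices i,
        quarterCos (2 * (c x + c (x - 1) + c (x + 1) + c (x - i) + c (x + i))) : ℤ) : ℝ)| ≤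
      4 * √(Fintype.card F) + 5 := by
  refine abs_sum_nonVertices_le (fun x => (χ ^ 2).norm_apply_le_one _)
    (norm_sum_quartic_le hF hη hg (fun x hx => ?_) hsq) fun x hx => ?_
  · rw [hχ x hx, ← pow_mul, mul_comm, pow_mul, Complex.I_pow_four, one_pow]
  · obtain ⟨h₀, h₁, h₂, h₃, h₄⟩ := mem_nonVertices.1 hx
    rw [show x * (x ^ 4 - 1) = x * (x - 1) * (x + 1) * (x - i) * (x + i) by
      linear_combination x * (x ^ 2 - 1) * hi, MulChar.pow_apply' _ two_ne_zero]
    simp only [map_mul, hχ _ h₀, hχ _ h₁, hχ _ h₂, hχ _ h₃, hχ _ h₄, ← pow_add]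
    rw [← pow_mul, mul_comm, re_I_pow]

end Estimates

theorem isCovered_of_forall_eq_add {F : Type*} [Field F] [Fintype F] [DecidableEq F] {c : F → ℕ}
    {i : F} {m : ℕ} (hi : i ^ 2 = -1) (hc : ∀ x, x ≠ 0 → x ^ m = 1 → c x = 0)
    (h : ∀ γ : F, ∃ a b : F, a ^ 5 = a ∧ b ^ (m + 1) = b ∧ a + b = γ) : IsCovered c i := by
  intro x hx
  obtain ⟨h₀, h₁, h₂, h₃, h₄⟩ := mem_nonVertices.1 hx
  obtain ⟨a, b, ha, hb, rfl⟩ := h x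
  have hcb : b ≠ 0 → c b = 0 := fun hb0 =>
    hc b hb0 (mul_right_cancel₀ hb0 (by rw [← pow_succ, hb, one_mul]))
  have ha' : a * ((a - 1) * ((a + 1) * ((a - i) * (a + i)))) = 0 := by
    linear_combination ha - a * (a ^ 2 - 1) * hi
  have key : ∀ y, y ≠ 0 → y = b → c y = 0 := fun y hy e => e ▸ hcb (e ▸ hy)
  rcases mul_eq_zero.1 ha' with e | ha'
  · exact .inl (key _ h₀ (by linear_combination e))
  rcases mul_eq_zero.1 ha' with e | ha'
  · exact .inr (.inl (key _ h₁ (by linear_combination e)))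
  rcases mul_eq_zero.1 ha' with e | ha'
  · exact .inr (.inr (.inl (key _ h₂ (by linear_combination e))))
  rcases mul_eq_zero.1 ha' with e | e
  · exact .inr (.inr (.inr (.inl (key _ h₃ (by linear_combination e)))))
  · exact .inr (.inr (.inr (.inr (key _ h₄ (by linear_combination e)))))

theorem eight_dvd_card_sub_one {F : Type*} [Field F] [Fintype F] {i y : F} (h2 : (2 : F) ≠ 0)
    (hi : i ^ 2 = -1) (hy : y ^ 4 = i) : 8 ∣ Fintype.card F - 1 := by
  have h8 : y ^ 8 = -1 := by rw [← hi, ← hy, ← pow_mul]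
  have hy0 : y ≠ 0 := by rintro rfl; simp at h8
  have h16 : orderOf y = 2 ^ (3 + 1) := by
    refine orderOf_eq_prime_pow (fun h => h2 ?_) ?_
    · linear_combination h8 - h
    · linear_combination (y ^ 8 - 1) * h8
  exact (Dvd.intro 2 h16.symm).trans
    (orderOf_dvd_of_pow_eq_one (FiniteField.pow_card_sub_one_eq_one y hy0))

/-- If `q ≡ 1 (mod 4)` is a prime power with `q > 2809` and `n - 1 = (q-1)/4`, then not every
element of the finite field with `q` elements is the sum of a `5`-potent and an
`n`-potent. -/
theorem not_sum_of_five_potent_and_n_potent_d_eq_four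
    (q n : ℕ) (hq : IsPrimePow q) (hq4 : q % 4 = 1) (hq' : 2809 < q)
    (hn : n = (q - 1) / 4 + 1)
    (F : Type*) [Field F] [Fintype F] (hF : Fintype.card F = q) :
    ¬ (∀ γ : F, ∃ a b : F, a ^ 5 = a ∧ b ^ n = b ∧ a + b = γ) := by
  classical
  intro h
  have hring : ringChar F ≠ 2 := fun e => by
    have := FiniteField.even_card_iff_char_two.1 e
    lia
  have h2 : (2 : F) ≠ 0 := Ring.two_ne_zero hring
  obtain ⟨i, hi⟩ : ∃ i : F, i ^ 2 = -1 := by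
    obtain ⟨i, hi⟩ := FiniteField.isSquare_neg_one_iff.2 (show Fintype.card F % 4 ≠ 3 by lia)
    exact ⟨i, by rw [pow_two, ← hi]⟩
  obtain ⟨χ, c, hlt, hmul, hχ, hone, hsq, ⟨g, hg⟩, hη, hfourth⟩ :=
    exists_quartic_character (F := F) (by rw [hF]; lia)
  have hcov : IsCovered c i := isCovered_of_forall_eq_add hi hone (by rwa [hF, ← hn])
  have hle := hcov.le_sum ⟨hlt, hmul⟩ hi h2
  have hcard := card_sub_five_le_card_nonVertices i
  have hr := Real.sq_sqrt (Nat.cast_nonneg (α := ℝ) (Fintype.card F))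
  have hr53 : 53 < √(Fintype.card F : ℝ) := by
    rw [Real.lt_sqrt (by norm_num), hF]
    exact_mod_cast (by lia : 53 ^ 2 < q)
  have hA₀ := fun {n : ℕ} (hn : n % 4 ≠ 0) => abs_le.1 <|
    abs_sum_linear_le hχ hg (i := i) (a := 0)
      (fun x hx => by simpa using (mem_nonVertices.1 hx).1) hn 0
  have hA₁ := fun {n : ℕ} (hn : n % 4 ≠ 0) (t : ℕ) => abs_le.1 <|
    abs_sum_linear_le hχ hg (i := i) (a := 1) (fun x hx => (mem_nonVertices.1 hx).2.1) hn t
  have hB := fun {n : ℕ} (hn : n % 4 ≠ 0) (hn' : (n + 1) % 4 ≠ 0) (t : ℕ) => abs_le.1 <|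
    abs_sum_quadratic_le hχ hg (i := i) hn hn' t
  have z₁ := hA₀ (n := 1) (by norm_num)
  have z₂ := hA₀ (n := 2) (by norm_num)
  have o₁ := hA₁ (n := 1) (by norm_num) 0
  have o₁s := hA₁ (n := 1) (by norm_num) (c (1 + i))
  have o₂ := hA₁ (n := 2) (by norm_num) 0
  have b₁ := hB (n := 1) (by norm_num) (by norm_num) 0
  have b₁s := hB (n := 1) (by norm_num) (by norm_num) (c (1 + i))
  have b₂ := hB (n := 2) (by norm_num) (by norm_num) 0
  simp only [one_mul, sub_zero, add_zero] at z₁ z₂ o₁ o₁s o₂ b₁ b₁s b₂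
  set r := √(Fintype.card F : ℝ)
  set P := nonVertices i
  have hle' : (P.card : ℝ) * testMargin (c i) (c (1 + i)) ≤
      ((∑ x ∈ P, testFunction (c i) (c (1 + i)) (profile c i x) : ℤ) : ℝ) := by
    exact_mod_cast hle
  have hlarge : 53 * r < Fintype.card F := by nlinarith
  by_cases hk0 : c i = 0
  · by_cases hs0 : c (1 + i) = 0
    · obtain ⟨y, hy⟩ := hfourth i (by rintro rfl; simp at hi) hk0
      obtain ⟨η, hη'⟩ := hη (eight_dvd_card_sub_one h2 hi hy)
      have d := abs_le.1 (abs_sum_quartic_le hχ hg hi hring hη' hsq)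
      simp only [testMargin, testFunction, hk0, hs0, profile, Finset.sum_add_distrib,
        ← Finset.mul_sum, and_self, if_true] at hle'
      push_cast at *
      linarith
    · by_cases hs2 : c (1 + i) = 2
      · simp only [testMargin, testFunction, hk0, hs2, profile, Finset.sum_add_distrib,
          Finset.sum_sub_distrib, ← Finset.mul_sum, and_false, if_true, if_false,
          two_ne_zero] at hle'
        push_cast at *
        linarith
      · simp only [testMargin, testFunction, hk0, hs0, hs2, profile, Finset.sum_add_distrib,
          Finset.sum_sub_distrib, ← Finset.mul_sum, and_false, if_true, if_false] at hle'
        push_cast at *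
        linarith
  · by_cases hk2 : c i = 2
    · by_cases hs2 : c (1 + i) % 2 = 0
      · simp only [testMargin, testFunction, hk2, hs2, profile, two_ne_zero, false_and, if_true,
          if_false] at hle'
        push_cast at *
        linarith
      · simp only [testMargin, testFunction, hk2, hs2, profile, Finset.sum_sub_distrib,
          ← Finset.mul_sum, two_ne_zero, false_and, if_true, if_false] at hle'
        push_cast at *
        linarith
    · simp only [testMargin, testFunction, hk0, hk2, false_and, if_false,
        Finset.sum_const_zero] at hle'
      push_cast at hle'
      linarith
end

section
/- Let q be a prime power with q ≡ 1 (mod 4), let ζ be a square root of -1 in F_q, let C_5 = {0, 1, -1, ζ, -ζ}, and let χ₂ be the quadratic character of F_q (the multiplicative character of order 2, extended by χ₂(0) = 0). Then the sum S(2;q,5) = Σ_{γ ∈ F_q \ C_5} Π_{α ∈ C_5} (1 - χ₂(γ - α)) satisfies S(2;q,5) ≥ q - 49√q - 160. -/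
open Finset

section Height

open Polynomial in
/-- A triple of polynomials without a common prime factor generates the unit ideal. -/
theorem exists_bezout_triple {F : Type*} [Field F] (u v w : F[X])
    (h : ∀ p, Prime p → p ∣ u → p ∣ v → p ∣ w → False) :
    ∃ α β γ : F[X], α * u + β * v + γ * w = 1 := by
  classical
  have hco : IsCoprime (EuclideanDomain.gcd u v) w := by
    refine isCoprime_of_prime_dvd ?_ fun p hp h1 h2 =>
      h p hp (h1.trans (EuclideanDomain.gcd_dvd_left u v))
        (h1.trans (EuclideanDomain.gcd_dvd_right u v)) h2
    rintro ⟨h1, rfl⟩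
    rw [EuclideanDomain.gcd_eq_zero_iff] at h1
    exact h X prime_X (by simp [h1.1]) (by simp [h1.2]) (by simp)
  obtain ⟨r, s, hrs⟩ := hco
  refine ⟨r * EuclideanDomain.gcdA u v, r * EuclideanDomain.gcdB u v, s, ?_⟩
  rw [← hrs, EuclideanDomain.gcd_eq_gcd_ab]
  ring

open Polynomial in
/-- Proportional primitive triples of polynomials agree up to a nonzero constant. -/
theorem exists_C_mul_of_proportional {F : Type*} [Field F] {u v w u' v' w' : F[X]}
    (h : ∀ p, Prime p → p ∣ u → p ∣ v → p ∣ w → False)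
    (h' : ∀ p, Prime p → p ∣ u' → p ∣ v' → p ∣ w' → False)
    (huv : u * v' = v * u') (huw : u * w' = w * u') (hvw : v * w' = w * v') :
    ∃ c : F, c ≠ 0 ∧ u' = C c * u ∧ v' = C c * v ∧ w' = C c * w := by
  obtain ⟨α, β, γ, hb⟩ := exists_bezout_triple u v w h
  obtain ⟨α', β', γ', hb'⟩ := exists_bezout_triple u' v' w' h'
  set k := α * u' + β * v' + γ * w' with hk
  have hu : u' = k * u := by
    linear_combination (-u') * hb - β * huv - γ * huw
  have hv : v' = k * v := by
    linear_combination (-v') * hb + α * huv - γ * hvw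
  have hw : w' = k * w := by
    linear_combination (-w') * hb + α * huw + β * hvw
  have hunit : IsUnit k := by
    refine IsUnit.of_mul_eq_one (α' * u + β' * v + γ' * w) ?_
    linear_combination hb' - α' * hu - β' * hv - γ' * hw
  obtain ⟨c, hc, hck⟩ := isUnit_iff.mp hunit
  exact ⟨c, hc.ne_zero, by rw [hck, hu], by rw [hck, hv], by rw [hck, hw]⟩

open Polynomial in
theorem coeff_max_natDegree_ne_zero {F : Type*} [Field F] {f g : F[X]} (h : IsCoprime f g) :
    f.coeff (max f.natDegree g.natDegree) ≠ 0 ∨ g.coeff (max f.natDegree g.natDegree) ≠ 0 := by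
  rcases le_total f.natDegree g.natDegree with hle | hle
  · rw [max_eq_right hle]
    by_cases hg : g = 0
    · subst hg
      have hu : IsUnit f := isCoprime_zero_right.mp h
      have : f.natDegree = 0 := by simpa using hle
      left
      simpa [← this] using hu.ne_zero
    · right; simpa using hg
  · rw [max_eq_left hle]
    by_cases hf : f = 0
    · subst hf
      have hu : IsUnit g := isCoprime_zero_left.mp h
      have : g.natDegree = 0 := by simpa using hle
      right
      simpa [← this] using hu.ne_zero
    · left; simpa using hf

open Polynomial in
theorem not_prime_dvd_duplication_triple {F : Type*} [Field F] (h2 : (2 : F) ≠ 0) {a b : F}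
    (hb : b ≠ 0) (hd : a ^ 2 - 4 * b ≠ 0) {f g : F[X]} (h : IsCoprime f g) (p : F[X])
    (hp : Prime p) (hP : p ∣ (f * X - C b * g) ^ 2)
    (hS : p ∣ 2 * ((f * X + C b * g) * (f + X * g) + 2 * C a * f * X * g))
    (hD : p ∣ (f - X * g) ^ 2) : False := by
  have hC2 : (C (2 : F) : F[X]) = 2 := map_ofNat C 2
  have hC4 : (C (4 : F) : F[X]) = 4 := map_ofNat C 4
  have dD := hp.dvd_of_dvd_pow hD
  have dP := hp.dvd_of_dvd_pow hP
  have unit_of_C : ∀ c : F, c ≠ 0 → ¬ p ∣ C c := fun c hc hpc =>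
    hp.not_isUnit (isUnit_of_dvd_unit hpc (isUnit_C.mpr hc.isUnit))
  have hg : ¬ p ∣ g := fun hg => by
    have hf : p ∣ f := by
      have := dvd_add dD (hg.mul_left X)
      simpa using this
    exact hp.not_isUnit (h.isUnit_of_dvd' hf hg)
  have d1 : p ∣ X ^ 2 - C b := by
    have : p ∣ g * (X ^ 2 - C b) := by
      have := dvd_sub dP (dD.mul_right X)
      convert this using 1; ring
    exact (hp.dvd_or_dvd this).resolve_left hg
  have hX : ¬ p ∣ X := fun hX => unit_of_C b hb (by
    have := dvd_sub (hX.mul_right X) d1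
    convert this using 1; ring)
  have d2 : p ∣ C a * X + C 2 * C b := by
    have : p ∣ C (4 : F) * (X * (g ^ 2 * (C a * X + C 2 * C b))) := by
      have w : p ∣ C (4 : F) * (X * (g ^ 2 * (C a * X + C 2 * C b))) +
          ((f - X * g) * (2 * (X * f + 2 * X^2 * g + C b * g + 2 * C a * X * g)) +
          4 * X * g ^ 2 * (X ^ 2 - C b)) := by
        convert hS using 1
        rw [hC2, hC4]; ring
      refine (dvd_add_left ?_).mp w
      exact dvd_add (dD.mul_right _) (d1.mul_left _)
    have h4 : (4 : F) ≠ 0 := by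
      rw [show (4 : F) = 2 * 2 by norm_num]; exact mul_ne_zero h2 h2
    have := (hp.dvd_or_dvd this).resolve_left (unit_of_C _ h4)
    have := (hp.dvd_or_dvd this).resolve_left hX
    exact (hp.dvd_or_dvd this).resolve_left fun h => hg (hp.dvd_of_dvd_pow h)
  refine unit_of_C (b * (a ^ 2 - 4 * b)) (mul_ne_zero hb hd) ?_
  have := dvd_sub (d2.mul_right (C a * X - C 2 * C b)) (d1.mul_right (C a ^ 2))
  convert this using 1
  rw [C_mul, C_sub, C_pow, C_mul, hC2, hC4]; ring

open Polynomial in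
theorem not_prime_dvd_symm_square_triple {F : Type*} [Field F] {f₁ g₁ f₂ g₂ : F[X]}
    (h₁ : IsCoprime f₁ g₁) (h₂ : IsCoprime f₂ g₂) (p : F[X]) (hp : Prime p) (hFF : p ∣ f₁ * f₂)
    (hFG : p ∣ f₁ * g₂ + f₂ * g₁) (hGG : p ∣ g₁ * g₂) : False := by
  have n1 : ¬ (p ∣ f₁ ∧ p ∣ g₁) := fun ⟨x, y⟩ => hp.not_isUnit (h₁.isUnit_of_dvd' x y)
  have n2 : ¬ (p ∣ f₂ ∧ p ∣ g₂) := fun ⟨x, y⟩ => hp.not_isUnit (h₂.isUnit_of_dvd' x y)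
  rcases hp.dvd_or_dvd hFF with z | z <;> rcases hp.dvd_or_dvd hGG with z' | z'
  · tauto
  · rcases hp.dvd_or_dvd ((dvd_add_right (z.mul_right _)).mp hFG) with y | y <;> tauto
  · rcases hp.dvd_or_dvd ((dvd_add_left (z.mul_right _)).mp hFG) with y | y <;> tauto
  · tauto

theorem false_of_symm_square_eq_zero {F : Type*} [Field F] {x₁ y₁ x₂ y₂ : F}
    (h₁ : x₁ ≠ 0 ∨ y₁ ≠ 0) (h₂ : x₂ ≠ 0 ∨ y₂ ≠ 0) (hx : x₁ * x₂ = 0) (hy : y₁ * y₂ = 0)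
    (hxy : x₁ * y₂ + x₂ * y₁ = 0) : False := by
  rcases mul_eq_zero.mp hx with z | z <;> rcases mul_eq_zero.mp hy with z' | z' <;>
    simp_all

open Polynomial in
/-- The degree form of the parallelogram law: `(f : g)` is the `x`-coordinate of a point `P` on the
twist of `y² = x³ + a x² + b x`, and `(fᵢ : gᵢ)` are those of `P ± Q`, where `Q` has
`x`-coordinate `X`. -/
theorem max_natDegree_add_max_natDegree {F : Type*} [Field F] (h2 : (2 : F) ≠ 0) {a b : F}
    (hb : b ≠ 0) (hd : a ^ 2 - 4 * b ≠ 0) {f g f₁ g₁ f₂ g₂ : F[X]} (h : IsCoprime f g)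
    (h₁ : IsCoprime f₁ g₁) (h₂ : IsCoprime f₂ g₂)
    (hPS : (f * X - C b * g) ^ 2 * (f₁ * g₂ + f₂ * g₁) =
      (2 * ((f * X + C b * g) * (f + X * g) + 2 * C a * f * X * g)) * (f₁ * f₂))
    (hPD : (f * X - C b * g) ^ 2 * (g₁ * g₂) = (f - X * g) ^ 2 * (f₁ * f₂))
    (hSD : (2 * ((f * X + C b * g) * (f + X * g) + 2 * C a * f * X * g)) * (g₁ * g₂) =
      (f - X * g) ^ 2 * (f₁ * g₂ + f₂ * g₁)) :
    max f₁.natDegree g₁.natDegree + max f₂.natDegree g₂.natDegree =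
      2 * max f.natDegree g.natDegree + 2 := by
  obtain ⟨c, hc, e1, e2, e3⟩ := exists_C_mul_of_proportional
    (not_prime_dvd_duplication_triple h2 hb hd h) (not_prime_dvd_symm_square_triple h₁ h₂) hPS hPD hSD
  have t0 := coeff_max_natDegree_ne_zero h
  have t1 := coeff_max_natDegree_ne_zero h₁
  have t2 := coeff_max_natDegree_ne_zero h₂
  set n := max f.natDegree g.natDegree with hn
  set n₁ := max f₁.natDegree g₁.natDegree with hn₁
  set n₂ := max f₂.natDegree g₂.natDegree with hn₂
  have lf : f.natDegree ≤ n := le_max_left _ _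
  have lg : g.natDegree ≤ n := le_max_right _ _
  have lf1 : f₁.natDegree ≤ n₁ := le_max_left _ _
  have lg1 : g₁.natDegree ≤ n₁ := le_max_right _ _
  have lf2 : f₂.natDegree ≤ n₂ := le_max_left _ _
  have lg2 : g₂.natDegree ≤ n₂ := le_max_right _ _
  have lX : (X : F[X]).natDegree ≤ 1 := natDegree_X_le
  have lA : (f * X - C b * g).natDegree ≤ n + 1 := by
    refine (natDegree_sub_le _ _).trans (max_le ?_ ?_)
    · exact natDegree_mul_le_of_le lf lX
    · exact (natDegree_C_mul_le _ _).trans (by omega)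
  have lA' : (f * X + C b * g).natDegree ≤ n + 1 := by
    refine (natDegree_add_le _ _).trans (max_le ?_ ?_)
    · exact natDegree_mul_le_of_le lf lX
    · exact (natDegree_C_mul_le _ _).trans (by omega)
  have lD : (f - X * g).natDegree ≤ n + 1 := by
    refine (natDegree_sub_le _ _).trans (max_le (by omega) ?_)
    exact (natDegree_mul_le_of_le lX lg).trans (by omega)
  have lD' : (f + X * g).natDegree ≤ n + 1 := by
    refine (natDegree_add_le _ _).trans (max_le (by omega) ?_)
    exact (natDegree_mul_le_of_le lX lg).trans (by omega)
  have lP : ((f * X - C b * g) ^ 2).natDegree ≤ 2 * n + 2 :=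
    (natDegree_pow_le_of_le 2 lA).trans (by omega)
  have lDD : ((f - X * g) ^ 2).natDegree ≤ 2 * n + 2 :=
    (natDegree_pow_le_of_le 2 lD).trans (by omega)
  have lS : (2 * ((f * X + C b * g) * (f + X * g) + 2 * C a * f * X * g)).natDegree
      ≤ 2 * n + 2 := by
    have e : (2 * ((f * X + C b * g) * (f + X * g) + 2 * C a * f * X * g)) =
      C 2 * ((f * X + C b * g) * (f + X * g) + C (2 * a) * (f * X * g)) := by
      rw [C_mul, show (C (2 : F) : F[X]) = 2 from map_ofNat C 2]; ring
    rw [e]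
    refine (natDegree_C_mul_le _ _).trans ((natDegree_add_le _ _).trans (max_le ?_ ?_))
    · exact (natDegree_mul_le_of_le lA' lD').trans (by omega)
    · refine (natDegree_C_mul_le _ _).trans ?_
      exact (natDegree_mul_le_of_le (natDegree_mul_le_of_le lf lX) lg).trans (by omega)
  have tP : ((f * X - C b * g) ^ 2).coeff (2 * n + 2) = f.coeff n ^ 2 := by
    rw [show 2 * n + 2 = 2 * (n + 1) by ring, coeff_pow_of_natDegree_le lA, coeff_sub,
      coeff_mul_X, coeff_C_mul, coeff_eq_zero_of_natDegree_lt (show g.natDegree < n + 1 by omega)]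
    simp
  have tD : ((f - X * g) ^ 2).coeff (2 * n + 2) = g.coeff n ^ 2 := by
    rw [show 2 * n + 2 = 2 * (n + 1) by ring, coeff_pow_of_natDegree_le lD, coeff_sub,
      coeff_X_mul, coeff_eq_zero_of_natDegree_lt (show f.natDegree < n + 1 by omega)]
    simp
  have mFF : (f₁ * f₂).coeff (n₁ + n₂) = f₁.coeff n₁ * f₂.coeff n₂ :=
    coeff_mul_add_eq_of_natDegree_le lf1 lf2
  have mGG : (g₁ * g₂).coeff (n₁ + n₂) = g₁.coeff n₁ * g₂.coeff n₂ :=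
    coeff_mul_add_eq_of_natDegree_le lg1 lg2
  have mFG : (f₁ * g₂ + f₂ * g₁).coeff (n₁ + n₂) =
      f₁.coeff n₁ * g₂.coeff n₂ + f₂.coeff n₂ * g₁.coeff n₁ := by
    rw [coeff_add, coeff_mul_add_eq_of_natDegree_le lf1 lg2, add_comm n₁ n₂,
      coeff_mul_add_eq_of_natDegree_le lf2 lg1]
  have lFF : (f₁ * f₂).natDegree ≤ n₁ + n₂ := natDegree_mul_le_of_le lf1 lf2
  have lGG : (g₁ * g₂).natDegree ≤ n₁ + n₂ := natDegree_mul_le_of_le lg1 lg2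
  rcases lt_trichotomy (n₁ + n₂) (2 * n + 2) with hlt | heq | hgt
  · exfalso
    have z1 : f.coeff n = 0 := by
      have := congrArg (fun p => p.coeff (2 * n + 2)) e1
      simp only [coeff_C_mul, tP] at this
      rw [coeff_eq_zero_of_natDegree_lt (by omega)] at this
      simpa [hc] using this
    have z2 : g.coeff n = 0 := by
      have := congrArg (fun p => p.coeff (2 * n + 2)) e3
      simp only [coeff_C_mul, tD] at this
      rw [coeff_eq_zero_of_natDegree_lt (by omega)] at this
      simpa [hc] using this
    tauto
  · exact heq
  · exfalso
    have z1 : f₁.coeff n₁ * f₂.coeff n₂ = 0 := by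
      rw [← mFF, e1, coeff_C_mul, coeff_eq_zero_of_natDegree_lt (by omega), mul_zero]
    have z2 : g₁.coeff n₁ * g₂.coeff n₂ = 0 := by
      rw [← mGG, e3, coeff_C_mul, coeff_eq_zero_of_natDegree_lt (by omega), mul_zero]
    have z3 : f₁.coeff n₁ * g₂.coeff n₂ + f₂.coeff n₂ * g₁.coeff n₁ = 0 := by
      rw [← mFG, e2, coeff_C_mul, coeff_eq_zero_of_natDegree_lt (by omega), mul_zero]
    exact false_of_symm_square_eq_zero t1 t2 z1 z2 z3

/-- The curve `y² = x³ + A x² + B x`. -/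
def twoTorsionCurve {K : Type*} [Field K] (A B : K) : WeierstrassCurve.Affine K where
  a₁ := 0
  a₂ := A
  a₃ := 0
  a₄ := B
  a₆ := 0

namespace twoTorsionCurve

variable {K : Type*} [Field K] {A B : K}

theorem equation_iff {x y : K} :
    (twoTorsionCurve A B).Equation x y ↔ y ^ 2 = x ^ 3 + A * x ^ 2 + B * x := by
  rw [WeierstrassCurve.Affine.equation_iff]
  simp [twoTorsionCurve]

theorem nonsingular (h2 : (2 : K) ≠ 0) (hB : B ≠ 0) (hd : A ^ 2 - 4 * B ≠ 0) {x y : K}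
    (h : y ^ 2 = x ^ 3 + A * x ^ 2 + B * x) : (twoTorsionCurve A B).Nonsingular x y := by
  refine (WeierstrassCurve.Affine.equation_iff_nonsingular_of_Δ_ne_zero ?_).mp
    (equation_iff.mpr h)
  have e : (twoTorsionCurve A B).Δ = 2 ^ 4 * B ^ 2 * (A ^ 2 - 4 * B) := by
    simp only [WeierstrassCurve.Δ, WeierstrassCurve.b₂, WeierstrassCurve.b₄, WeierstrassCurve.b₆,
      WeierstrassCurve.b₈, twoTorsionCurve]
    ring
  rw [e]
  exact mul_ne_zero (mul_ne_zero (pow_ne_zero _ h2) (pow_ne_zero _ hB)) hd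

theorem negY_eq (x y : K) : (twoTorsionCurve A B).negY x y = -y := by
  simp [WeierstrassCurve.Affine.negY, twoTorsionCurve]

theorem addX_eq (x₁ x₂ l : K) : (twoTorsionCurve A B).addX x₁ x₂ l = l ^ 2 - A - x₁ - x₂ := by
  simp [WeierstrassCurve.Affine.addX, twoTorsionCurve]

variable [DecidableEq K]

open WeierstrassCurve.Affine

theorem xRep_add_of_X_ne {x₁ x₂ y₁ y₂ : K} (h₁ : (twoTorsionCurve A B).Nonsingular x₁ y₁)
    (h₂ : (twoTorsionCurve A B).Nonsingular x₂ y₂) (hx : x₁ ≠ x₂) :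
    (Point.some x₁ y₁ h₁ + Point.some x₂ y₂ h₂).xRep =
      ![((y₁ - y₂) / (x₁ - x₂)) ^ 2 - A - x₁ - x₂, 1] := by
  rw [Point.add_of_X_ne hx, Point.xRep_some, addX_eq, slope_of_X_ne hx]

theorem xRep_sub_of_X_ne {x₁ x₂ y₁ y₂ : K} (h₁ : (twoTorsionCurve A B).Nonsingular x₁ y₁)
    (h₂ : (twoTorsionCurve A B).Nonsingular x₂ y₂) (hx : x₁ ≠ x₂) :
    (Point.some x₁ y₁ h₁ - Point.some x₂ y₂ h₂).xRep =
      ![((y₁ + y₂) / (x₁ - x₂)) ^ 2 - A - x₁ - x₂, 1] := by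
  rw [sub_eq_add_neg, Point.neg_some, xRep_add_of_X_ne _ _ hx, negY_eq, sub_neg_eq_add]

theorem xRep_add_self {x y : K} (h2 : (2 : K) ≠ 0) (h : (twoTorsionCurve A B).Nonsingular x y)
    (hy : y ≠ 0) :
    (Point.some x y h + Point.some x y h).xRep =
      ![((3 * x ^ 2 + 2 * A * x + B) / (2 * y)) ^ 2 - A - x - x, 1] := by
  have hy' : y ≠ (twoTorsionCurve A B).negY x y := by
    rw [negY_eq]
    intro e
    exact mul_ne_zero h2 hy (by linear_combination e)
  rw [Point.add_self_of_Y_ne hy', Point.xRep_some, addX_eq, slope_of_Y_ne rfl hy', negY_eq]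
  simp only [twoTorsionCurve]
  congr 5
  ring

theorem add_self_of_Y_eq_zero {x y : K} (h : (twoTorsionCurve A B).Nonsingular x y)
    (hy : y = 0) : Point.some x y h + Point.some x y h = 0 :=
  Point.add_self_of_Y_eq (by rw [negY_eq, hy, neg_zero])

/-- The `x`-coordinates of `P + Q` and `P - Q` determined by those of `P` and `Q`, in homogeneous
form. -/
theorem symm_square_add_sub (h2 : (2 : K) ≠ 0) (P : (twoTorsionCurve A B).Point) {x y : K}
    (h : (twoTorsionCurve A B).Nonsingular x y) {X Z U U' V V' : K}
    (hP : P.xRep = ![X, Z]) (hU : (P + .some x y h).xRep = ![U, U'])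
    (hV : (P - .some x y h).xRep = ![V, V']) :
    (X * x - B * Z) ^ 2 * (U * V' + V * U') =
      (2 * ((X * x + B * Z) * (X + x * Z) + 2 * A * X * x * Z)) * (U * V) ∧
    (X * x - B * Z) ^ 2 * (U' * V') = (X - x * Z) ^ 2 * (U * V) ∧
    (2 * ((X * x + B * Z) * (X + x * Z) + 2 * A * X * x * Z)) * (U' * V') =
      (X - x * Z) ^ 2 * (U * V' + V * U') := by
  have he := equation_iff.mp h.1
  have dbl : ∀ T, (y ≠ 0 → T = ((3 * x ^ 2 + 2 * A * x + B) / (2 * y)) ^ 2 - A - x - x) → y ≠ 0 →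
      (x * x - B) ^ 2 = 2 * ((x * x + B) * (x + x) + 2 * A * x * x) * T := by
    intro T hT hy
    rw [hT hy]
    field_simp
    rw [he]
    ring
  match P, hP with
  | 0, hP =>
    simp only [zero_add, zero_sub, Point.xRep_neg, Point.xRep_some, Point.xRep_zero,
      Matrix.vecCons_inj, and_true] at hP hU hV
    obtain ⟨rfl, rfl⟩ := hP
    obtain ⟨rfl, rfl⟩ := hU
    obtain ⟨rfl, rfl⟩ := hV
    refine ⟨?_, ?_, ?_⟩ <;> ring
  | .some x₁ y₁ h₁, hP =>
    have he₁ := equation_iff.mp h₁.1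
    simp only [Point.xRep_some, Matrix.vecCons_inj, and_true] at hP
    obtain ⟨rfl, rfl⟩ := hP
    by_cases hx : x₁ = x
    · subst hx
      have hyy : (y₁ - y) * (y₁ + y) = 0 := by linear_combination he₁ - he
      by_cases hy : y = 0
      · have hy₁ : y₁ = 0 := by
          subst hy
          simpa using hyy
        subst hy₁
        subst hy
        rw [add_self_of_Y_eq_zero _ rfl, Point.xRep_zero] at hU
        rw [sub_self, Point.xRep_zero] at hV
        simp only [Matrix.vecCons_inj, and_true] at hU hV
        obtain ⟨rfl, rfl⟩ := hU
        obtain ⟨rfl, rfl⟩ := hV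
        refine ⟨?_, ?_, ?_⟩
        · linear_combination 4 * he
        · ring
        · ring
      · rcases mul_eq_zero.mp hyy with e | e
        · obtain rfl : y₁ = y := sub_eq_zero.mp e
          rw [xRep_add_self h2 _ hy] at hU
          rw [sub_self, Point.xRep_zero] at hV
          simp only [Matrix.vecCons_inj, and_true] at hU hV
          obtain ⟨hU, rfl⟩ := hU
          obtain ⟨rfl, rfl⟩ := hV
          have := dbl U (fun _ => hU.symm) hy
          refine ⟨?_, ?_, ?_⟩
          · linear_combination this
          · ring
          · ring
        · have ey : y₁ = -y := eq_neg_of_add_eq_zero_left e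
          have ep : Point.some x₁ y₁ h₁ = - Point.some x₁ y h := by
            rw [Point.neg_some]
            simp only [negY_eq, ey]
          rw [ep, neg_add_cancel, Point.xRep_zero] at hU
          rw [ep, ← neg_add', Point.xRep_neg, xRep_add_self h2 _ hy] at hV
          simp only [Matrix.vecCons_inj, and_true] at hU hV
          obtain ⟨hV, rfl⟩ := hV
          obtain ⟨rfl, rfl⟩ := hU
          have := dbl V (fun _ => hV.symm) hy
          refine ⟨?_, ?_, ?_⟩
          · linear_combination this
          · ring
          · ring
    · rw [xRep_add_of_X_ne _ _ hx] at hU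
      rw [xRep_sub_of_X_ne _ _ hx] at hV
      simp only [Matrix.vecCons_inj, and_true] at hU hV
      obtain ⟨hU, rfl⟩ := hU
      obtain ⟨hV, rfl⟩ := hV
      have hs : x₁ - x ≠ 0 := sub_ne_zero.mpr hx
      have key2 : (x₁ * x - B) ^ 2 = (x₁ - x) ^ 2 * (U * V) := by
        have e1 : (x₁ - x) ^ 2 * U = (y₁ - y) ^ 2 - (A + x₁ + x) * (x₁ - x) ^ 2 := by
          rw [← hU]; field_simp; ring
        have e2 : (x₁ - x) ^ 2 * V = (y₁ + y) ^ 2 - (A + x₁ + x) * (x₁ - x) ^ 2 := by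
          rw [← hV]; field_simp; ring
        refine mul_left_cancel₀ (pow_ne_zero 2 hs) ?_
        have : (x₁ - x) ^ 2 * ((x₁ - x) ^ 2 * (U * V)) =
            ((x₁ - x) ^ 2 * U) * ((x₁ - x) ^ 2 * V) := by ring
        rw [this, e1, e2]
        have : ((y₁ - y) ^ 2 - (A + x₁ + x) * (x₁ - x) ^ 2) *
            ((y₁ + y) ^ 2 - (A + x₁ + x) * (x₁ - x) ^ 2) =
            (y₁ ^ 2 - y ^ 2) ^ 2 - 2 * (y₁ ^ 2 + y ^ 2) * ((A + x₁ + x) * (x₁ - x) ^ 2) +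
              ((A + x₁ + x) * (x₁ - x) ^ 2) ^ 2 := by ring
        rw [this, he, he₁]
        ring
      have key3 : 2 * ((x₁ * x + B) * (x₁ + x) + 2 * A * x₁ * x) =
          (x₁ - x) ^ 2 * (U + V) := by
        rw [← hU, ← hV]
        field_simp
        have : (y₁ - y) ^ 2 + (y₁ + y) ^ 2 = 2 * (y₁ ^ 2 + y ^ 2) := by ring
        linear_combination (-2) * he - 2 * he₁
      refine ⟨?_, ?_, ?_⟩
      · linear_combination (U + V) * key2 - U * V * key3
      · linear_combination key2
      · linear_combination key3

end twoTorsionCurve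

open Polynomial WeierstrassCurve.Affine

/-- The degree of `x / l` as a rational function, where `x` is the `x`-coordinate of a point. -/
noncomputable def xHeight {F : Type*} [Field F] {W : WeierstrassCurve.Affine (RatFunc F)}
    (l : RatFunc F) : W.Point → ℕ
  | 0 => 0
  | .some x _ _ => max (x / l).num.natDegree (x / l).denom.natDegree

theorem exists_isCoprime_xRep {F : Type*} [Field F] {W : WeierstrassCurve.Affine (RatFunc F)}
    {l : RatFunc F} (hl : l ≠ 0) (P : W.Point) :
    ∃ (f g : F[X]) (μ : RatFunc F), IsCoprime f g ∧ μ ≠ 0 ∧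
      P.xRep = ![μ * l * algebraMap F[X] (RatFunc F) f, μ * algebraMap F[X] (RatFunc F) g] ∧
      xHeight l P = max f.natDegree g.natDegree := by
  match P with
  | 0 =>
    refine ⟨1, 0, l⁻¹, isCoprime_zero_right.mpr isUnit_one, inv_ne_zero hl, ?_, by simp [xHeight]⟩
    simp [hl]
  | .some x y h =>
    have hd : algebraMap F[X] (RatFunc F) (x / l).denom ≠ 0 :=
      RatFunc.algebraMap_ne_zero (RatFunc.denom_ne_zero _)
    refine ⟨(x / l).num, (x / l).denom, (algebraMap F[X] (RatFunc F) (x / l).denom)⁻¹,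
      RatFunc.isCoprime_num_denom _, inv_ne_zero hd, ?_, rfl⟩
    have e := RatFunc.num_div_denom (x / l)
    rw [Point.xRep_some, inv_mul_cancel₀ hd]
    congr 1
    rw [div_eq_div_iff hd hl] at e
    field_simp
    linear_combination -e

theorem xHeight_le {F : Type*} [Field F] {W : WeierstrassCurve.Affine (RatFunc F)}
    {l x : RatFunc F} {P : W.Point} (hP : P.xRep = ![x, 1]) {n d : F[X]} (hd : d ≠ 0)
    (e : x / l = algebraMap F[X] (RatFunc F) n / algebraMap F[X] (RatFunc F) d) :
    xHeight l P ≤ max n.natDegree d.natDegree := by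
  match P, hP with
  | 0, hP => simp at hP
  | .some x' y h, hP =>
    obtain rfl : x' = x := by simpa using hP
    change max (x' / l).num.natDegree (x' / l).denom.natDegree ≤ _
    rw [e]
    by_cases hn : n = 0
    · simp [hn]
    · exact max_le_max (natDegree_le_of_dvd (RatFunc.num_div_dvd _ hd) hn)
        (natDegree_le_of_dvd (RatFunc.denom_div_dvd _ _) hd)

/-- The parallelogram law for the height on the twist of `y² = x³ + a x² + b x`. -/
theorem xHeight_add_add_xHeight_sub {F : Type*} [Field F] [DecidableEq (RatFunc F)]
    (h2 : (2 : F) ≠ 0) {a b : F} (hb : b ≠ 0) (hd : a ^ 2 - 4 * b ≠ 0) {l : RatFunc F} (hl : l ≠ 0)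
    (P : (twoTorsionCurve (RatFunc.C a * l) (RatFunc.C b * l ^ 2)).Point) {y : RatFunc F}
    (h : (twoTorsionCurve (RatFunc.C a * l) (RatFunc.C b * l ^ 2)).Nonsingular
      (l * RatFunc.X) y) :
    xHeight l (P + .some _ y h) + xHeight l (P - .some _ y h) = 2 * xHeight l P + 2 := by
  obtain ⟨f, g, μ, hco, hμ, hx, hh⟩ := exists_isCoprime_xRep hl P
  obtain ⟨f₁, g₁, μ₁, hco₁, hμ₁, hx₁, hh₁⟩ := exists_isCoprime_xRep hl (P + .some _ y h)
  obtain ⟨f₂, g₂, μ₂, hco₂, hμ₂, hx₂, hh₂⟩ := exists_isCoprime_xRep hl (P - .some _ y h)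
  have h2' : (2 : RatFunc F) ≠ 0 := by
    rw [← map_ofNat RatFunc.C 2]
    exact (_root_.map_ne_zero RatFunc.C).mpr h2
  obtain ⟨e1, e2, e3⟩ := twoTorsionCurve.symm_square_add_sub h2' P h hx hx₁ hx₂
  rw [hh, hh₁, hh₂]
  have inj := RatFunc.algebraMap_injective F
  refine max_natDegree_add_max_natDegree h2 hb hd hco hco₁ hco₂ (inj ?_) (inj ?_) (inj ?_)
  · refine mul_left_cancel₀ (mul_ne_zero (pow_ne_zero 2 hμ) (mul_ne_zero (mul_ne_zero hμ₁ hμ₂)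
      (pow_ne_zero 5 hl))) ?_
    simp only [map_mul, map_sub, map_add, map_pow, map_ofNat, RatFunc.algebraMap_X,
      RatFunc.algebraMap_C]
    linear_combination e1
  · refine mul_left_cancel₀ (mul_ne_zero (pow_ne_zero 2 hμ) (mul_ne_zero (mul_ne_zero hμ₁ hμ₂)
      (pow_ne_zero 4 hl))) ?_
    simp only [map_mul, map_sub, map_pow, RatFunc.algebraMap_X,
      RatFunc.algebraMap_C]
    linear_combination e2
  · refine mul_left_cancel₀ (mul_ne_zero (pow_ne_zero 2 hμ) (mul_ne_zero (mul_ne_zero hμ₁ hμ₂)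
      (pow_ne_zero 3 hl))) ?_
    simp only [map_mul, map_sub, map_add, map_pow, map_ofNat, RatFunc.algebraMap_X,
      RatFunc.algebraMap_C]
    linear_combination e3

/-- A nonnegative integer sequence with constant second difference `2` has nonpositive
discriminant, up to rounding. -/
theorem sq_sub_le_of_second_difference (h : ℤ → ℕ) (hh : ∀ n, h (n + 1) + h (n - 1) = 2 * h n + 2) :
    ((h 1 : ℤ) - h 0 - 1) ^ 2 ≤ 4 * h 0 + 1 := by
  set β : ℤ := (h 1 : ℤ) - h 0 - 1 with hβ
  have formula : ∀ n : ℤ, (h n : ℤ) = n ^ 2 + β * n + h 0 ∧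
      (h (n + 1) : ℤ) = (n + 1) ^ 2 + β * (n + 1) + h 0 := by
    intro n
    induction n using Int.induction_on with
    | zero => constructor <;> simp [hβ]
    | succ k ih =>
      refine ⟨ih.2, ?_⟩
      have := hh (k + 1)
      rw [add_sub_cancel_right] at this
      zify at this
      linear_combination this + 2 * ih.2 - ih.1
    | pred k ih =>
      rw [sub_add_cancel]
      refine ⟨?_, ih.1⟩
      have := hh (-k)
      zify at this
      linear_combination this + 2 * ih.1 - ih.2
  rcases Int.even_or_odd' β with ⟨k, hk | hk⟩
  · have := (formula (-k)).1
    have h0 : (0 : ℤ) ≤ h (-k) := by positivity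
    rw [hk] at this ⊢
    nlinarith
  · have := (formula (-k)).1
    have h0 : (0 : ℤ) ≤ h (-k) := by positivity
    rw [hk] at this ⊢
    nlinarith

theorem prod_X_sub_C_dvd {F : Type*} [Field F] {s : Finset F} {p : F[X]}
    (h : ∀ x ∈ s, p.eval x = 0) : ∏ x ∈ s, (X - C x) ∣ p :=
  Finset.prod_dvd_of_coprime
    (fun _ _ _ _ hxy => pairwise_coprime_X_sub_C (s := id) Function.injective_id hxy)
    fun x hx => dvd_iff_isRoot.mpr (h x hx)

section Frobenius

variable {F : Type*} [Field F] [Fintype F]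

/-- The numerator over `(X ^ q - X) ^ 2` of the `x`-coordinate of the sum of the Frobenius point and
`-ε` times the tautological point on the twist of `y² = x³ + a x² + b x`. -/
noncomputable def frobeniusNumerator (a b ε : F) : F[X] :=
  (X ^ 3 + C a * X ^ 2 + C b * X) *
      ((X ^ 3 + C a * X ^ 2 + C b * X) ^ (Fintype.card F / 2) - C ε) ^ 2 -
    (C a + X ^ Fintype.card F + X) * (X ^ Fintype.card F - X) ^ 2

theorem two_mul_card_div_two_add_one (hF : ringChar F ≠ 2) :
    2 * (Fintype.card F / 2) + 1 = Fintype.card F := by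
  have := FiniteField.odd_card_of_char_ne_two hF
  omega

theorem cubic_pow_card (a b : F) :
    (X ^ 3 + C a * X ^ 2 + C b * X : F[X]) ^ Fintype.card F =
      (X ^ Fintype.card F) ^ 3 + C a * (X ^ Fintype.card F) ^ 2 + C b * X ^ Fintype.card F := by
  rw [← FiniteField.expand_card]
  simp

theorem natDegree_frobeniusNumerator_le (hF : ringChar F ≠ 2) (a b : F) {ε : F} (hε : ε ^ 2 = 1) :
    (frobeniusNumerator a b ε).natDegree ≤ 2 * Fintype.card F + 1 := by
  have hq := two_mul_card_div_two_add_one hF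
  have hq1 : 1 < Fintype.card F := Fintype.one_lt_card
  have hpow := cubic_pow_card a b
  have hdeg : (X ^ 3 + C a * X ^ 2 + C b * X : F[X]).natDegree ≤ 3 := by compute_degree
  unfold frobeniusNumerator
  set f : F[X] := X ^ 3 + C a * X ^ 2 + C b * X with hf
  set m := Fintype.card F / 2 with hm
  set q := Fintype.card F with hqdef
  have hC : (C ε : F[X]) ^ 2 = 1 := by rw [← C_pow, hε, C_1]
  have e : f * (f ^ m - C ε) ^ 2 - (C a + X ^ q + X) * (X ^ q - X) ^ 2 =
      C b * X ^ q - C (2 * ε) * f ^ (m + 1) + f + C (2 * a) * X ^ (q + 1) - C a * X ^ 2 +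
        X ^ (2 * q + 1) + X ^ (q + 2) - X ^ 3 := by
    have h1 : f * (f ^ m) ^ 2 = (X ^ q) ^ 3 + C a * (X ^ q) ^ 2 + C b * X ^ q := by
      rw [← hpow, ← hq]; ring
    rw [C_mul, C_mul, show (C (2 : F) : F[X]) = 2 from map_ofNat C 2]
    linear_combination h1 + f * hC
  rw [e]
  have hfm : (f ^ (m + 1)).natDegree ≤ 2 * q + 1 :=
    (natDegree_pow_le_of_le (m + 1) hdeg).trans (by omega)
  have hX : ∀ k, k ≤ 2 * q + 1 → (X ^ k : F[X]).natDegree ≤ 2 * q + 1 := fun k hk => by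
    rwa [natDegree_X_pow]
  have hCX : ∀ (c : F) (p : F[X]), p.natDegree ≤ 2 * q + 1 → (C c * p).natDegree ≤ 2 * q + 1 :=
    fun c p hp => (natDegree_C_mul_le _ _).trans hp
  have hadd : ∀ {p r : F[X]}, p.natDegree ≤ 2 * q + 1 → r.natDegree ≤ 2 * q + 1 →
      (p + r).natDegree ≤ 2 * q + 1 := fun hp hr => (natDegree_add_le _ _).trans (max_le hp hr)
  have hsub : ∀ {p r : F[X]}, p.natDegree ≤ 2 * q + 1 → r.natDegree ≤ 2 * q + 1 →
      (p - r).natDegree ≤ 2 * q + 1 := fun hp hr => (natDegree_sub_le _ _).trans (max_le hp hr)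
  refine hsub (hadd (hadd (hsub (hadd (hadd (hsub (hCX _ _ (hX _ ?_)) (hCX _ _ hfm))
    (hdeg.trans ?_)) (hCX _ _ (hX _ ?_))) (hCX _ _ (hX _ ?_))) (hX _ ?_)) (hX _ ?_)) (hX _ ?_)
  all_goals omega

variable [DecidableEq F]

theorem quadraticChar_eq_one_or_neg_one_or_zero (x : F) :
    quadraticChar F x = 0 ∨ quadraticChar F x = 1 ∨ quadraticChar F x = -1 := by
  by_cases hx : x = 0
  · left; simp [hx]
  · right; exact quadraticChar_dichotomy hx

theorem two_mul_card_filter_quadraticChar_eq (f : F → F) {ε : ℤ} (hε : ε = 1 ∨ ε = -1) :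
    2 * (#{x | quadraticChar F (f x) = ε} : ℤ) + #{x | quadraticChar F (f x) = 0} =
      Fintype.card F + ε * ∑ x, quadraticChar F (f x) := by
  have h1 : (Fintype.card F : ℤ) = ∑ _x : F, 1 := by simp
  rw [card_filter, card_filter, h1, mul_sum]
  push_cast
  rw [mul_sum, ← sum_add_distrib, ← sum_add_distrib]
  refine sum_congr rfl fun x _ => ?_
  rcases quadraticChar_eq_one_or_neg_one_or_zero (f x) with h | h | h <;> rcases hε with rfl | rfl <;>
    simp [h]

theorem xHeight_le_of_frobenius (hF : ringChar F ≠ 2) (a b : F) {ε : ℤ} (hε : ε = 1 ∨ ε = -1)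
    {W : WeierstrassCurve.Affine (RatFunc F)} {l x : RatFunc F} {P : W.Point}
    (hP : P.xRep = ![x, 1])
    (e : x / l = algebraMap F[X] (RatFunc F) (frobeniusNumerator a b (ε : F)) /
      algebraMap F[X] (RatFunc F) ((X ^ Fintype.card F - X) ^ 2)) :
    (xHeight l P : ℤ) ≤ Fintype.card F + 1 -
      ε * ∑ x, quadraticChar F (x ^ 3 + a * x ^ 2 + b * x) := by
  have hcount := two_mul_card_filter_quadraticChar_eq (fun x => x ^ 3 + a * x ^ 2 + b * x) hε
  have hεF : (ε : F) ^ 2 = 1 := by rcases hε with rfl | rfl <;> simp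
  have hdeg := natDegree_frobeniusNumerator_le hF a b hεF
  have hq1 : 1 < Fintype.card F := Fintype.one_lt_card
  set s : Finset F := {x | quadraticChar F (x ^ 3 + a * x ^ 2 + b * x) = ε} with hs
  set s₀ : Finset F := {x | quadraticChar F (x ^ 3 + a * x ^ 2 + b * x) = 0} with hs₀
  have hdisj : Disjoint s₀ s := by
    rw [Finset.disjoint_filter]
    intro x _ h0 h1
    rw [h0] at h1
    rcases hε with rfl | rfl <;> simp at h1
  set Z : F[X] := ∏ x ∈ s, (X - C x) with hZ
  set Z₀ : F[X] := ∏ x ∈ s₀, (X - C x) with hZ₀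
  have mZ : Z.Monic := monic_prod_of_monic _ _ fun x _ => monic_X_sub_C x
  have mZ₀ : Z₀.Monic := monic_prod_of_monic _ _ fun x _ => monic_X_sub_C x
  have dZ : Z.natDegree = #s := natDegree_finsetProd_X_sub_C_eq_card s id
  have dZ₀ : Z₀.natDegree = #s₀ := natDegree_finsetProd_X_sub_C_eq_card s₀ id
  have v0 : Z₀ ∣ X ^ 3 + C a * X ^ 2 + C b * X := prod_X_sub_C_dvd fun x hx => by
    have := (mem_filter.mp hx).2
    rw [quadraticChar_eq_zero_iff] at this
    simpa using this
  have v1 : Z ∣ (X ^ 3 + C a * X ^ 2 + C b * X) ^ (Fintype.card F / 2) - C (ε : F) :=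
    prod_X_sub_C_dvd fun x hx => by
      have h1 := quadraticChar_eq_pow_of_char_ne_two' hF (x ^ 3 + a * x ^ 2 + b * x)
      rw [(mem_filter.mp hx).2] at h1
      simp [h1]
  have v2 : Z₀ * Z ∣ X ^ Fintype.card F - X := by
    rw [hZ, hZ₀, ← prod_union hdisj]
    exact prod_X_sub_C_dvd fun x _ => by simp [FiniteField.pow_card]
  have v3 : Z₀ * Z ^ 2 ∣ (X ^ Fintype.card F - X) ^ 2 := by
    refine Dvd.dvd.trans ⟨Z₀, ?_⟩ (pow_dvd_pow_of_dvd v2 2)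
    ring
  have v4 : Z₀ * Z ^ 2 ∣ frobeniusNumerator a b (ε : F) :=
    dvd_sub (mul_dvd_mul v0 (pow_dvd_pow_of_dvd v1 2)) (v3.mul_left _)
  have hW : (X ^ Fintype.card F - X : F[X]) ≠ 0 := FiniteField.X_pow_card_sub_X_ne_zero F hq1
  have dW : ((X ^ Fintype.card F - X : F[X]) ^ 2).natDegree = 2 * Fintype.card F := by
    rw [natDegree_pow, FiniteField.X_pow_card_sub_X_natDegree_eq F hq1]
  have mY : (Z₀ * Z ^ 2).Monic := mZ₀.mul (mZ.pow 2)
  have dY : (Z₀ * Z ^ 2).natDegree = #s₀ + 2 * #s := by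
    rw [mZ₀.natDegree_mul (mZ.pow 2), mZ.natDegree_pow, dZ, dZ₀]
  obtain ⟨d, hd⟩ := v3
  obtain ⟨n, hn⟩ := v4
  have hd0 : d ≠ 0 := by
    rintro rfl
    rw [mul_zero] at hd
    exact pow_ne_zero 2 hW hd
  have hle : #s₀ + #s ≤ Fintype.card F := by
    rw [← card_union_of_disjoint hdisj]
    exact card_le_univ _
  have dd : #s₀ + 2 * #s + d.natDegree = 2 * Fintype.card F := by
    rw [← dW, hd, mY.natDegree_mul' hd0, dY]
  have dn : n.natDegree ≤ 2 * Fintype.card F + 1 - (#s₀ + 2 * #s) := by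
    by_cases hn0 : n = 0
    · simp [hn0]
    · rw [hn, mY.natDegree_mul' hn0, dY] at hdeg
      omega
  have hY : algebraMap F[X] (RatFunc F) (Z₀ * Z ^ 2) ≠ 0 := RatFunc.algebraMap_ne_zero mY.ne_zero
  have := xHeight_le hP (n := n) (d := d) hd0 (by
    rw [e, hn, hd, map_mul _ (Z₀ * Z ^ 2) n, map_mul _ (Z₀ * Z ^ 2) d, mul_div_mul_left _ _ hY])
  have h3 : xHeight l P ≤ 2 * Fintype.card F + 1 - (#s₀ + 2 * #s) :=
    this.trans (max_le dn (by omega))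
  zify [show #s₀ + 2 * #s ≤ 2 * Fintype.card F + 1 by omega] at h3
  linarith

/-- The Hasse bound for the curve `y² = x³ + a x² + b x`, with a weaker constant term. -/
theorem sq_sum_quadraticChar_cubic_le (hF : ringChar F ≠ 2) {a b : F} (hb : b ≠ 0)
    (hd : a ^ 2 - 4 * b ≠ 0) :
    (∑ x, quadraticChar F (x ^ 3 + a * x ^ 2 + b * x)) ^ 2 ≤ 4 * (Fintype.card F : ℤ) + 1 := by
  classical
  have h2 : (2 : F) ≠ 0 := Ring.two_ne_zero hF
  have hq := two_mul_card_div_two_add_one hF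
  have hq1 : 1 < Fintype.card F := Fintype.one_lt_card
  set f : F[X] := X ^ 3 + C a * X ^ 2 + C b * X with hf
  have hf0 : f ≠ 0 := by
    intro h0
    have := congrArg (fun p => p.coeff 3) h0
    simp [hf] at this
  set l : RatFunc F := algebraMap F[X] (RatFunc F) f with hl
  have hl0 : l ≠ 0 := RatFunc.algebraMap_ne_zero hf0
  have h2' : (2 : RatFunc F) ≠ 0 := by
    rw [← map_ofNat RatFunc.C 2]
    exact (_root_.map_ne_zero RatFunc.C).mpr h2
  have hB : RatFunc.C b * l ^ 2 ≠ 0 :=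
    mul_ne_zero ((_root_.map_ne_zero RatFunc.C).mpr hb) (pow_ne_zero 2 hl0)
  have hD : (RatFunc.C a * l) ^ 2 - 4 * (RatFunc.C b * l ^ 2) ≠ 0 := by
    have : (RatFunc.C a * l) ^ 2 - 4 * (RatFunc.C b * l ^ 2) =
        RatFunc.C (a ^ 2 - 4 * b) * l ^ 2 := by
      simp only [map_sub, map_mul, map_pow, map_ofNat]
      ring
    rw [this]
    exact mul_ne_zero ((_root_.map_ne_zero RatFunc.C).mpr hd) (pow_ne_zero 2 hl0)
  have el : l = RatFunc.X ^ 3 + RatFunc.C a * RatFunc.X ^ 2 + RatFunc.C b * RatFunc.X := by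
    simp [hl, hf]
  have elq : l ^ Fintype.card F = (RatFunc.X ^ Fintype.card F) ^ 3 +
      RatFunc.C a * (RatFunc.X ^ Fintype.card F) ^ 2 + RatFunc.C b * RatFunc.X ^ Fintype.card F := by
    have := congrArg (algebraMap F[X] (RatFunc F)) (cubic_pow_card a b)
    simpa [hl, hf] using this
  set m := Fintype.card F / 2 with hm
  set q := Fintype.card F with hqdef
  have hQ : (twoTorsionCurve (RatFunc.C a * l) (RatFunc.C b * l ^ 2)).Nonsingular
      (l * RatFunc.X) (l ^ 2) := by
    refine twoTorsionCurve.nonsingular h2' hB hD ?_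
    linear_combination l ^ 3 * el
  have hP : (twoTorsionCurve (RatFunc.C a * l) (RatFunc.C b * l ^ 2)).Nonsingular
      (l * RatFunc.X ^ q) (l ^ 2 * l ^ m) := by
    refine twoTorsionCurve.nonsingular h2' hB hD ?_
    have : (l ^ 2 * l ^ m) ^ 2 = l ^ 3 * l ^ q := by rw [← hq]; ring
    rw [this, elq]
    ring
  have hne' : (RatFunc.X ^ q - RatFunc.X : RatFunc F) ≠ 0 := by
    have := RatFunc.algebraMap_ne_zero (FiniteField.X_pow_card_sub_X_ne_zero F hq1)
    simpa using this
  have hne : l * RatFunc.X ^ q ≠ l * RatFunc.X := fun h =>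
    hne' (sub_eq_zero.mpr (mul_left_cancel₀ hl0 h))
  have hadd := xHeight_le_of_frobenius hF a b (ε := 1) (Or.inl rfl) (l := l)
    (twoTorsionCurve.xRep_add_of_X_ne hP hQ hne) (by
      simp only [frobeniusNumerator, ← hf, map_sub, map_mul, map_pow, map_add, ← hl,
        RatFunc.algebraMap_X, RatFunc.algebraMap_C, ← mul_sub, Int.cast_one, map_one, ← hqdef,
        ← hm]
      field_simp
      ring)
  have hsub := xHeight_le_of_frobenius hF a b (ε := -1) (Or.inr rfl) (l := l)
    (twoTorsionCurve.xRep_sub_of_X_ne hP hQ hne) (by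
      simp only [frobeniusNumerator, ← hf, map_sub, map_mul, map_pow, map_add, ← hl,
        RatFunc.algebraMap_X, RatFunc.algebraMap_C, ← mul_sub, Int.cast_neg, Int.cast_one, map_neg,
        map_one, ← hqdef, ← hm]
      field_simp
      ring)
  have h0 : xHeight l (Point.some _ _ hP) = q := by
    change max (l * RatFunc.X ^ q / l).num.natDegree (l * RatFunc.X ^ q / l).denom.natDegree = q
    rw [mul_div_cancel_left₀ _ hl0, ← RatFunc.algebraMap_X, ← map_pow, RatFunc.num_algebraMap,
      RatFunc.denom_algebraMap, natDegree_X_pow]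
    simp
  have par := fun P => xHeight_add_add_xHeight_sub h2 hb hd hl0 P hQ
  have key := sq_sub_le_of_second_difference
    (fun n => xHeight l (Point.some _ _ hP + n • Point.some _ _ hQ)) fun n => by
      rw [add_one_zsmul, sub_one_zsmul, ← sub_eq_add_neg, ← add_assoc, ← add_sub_assoc]
      exact par _
  have par0 := par (Point.some _ _ hP)
  simp only [one_zsmul, zero_zsmul, add_zero, h0] at key par0
  zify at par0
  have : (xHeight l (Point.some _ _ hP + Point.some _ _ hQ) : ℤ) - q - 1 =
      - ∑ x, quadraticChar F (x ^ 3 + a * x ^ 2 + b * x) := by linarith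
  rw [this] at key
  linarith [neg_sq (∑ x, quadraticChar F (x ^ 3 + a * x ^ 2 + b * x))]

end Frobenius

end Height

section CharacterSums

variable {F : Type*} [Field F] [Fintype F] [DecidableEq F]

theorem sum_quadraticChar_pair (hF : ringChar F ≠ 2) {a b : F} (hab : a ≠ b) :
    ∑ x, quadraticChar F (x - a) * quadraticChar F (x - b) = -1 := by
  have hba : b - a ≠ 0 := sub_ne_zero.mpr hab.symm
  have hJ := jacobiSum_nontrivial_inv (quadraticChar_ne_one hF)
  rw [(quadraticChar_isQuadratic F).inv, jacobiSum] at hJ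
  rw [← Equiv.sum_comp ((Equiv.mulLeft₀ (b - a) hba).trans (Equiv.addRight a))]
  have h1 : quadraticChar F (-1) * quadraticChar F (-1) = 1 := by rw [← map_mul]; simp
  have h2 : quadraticChar F (b - a) * quadraticChar F (b - a) = 1 := by
    rw [← sq, quadraticChar_sq_one hba]
  calc _ = ∑ t, quadraticChar F (-1) * (quadraticChar F t * quadraticChar F (1 - t)) := by
        refine sum_congr rfl fun t _ => ?_
        have e1 : ((Equiv.mulLeft₀ (b - a) hba).trans (Equiv.addRight a)) t - a = (b - a) * t := by
          simp
        have e2 : ((Equiv.mulLeft₀ (b - a) hba).trans (Equiv.addRight a)) t - b =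
            (b - a) * (-1 * (1 - t)) := by
          simp; ring
        rw [e1, e2, map_mul, map_mul, map_mul]
        linear_combination
          quadraticChar F t * quadraticChar F (-1) * quadraticChar F (1 - t) * h2
    _ = -1 := by rw [← mul_sum, hJ]; linear_combination -h1

theorem sum_quadraticChar_self (a : F) :
    ∑ x, quadraticChar F (x - a) * quadraticChar F (x - a) = (Fintype.card F : ℤ) - 1 := by
  rw [← Equiv.sum_comp (Equiv.addRight a)]
  calc _ = ∑ x : F, ((1 : ℤ) - if x = 0 then 1 else 0) := by
        refine sum_congr rfl fun x _ => ?_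
        rw [Equiv.coe_addRight, add_sub_cancel_right, ← map_mul, ← sq]
        split_ifs with hx
        · simp [hx]
        · rw [quadraticChar_sq_one' hx, sub_zero]
    _ = _ := by rw [sum_sub_distrib, sum_ite_eq']; simp

theorem sq_sum_quadraticChar_triple_le (hF : ringChar F ≠ 2) {a b c : F} (hab : a ≠ b)
    (hac : a ≠ c) (hbc : b ≠ c) :
    (∑ x, quadraticChar F (x - a) * quadraticChar F (x - b) * quadraticChar F (x - c)) ^ 2 ≤
      4 * (Fintype.card F : ℤ) + 1 := by
  have h := sq_sum_quadraticChar_cubic_le hF (a := -((b - a) + (c - a))) (b := (b - a) * (c - a))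
    (mul_ne_zero (sub_ne_zero.mpr hab.symm) (sub_ne_zero.mpr hac.symm)) (by
      rw [show (-((b - a) + (c - a))) ^ 2 - 4 * ((b - a) * (c - a)) = (b - c) ^ 2 by ring]
      exact pow_ne_zero 2 (sub_ne_zero.mpr hbc))
  rw [← Equiv.sum_comp (Equiv.addRight a)]
  convert h using 4 with x
  rw [← map_mul, ← map_mul, Equiv.coe_addRight]
  congr 1
  ring

theorem abs_le_two_mul_sqrt_add_one {n : ℤ} {q : ℕ} (h : n ^ 2 ≤ 4 * (q : ℤ) + 1) :
    |(n : ℝ)| ≤ 2 * √q + 1 := by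
  have h' : (n : ℝ) ^ 2 ≤ 4 * q + 1 := by exact_mod_cast h
  refine abs_le_of_sq_le_sq (h'.trans ?_) (by positivity)
  nlinarith [Real.sq_sqrt (Nat.cast_nonneg (α := ℝ) q), Real.sqrt_nonneg (q : ℝ)]

theorem abs_quadraticChar_le_one (x : F) : |quadraticChar F x| ≤ 1 := by
  rcases quadraticChar_eq_one_or_neg_one_or_zero x with h | h | h <;> simp [h]

theorem abs_sum_quadraticChar_quadruple_le (hF : ringChar F ≠ 2) {a b c d : F} (hab : a ≠ b)
    (hac : a ≠ c) (had : a ≠ d) (hbc : b ≠ c) (hbd : b ≠ d) (hcd : c ≠ d) :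
    |((∑ x, quadraticChar F (x - a) * quadraticChar F (x - b) * quadraticChar F (x - c) *
      quadraticChar F (x - d) : ℤ) : ℝ)| ≤ 2 * √(Fintype.card F) + 2 := by
  have hu : b - a ≠ 0 := sub_ne_zero.mpr hab.symm
  have hv : c - a ≠ 0 := sub_ne_zero.mpr hac.symm
  have hw : d - a ≠ 0 := sub_ne_zero.mpr had.symm
  have h := abs_le_two_mul_sqrt_add_one (sq_sum_quadraticChar_triple_le hF
    (a := (b - a)⁻¹) (b := (c - a)⁻¹) (c := (d - a)⁻¹)
    (by simpa using hbc) (by simpa using hbd) (by simpa using hcd))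
  set u := b - a with hu_def
  set v := c - a with hv_def
  set w := d - a with hw_def
  set T : ℤ := ∑ x, quadraticChar F (x - u⁻¹) * quadraticChar F (x - v⁻¹) *
    quadraticChar F (x - w⁻¹) with hT
  have key : ∑ x, quadraticChar F (x - a) * quadraticChar F (x - b) * quadraticChar F (x - c) *
      quadraticChar F (x - d) =
      quadraticChar F (-(u * v * w)) * (T - quadraticChar F (-(u * v * w)⁻¹)) := by
    rw [← Equiv.sum_comp ((Equiv.inv F).trans (Equiv.addRight a)), hT,
      ← add_sum_erase _ _ (mem_univ (0 : F)), ← add_sum_erase univ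
        (fun x => quadraticChar F (x - u⁻¹) * quadraticChar F (x - v⁻¹) *
          quadraticChar F (x - w⁻¹)) (mem_univ (0 : F))]
    have e0 : quadraticChar F (0 - u⁻¹) * quadraticChar F (0 - v⁻¹) * quadraticChar F (0 - w⁻¹) =
        quadraticChar F (-(u * v * w)⁻¹) := by
      rw [← map_mul, ← map_mul]
      congr 1
      rw [mul_inv, mul_inv]
      ring
    simp only [e0, add_sub_cancel_left, mul_sum]
    simp only [Equiv.trans_apply, Equiv.coe_addRight, Equiv.inv_apply, inv_zero, zero_add, sub_self,
      quadraticChar_zero, zero_mul]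
    refine sum_congr rfl fun x hx => ?_
    have hx0 : x ≠ 0 := (mem_erase.mp hx).1
    have h4 : quadraticChar F (x⁻¹ ^ 4) = 1 := by
      rw [show x⁻¹ ^ 4 = (x⁻¹ ^ 2) ^ 2 by ring]
      exact quadraticChar_sq_one' (pow_ne_zero 2 (inv_ne_zero hx0))
    rw [← one_mul (quadraticChar F (-(u * v * w)) * _), ← h4]
    simp only [← map_mul]
    congr 1
    have hb : b = u + a := by rw [hu_def]; ring
    have hc : c = v + a := by rw [hv_def]; ring
    have hd : d = w + a := by rw [hw_def]; ring
    rw [hb, hc, hd]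
    field_simp
    ring
  have h1 : |quadraticChar F (-(u * v * w))| ≤ 1 := abs_quadraticChar_le_one _
  have h2 : |quadraticChar F (-(u * v * w)⁻¹)| ≤ 1 := abs_quadraticChar_le_one _
  have h3 : |∑ x, quadraticChar F (x - a) * quadraticChar F (x - b) * quadraticChar F (x - c) *
      quadraticChar F (x - d)| ≤ |T| + 1 := by
    rw [key, abs_mul]
    calc _ ≤ 1 * |T - quadraticChar F (-(u * v * w)⁻¹)| := by gcongr
      _ ≤ |T| + |quadraticChar F (-(u * v * w)⁻¹)| := by rw [one_mul]; exact abs_sub _ _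
      _ ≤ |T| + 1 := by gcongr
  have h3' : ((|∑ x, quadraticChar F (x - a) * quadraticChar F (x - b) * quadraticChar F (x - c) *
      quadraticChar F (x - d)| : ℤ) : ℝ) ≤ ((|T| + 1 : ℤ) : ℝ) := by exact_mod_cast h3
  rw [Int.cast_abs] at h3'
  push_cast at h3' h ⊢
  linarith

theorem card_filter_pow_eq_le (F : Type*) [Field F] [Fintype F] [DecidableEq F] {n : ℕ}
    (hn : 0 < n) (c : F) : #{x : F | x ^ n = c} ≤ n := by
  have : ({x : F | x ^ n = c} : Finset F) ⊆ (Polynomial.nthRoots n c).toFinset := fun x hx => by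
    rw [Multiset.mem_toFinset, Polynomial.mem_nthRoots hn]
    exact (mem_filter.mp hx).2
  exact (card_le_card this).trans ((Multiset.toFinset_card_le _).trans
    (Polynomial.card_nthRoots n c))

theorem sum_comp_pow_le {n : ℕ} (hn : 0 < n) {g : F → ℤ} (hg : ∀ x, 0 ≤ g x) :
    ∑ x, g (x ^ n) ≤ n * ∑ x, g x := by
  rw [← sum_fiberwise univ (fun x : F => x ^ n), mul_sum]
  refine sum_le_sum fun c _ => ?_
  rw [sum_congr rfl fun x hx => by rw [(mem_filter.mp hx).2], sum_const, nsmul_eq_mul]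
  have := card_filter_pow_eq_le F hn c
  gcongr
  exact hg c

theorem sum_quadraticChar_mul_pow_four_sub (hF : ringChar F ≠ 2) (d : F) :
    ∑ x, quadraticChar F x * quadraticChar F (x ^ 4 - d ^ 4) =
      quadraticChar F d * ∑ x, quadraticChar F x * quadraticChar F (x ^ 4 - 1) := by
  have h4 : ∀ {x : F}, x ≠ 0 → quadraticChar F (x ^ 4) = 1 := fun {x} hx => by
    rw [show x ^ 4 = (x ^ 2) ^ 2 by ring]
    exact quadraticChar_sq_one' (pow_ne_zero 2 hx)
  by_cases hd : d = 0
  · rw [hd, quadraticChar_zero, zero_mul, ← quadraticChar_sum_zero hF]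
    refine sum_congr rfl fun x _ => ?_
    by_cases hx : x = 0
    · rw [hx, quadraticChar_zero, zero_mul]
    · rw [zero_pow four_ne_zero, sub_zero, h4 hx, mul_one]
  · rw [← Equiv.sum_comp (Equiv.mulLeft₀ d hd), mul_sum]
    refine sum_congr rfl fun x _ => ?_
    rw [Equiv.mulLeft₀_apply, show (d * x) ^ 4 - d ^ 4 = d ^ 4 * (x ^ 4 - 1) by ring, map_mul,
      map_mul, h4 hd, one_mul, mul_assoc]

theorem sum_sq_sum_quadraticChar_le (hF : ringChar F ≠ 2) :
    ∑ c, (∑ x, quadraticChar F x * quadraticChar F (x ^ 4 - c)) ^ 2 ≤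
      4 * (Fintype.card F : ℤ) * (Fintype.card F - 1) := by
  have hpair : ∀ s t : F, ∑ c, quadraticChar F (s - c) * quadraticChar F (t - c) =
      (if t = s then (Fintype.card F : ℤ) else 0) - 1 := fun s t => by
    have hneg : quadraticChar F (-1) * quadraticChar F (-1) = 1 := by rw [← map_mul]; simp
    have : ∀ c, quadraticChar F (s - c) * quadraticChar F (t - c) =
        quadraticChar F (c - s) * quadraticChar F (c - t) := fun c => by
      rw [← neg_sub c s, ← neg_sub c t, neg_eq_neg_one_mul (c - s), neg_eq_neg_one_mul (c - t),
        map_mul, map_mul]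
      linear_combination quadraticChar F (c - s) * quadraticChar F (c - t) * hneg
    simp only [this]
    split_ifs with h
    · rw [h, sum_quadraticChar_self]
    · rw [sum_quadraticChar_pair hF (Ne.symm h), zero_sub]
  have hself := sum_quadraticChar_self (0 : F)
  simp only [sub_zero] at hself
  calc _ = ∑ x : F, ∑ y : F, quadraticChar F x * quadraticChar F y *
        ∑ c, quadraticChar F (x ^ 4 - c) * quadraticChar F (y ^ 4 - c) := by
        simp_rw [sq, sum_mul_sum, mul_sum]
        rw [sum_comm]
        refine sum_congr rfl fun x _ => ?_
        rw [sum_comm]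
        refine sum_congr rfl fun y _ => sum_congr rfl fun c _ => ?_
        ring
    _ = ∑ x : F, ∑ y : F, (quadraticChar F x * quadraticChar F y *
          if y ^ 4 = x ^ 4 then (Fintype.card F : ℤ) else 0) := by
        simp only [hpair, mul_sub, sum_sub_distrib, mul_one, ← mul_sum]
        simp [quadraticChar_sum_zero hF, -quadraticChar_apply]
    _ ≤ ∑ x : F, quadraticChar F x * quadraticChar F x * (4 * (Fintype.card F : ℤ)) := by
        refine sum_le_sum fun x _ => ?_
        calc _ ≤ ∑ y : F, quadraticChar F x * quadraticChar F x *
              (if y ^ 4 = x ^ 4 then (Fintype.card F : ℤ) else 0) := by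
              refine sum_le_sum fun y _ => ?_
              rcases quadraticChar_eq_one_or_neg_one_or_zero x with h | h | h <;>
              rcases quadraticChar_eq_one_or_neg_one_or_zero y with h' | h' | h' <;>
              rw [h, h'] <;> split_ifs <;> simp
          _ ≤ _ := by
              rw [← mul_sum, ← sum_filter, sum_const, nsmul_eq_mul]
              have : (#{y : F | y ^ 4 = x ^ 4} : ℤ) ≤ 4 := by
                exact_mod_cast card_filter_pow_eq_le F (by norm_num) (x ^ 4)
              gcongr
              exact mul_self_nonneg _
    _ = _ := by rw [← sum_mul, hself]; ring

theorem sq_sum_quadraticChar_quintic_le (hF : ringChar F ≠ 2) :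
    (∑ x, quadraticChar F x * quadraticChar F (x ^ 4 - 1)) ^ 2 ≤ 16 * (Fintype.card F : ℤ) := by
  have h1 := sum_comp_pow_le (F := F) (n := 4) (by norm_num) (g := fun c =>
    (∑ x, quadraticChar F x * quadraticChar F (x ^ 4 - c)) ^ 2) fun c => sq_nonneg _
  have h2 := sum_sq_sum_quadraticChar_le hF
  have h3 := sum_quadraticChar_self (0 : F)
  have hq : (1 : ℤ) < Fintype.card F := by exact_mod_cast Fintype.one_lt_card
  simp only [sum_quadraticChar_mul_pow_four_sub hF, mul_pow, ← sum_mul] at h1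
  simp only [sub_zero, ← sq] at h3
  rw [h3] at h1
  push_cast at h1
  refine le_of_mul_le_mul_left (a := (Fintype.card F : ℤ) - 1) ?_ (by linarith)
  nlinarith

theorem sum_prod_one_sub_quadraticChar_ge (hF : ringChar F ≠ 2) {s : Finset F} (hs : #s = 5)
    (h5 : |((∑ x, ∏ a ∈ s, quadraticChar F (x - a) : ℤ) : ℝ)| ≤ 4 * √(Fintype.card F)) :
    (Fintype.card F : ℝ) - 34 * √(Fintype.card F) - 30 ≤
      ((∑ x, ∏ a ∈ s, (1 - quadraticChar F (x - a)) : ℤ) : ℝ) := by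
  set r := √(Fintype.card F : ℝ) with hr
  let B : ℕ → ℝ := fun n => match n with
    | 0 => Fintype.card F
    | 1 => 0
    | 2 => -1
    | 3 => -(2 * r + 1)
    | 4 => -(2 * r + 2)
    | _ => -(4 * r)
  have hB : ∀ t ∈ s.powerset,
      B #t ≤ (((-1) ^ #t * ∑ x, ∏ a ∈ t, quadraticChar F (x - a) : ℤ) : ℝ) := by
    intro t ht
    have hts := mem_powerset.mp ht
    have hle : #t ≤ 5 := hs ▸ card_le_card hts
    have hcases : #t = 0 ∨ #t = 1 ∨ #t = 2 ∨ #t = 3 ∨ #t = 4 ∨ #t = 5 := by omega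
    rcases hcases with h | h | h | h | h | h
    · rw [h, card_eq_zero.mp h]
      simp [B]
    · rw [h]
      obtain ⟨a, rfl⟩ := card_eq_one.mp h
      have := Equiv.sum_comp (Equiv.subRight a) (quadraticChar F)
      rw [quadraticChar_sum_zero hF] at this
      simp only [Equiv.subRight_apply] at this
      simp only [prod_singleton, this]
      simp [B]
    · rw [h]
      obtain ⟨a, b, hab, rfl⟩ := card_eq_two.mp h
      simp only [prod_pair hab, sum_quadraticChar_pair hF hab]
      simp [B]
    · rw [h]
      obtain ⟨a, b, c, hab, hac, hbc, rfl⟩ := card_eq_three.mp h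
      have := abs_le_two_mul_sqrt_add_one (sq_sum_quadraticChar_triple_le hF hab hac hbc)
      have e : ∀ x, ∏ y ∈ {a, b, c}, quadraticChar F (x - y) =
          quadraticChar F (x - a) * quadraticChar F (x - b) * quadraticChar F (x - c) := fun x => by
        rw [prod_insert (by simp [hab, hac]), prod_pair hbc, mul_assoc]
      simp only [e]
      change -(2 * r + 1) ≤ _
      push_cast at this ⊢
      linarith [(abs_le.mp this).2]
    · rw [h]
      obtain ⟨a, t', ha, rfl, ht'⟩ := card_eq_succ.mp h
      obtain ⟨b, c, d, hbc, hbd, hcd, rfl⟩ := card_eq_three.mp ht'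
      simp only [mem_insert, mem_singleton, not_or] at ha
      obtain ⟨hab, hac, had⟩ := ha
      have := abs_sum_quadraticChar_quadruple_le hF hab hac had hbc hbd hcd
      have e : ∀ x, ∏ y ∈ {a, b, c, d}, quadraticChar F (x - y) =
          quadraticChar F (x - a) * quadraticChar F (x - b) * quadraticChar F (x - c) *
            quadraticChar F (x - d) := fun x => by
        rw [prod_insert (by simp [hab, hac, had]), prod_insert (by simp [hbc, hbd]), prod_pair hcd]
        ring
      simp only [e]
      change -(2 * r + 2) ≤ _
      push_cast at this ⊢
      linarith [(abs_le.mp this).1]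
    · obtain rfl := eq_of_subset_of_card_le hts (by omega)
      rw [h]
      change -(4 * r) ≤ _
      push_cast at h5 ⊢
      linarith [(abs_le.mp h5).2]
  have e : ∑ x, ∏ a ∈ s, (1 - quadraticChar F (x - a)) =
      ∑ t ∈ s.powerset, (-1) ^ #t * ∑ x, ∏ a ∈ t, quadraticChar F (x - a) := by
    simp only [sub_eq_add_neg (1 : ℤ), prod_one_add, prod_neg, mul_sum]
    exact sum_comm
  rw [e, Int.cast_sum]
  refine le_trans ?_ (sum_le_sum hB)
  rw [sum_powerset_apply_card, hs]
  simp only [sum_range_succ, sum_range_zero, B]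
  norm_num [Nat.choose]
  linarith

theorem zero_one_sqrt_neg_one_distinct {K : Type*} [Field K] [DecidableEq K]
    (hK : ringChar K ≠ 2) {ζ : K} (hζ : ζ ^ 2 = -1) :
    0 ∉ ({1, -1, ζ, -ζ} : Finset K) ∧ 1 ∉ ({-1, ζ, -ζ} : Finset K) ∧
      -1 ∉ ({ζ, -ζ} : Finset K) ∧ ζ ≠ -ζ := by
  have h1 : (1 : K) ≠ -1 := (Ring.neg_one_ne_one_of_char_ne_two hK).symm
  have hζ0 : ζ ≠ 0 := by
    rintro rfl
    simp at hζ
  have hζ1 : ∀ {x : K}, x ^ 2 = 1 → x ≠ ζ ∧ x ≠ -ζ := fun {x} hx => by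
    constructor <;> rintro rfl
    · exact h1 (hx.symm.trans hζ)
    · exact h1 (by linear_combination hζ - hx)
  have hneg : ζ ≠ -ζ := fun h => by
    have h2 : 2 * ζ = 0 := by linear_combination h
    exact mul_ne_zero (Ring.two_ne_zero hK) hζ0 h2
  refine ⟨?_, ?_, ?_, hneg⟩
  · simp [Ne.symm hζ0, hζ0]
  · simp [h1, hζ1 (one_pow 2)]
  · have := hζ1 (x := -1) (by ring)
    simp only [mem_insert, mem_singleton, this.1, this.2, or_self, not_false_eq_true]

theorem card_zero_one_sqrt_neg_one {K : Type*} [Field K] [DecidableEq K] (hK : ringChar K ≠ 2)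
    {ζ : K} (hζ : ζ ^ 2 = -1) :
    #({0, 1, -1, ζ, -ζ} : Finset K) = 5 := by
  obtain ⟨h₀, h₁, h₂, h₃⟩ := zero_one_sqrt_neg_one_distinct hK hζ
  rw [card_insert_of_notMem h₀, card_insert_of_notMem h₁, card_insert_of_notMem h₂, card_pair h₃]

theorem prod_quadraticChar_sub_eq (hF : ringChar F ≠ 2) {ζ : F} (hζ : ζ ^ 2 = -1) (x : F) :
    ∏ a ∈ ({0, 1, -1, ζ, -ζ} : Finset F), quadraticChar F (x - a) =
      quadraticChar F x * quadraticChar F (x ^ 4 - 1) := by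
  obtain ⟨h₀, h₁, h₂, h₃⟩ := zero_one_sqrt_neg_one_distinct hF hζ
  rw [prod_insert h₀, prod_insert h₁, prod_insert h₂, prod_pair h₃]
  simp only [← map_mul]
  congr 1
  linear_combination -(x * (x ^ 2 - 1)) * hζ

end CharacterSums

/-- For a prime power `q ≡ 1 (mod 4)`, with `C₅ = {0, 1, -1, ζ, -ζ}` where `ζ² = -1`, the
character sum `S(2; q, 5) = ∑_{γ ∈ F_q \ C₅} ∏_{α ∈ C₅} (1 - χ₂(γ - α))` formed with the
quadratic character `χ₂` satisfies `S(2; q, 5) ≥ q - 49 √q - 160`. -/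
theorem quadratic_char_sum_lower_bound
    (q : ℕ) (hq : IsPrimePow q) (hq4 : q % 4 = 1)
    (F : Type*) [Field F] [Fintype F] [DecidableEq F] (hF : Fintype.card F = q)
    (ζ : F) (hζ : ζ ^ 2 = -1) :
    (q : ℝ) - 49 * Real.sqrt q - 160 ≤
      ((∑ γ ∈ univ \ ({0, 1, -1, ζ, -ζ} : Finset F),
        ∏ α ∈ ({0, 1, -1, ζ, -ζ} : Finset F), (1 - quadraticChar F (γ - α)) : ℤ) : ℝ) := by
  subst hF
  have hchar : ringChar F ≠ 2 := fun h => by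
    have := FiniteField.even_card_of_char_two h
    omega
  have hcard := card_zero_one_sqrt_neg_one hchar hζ
  have hprod := prod_quadraticChar_sub_eq hchar hζ
  set s : Finset F := {0, 1, -1, ζ, -ζ} with hs
  have h5 : |((∑ x, ∏ a ∈ s, quadraticChar F (x - a) : ℤ) : ℝ)| ≤ 4 * √(Fintype.card F) := by
    simp only [hprod]
    refine abs_le_of_sq_le_sq ?_ (by positivity)
    rw [mul_pow, Real.sq_sqrt (Nat.cast_nonneg _)]
    norm_num1
    exact_mod_cast sq_sum_quadraticChar_quintic_le hchar
  have hmain := sum_prod_one_sub_quadraticChar_ge hchar hcard h5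
  have hsmall : ∑ x ∈ s, ∏ a ∈ s, (1 - quadraticChar F (x - a)) ≤ 160 := by
    have : ∀ x ∈ s, ∏ a ∈ s, (1 - quadraticChar F (x - a)) ≤ 2 ^ 5 := fun x _ => by
      rw [← hcard, ← prod_const]
      refine prod_le_prod (fun a _ => ?_) (fun a _ => ?_) <;>
      linarith [abs_le.mp (abs_quadraticChar_le_one (x - a))]
    refine (sum_le_card_nsmul s _ _ this).trans ?_
    rw [hcard]
    norm_num
  have hsplit := sum_sdiff (f := fun x => ∏ a ∈ s, (1 - quadraticChar F (x - a))) (subset_univ s)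
  have hsqrt : 2 ≤ √(Fintype.card F : ℝ) := by
    refine Real.le_sqrt_of_sq_le ?_
    have : 4 ≤ Fintype.card F := by
      have : 1 < Fintype.card F := Fintype.one_lt_card
      omega
    norm_num1
    exact_mod_cast this
  rw [← hsplit] at hmain
  have hsmall' : ((∑ x ∈ s, ∏ a ∈ s, (1 - quadraticChar F (x - a)) : ℤ) : ℝ) ≤ 160 := by
    exact_mod_cast hsmall
  rw [Int.cast_add] at hmain
  linarith
end
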